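/- arXiv:0809.2194 — 2 statements merged into one kernel-verified Lean document; each statement's English description precedes it below -/
import Mathlib

section
/- Let K be a field, Δ a simplicial complex on X = {x_1,...,x_n}, F a face of Δ with F ≠ X, and Δ' = Δ ∪ co_{x_0}F. Then pd K[Δ'] = max(pd K[Δ] + 1, n − |F|), where pd denotes projective dimension over the respective polynomial rings. -/
open MvPolynomial

section Core

variable {V : Type*} [DecidableEq V]

/-- `Δ` is a simplicial complex on the vertex set `V`: every singleton is a face
and faces are closed under taking subsets. -/
def IsSimplicialComplex (Δ : Set (Finset V)) : Prop :=
  (∀ v : V, ({v} : Finset V) ∈ Δ) ∧ ∀ F ∈ Δ, ∀ G ⊆ F, G ∈ Δ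

/-- The Stanley-Reisner ideal of `Δ` over `K`: generated by the squarefree monomials
whose support is not a face of `Δ`. -/
noncomputable def srIdeal (K : Type*) [Field K] (Δ : Set (Finset V)) :
    Ideal (MvPolynomial V K) :=
  Ideal.span ((fun S : Finset V => ∏ v ∈ S, (X v : MvPolynomial V K)) '' {S | S ∉ Δ})

/-- The simplicial complex `Δ ∪ co_{x₀} F` on the vertex set `V ∪ {x₀}`,
realized as `Option V` with `none` playing the role of the new vertex `x₀`. -/
def coneUnion (Δ : Set (Finset V)) (F : Finset V) : Set (Finset (Option V)) :=
  ((fun G : Finset V => G.map Function.Embedding.some) '' Δ) ∪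
    {G : Finset (Option V) | G ⊆ insert none (F.map Function.Embedding.some)}

/-- A facet is a maximal face. -/
def IsFacet (Δ : Set (Finset V)) (F : Finset V) : Prop :=
  F ∈ Δ ∧ ∀ G ∈ Δ, F ⊆ G → F = G

/-- The prime ideal `P_F` generated by the variables not in `F`. -/
noncomputable def facePrime (K : Type*) [Field K] (F : Finset V) :
    Ideal (MvPolynomial V K) :=
  Ideal.span ((fun v : V => (X v : MvPolynomial V K)) '' {v : V | v ∉ F})

/-- The dimension of a simplicial complex. -/
noncomputable def scDim (Δ : Set (Finset V)) : ℕ := sSup (Finset.card '' Δ) - 1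

/-- A subfacet of a (pure) complex: a face whose cardinality equals the dimension. -/
noncomputable def IsSubfacet (Δ : Set (Finset V)) (F : Finset V) : Prop :=
  F ∈ Δ ∧ F.card = scDim Δ

end Core

/-- The arithmetical rank of an ideal: the least number of elements generating it
up to radical. -/
noncomputable def ara {R : Type*} [CommRing R] (I : Ideal R) : ℕ :=
  sInf {s : ℕ | ∃ a : Fin s → R, (Ideal.span (Set.range a)).radical = I.radical}

/-- The height of an ideal: the infimum of the heights of the primes containing it. -/
noncomputable def idealHeight {R : Type*} [CommRing R] (I : Ideal R) : ℕ∞ :=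
  ⨅ p : {p : PrimeSpectrum R // I ≤ p.asIdeal}, Order.height p.1

open CategoryTheory

/-- The projective dimension of a module: the least `n` for which `M` admits a projective
resolution vanishing in homological degrees `> n`. -/
noncomputable def projDim {R : Type*} [CommRing R] (M : ModuleCat R) : ℕ :=
  sInf {m : ℕ | ∃ P : ProjectiveResolution M, ∀ i : ℕ, m < i → Limits.IsZero (P.complex.X i)}


section Part1
open Abelian

section PD1
universe v u
variable {C : Type u} [Category.{v} C] [Abelian C]

lemma hasPD_of_resolution {M : C} (P : ProjectiveResolution M) (m : ℕ)
    (h : ∀ i : ℕ, m < i → Limits.IsZero (P.complex.X i)) : HasProjectiveDimensionLE M m := by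
  let := HasExt.standard C
  apply HasProjectiveDimensionLT.mk
  intro i hi Y e
  obtain ⟨f, hf, rfl⟩ := P.extMk_surjective e (i+1) rfl
  have : f = 0 := (h i hi).eq_of_src _ _
  subst this
  exact P.extMk_zero _ rfl

/-- Splicing a short exact sequence with a resolution of the kernel. -/
lemma resolution_splice {S : ShortComplex C} (hS : S.ShortExact) [hP : Projective S.X₂]
    (Q : ProjectiveResolution S.X₁) :
    ∃ P : ProjectiveResolution S.X₃, ∀ i, P.complex.X (i+1) = Q.complex.X i := by
  have hm := hS.mono_f
  have he := hS.epi_g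
  obtain ⟨p, hp0, hpe, hpx⟩ : ∃ p : Q.complex.X 0 ⟶ S.X₁, ∃ h : Q.complex.d 1 0 ≫ p = 0, Epi p ∧
      (ShortComplex.mk _ _ h).Exact :=
    ⟨Q.π.f 0, Q.complex_d_comp_π_f_zero, inferInstanceAs (Epi (Q.π.f 0)), Q.exact₀⟩
  have w : Q.complex.d 1 0 ≫ (p ≫ S.f) = 0 := by
    rw [← Category.assoc, hp0, Limits.zero_comp]
  have w2 : (p ≫ S.f) ≫ S.g = 0 := by simp
  let c := ChainComplex.augment Q.complex (p ≫ S.f) w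
  have hex0 : (ShortComplex.mk (p ≫ S.f) S.g w2).Exact := by
    let φ : ShortComplex.mk (p ≫ S.f) S.g w2 ⟶ S :=
      { τ₁ := p, τ₂ := 𝟙 _, τ₃ := 𝟙 _ }
    have : Epi φ.τ₁ := hpe
    have : IsIso φ.τ₂ := inferInstanceAs (IsIso (𝟙 _))
    have : Mono φ.τ₃ := inferInstanceAs (Mono (𝟙 _))
    exact (ShortComplex.exact_iff_of_epi_of_isIso_of_mono φ).2 hS.exact
  have hex1 : (ShortComplex.mk (Q.complex.d 1 0) (p ≫ S.f) w).Exact := by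
    let φ : ShortComplex.mk (Q.complex.d 1 0) p hp0 ⟶
        ShortComplex.mk (Q.complex.d 1 0) (p ≫ S.f) w :=
      { τ₁ := 𝟙 _, τ₂ := 𝟙 _, τ₃ := S.f }
    have : Epi φ.τ₁ := inferInstanceAs (Epi (𝟙 _))
    have : IsIso φ.τ₂ := inferInstanceAs (IsIso (𝟙 _))
    have : Mono φ.τ₃ := hm
    exact (ShortComplex.exact_iff_of_epi_of_isIso_of_mono φ).1 hpx
  refine ⟨⟨c, ?_, (ChainComplex.toSingle₀Equiv _ _).symm ⟨S.g, ?_⟩, ⟨fun n => ?_⟩⟩, fun i => rfl⟩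
  · intro n
    cases n with
    | zero => exact hP
    | succ n => exact Q.projective n
  · exact w2
  · cases n with
    | zero =>
      rw [ChainComplex.quasiIsoAt₀_iff, ShortComplex.quasiIso_iff_of_zeros']
      · have hπ : ((c.toSingle₀Equiv S.X₃).symm ⟨S.g, w2⟩).f 0 = S.g := by
          exact ChainComplex.toSingle₀Equiv_symm_apply_f_zero _ _
        refine (ShortComplex.exact_and_epi_g_iff_of_iso ?_).2 ⟨hex0, he⟩
        exact ShortComplex.isoMk (Iso.refl _) (Iso.refl _) (Iso.refl _)
          ((Category.id_comp (p ≫ S.f)).trans (Category.comp_id (p ≫ S.f)).symm)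
          ((Category.id_comp S.g).trans (hπ.symm.trans (Category.comp_id _).symm))
      all_goals rfl
    | succ n =>
      rw [quasiIsoAt_iff_exactAt']
      · rw [HomologicalComplex.exactAt_iff' _ (n + 1 + 1) (n + 1) n (by simp) (by simp)]
        cases n with
        | zero => exact hex1
        | succ n => exact Q.exact_succ n
      · apply ChainComplex.exactAt_succ_single_obj

lemma resolution_of_hasPD [EnoughProjectives C] (m : ℕ) (M : C) (h : HasProjectiveDimensionLE M m) :
    ∃ P : ProjectiveResolution M, ∀ i : ℕ, m < i → Limits.IsZero (P.complex.X i) := by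
  induction m generalizing M with
  | zero =>
    have := (projective_iff_hasProjectiveDimensionLE_zero M).2 h
    refine ⟨ProjectiveResolution.self M, fun i hi => ?_⟩
    exact HomologicalComplex.isZero_single_obj_X _ _ _ _ (by lia)
  | succ n ih =>
    obtain ⟨⟨P, f⟩⟩ := EnoughProjectives.presentation M
    let T := ShortComplex.mk (Limits.kernel.ι f) f (Limits.kernel.condition f)
    have T_exact : T.ShortExact := { exact := ShortComplex.exact_kernel f }
    have : Projective T.X₂ := ‹_›
    obtain ⟨Q, hQ⟩ := ih T.X₁ ((T_exact.hasProjectiveDimensionLT_X₃_iff n ‹_›).mp h)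
    obtain ⟨P', hP'⟩ := resolution_splice T_exact Q
    refine ⟨P', fun i hi => ?_⟩
    obtain ⟨i, rfl⟩ : ∃ j, i = j + 1 := ⟨i - 1, by lia⟩
    rw [hP']
    exact hQ i (by lia)
end PD1

universe u in
lemma projDim_le_iff {R : Type u} [CommRing R] (M : ModuleCat.{u} R) 
    (hfin : ∃ m, HasProjectiveDimensionLE M m) (m : ℕ) :
    projDim M ≤ m ↔ HasProjectiveDimensionLE M m := by
  have hset : {m : ℕ | ∃ P : ProjectiveResolution M, ∀ i : ℕ, m < i →
      Limits.IsZero (P.complex.X i)} = {m | HasProjectiveDimensionLE M m} := by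
    ext m
    exact ⟨fun ⟨P, hP⟩ => hasPD_of_resolution P m hP, fun h => resolution_of_hasPD m M h⟩
  unfold projDim
  rw [hset]
  constructor
  · intro h
    have h2 : HasProjectiveDimensionLE M (sInf {m | HasProjectiveDimensionLE M m}) :=
      Nat.sInf_mem (s := {m | HasProjectiveDimensionLE M m}) hfin
    exact hasProjectiveDimensionLT_of_ge M _ _ (Nat.succ_le_succ h)
  · intro h
    exact Nat.sInf_le h

end Part1

section Part2
open Abelian

section CR
universe v u v' u'

lemma hasPD_map_exact {C : Type u} [Category.{v} C] [Abelian C] [EnoughProjectives C]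
    {D : Type u'} [Category.{v'} D] [Abelian D] (G : C ⥤ D) [G.Additive]
    [Limits.PreservesFiniteLimits G] [Limits.PreservesFiniteColimits G]
    [G.PreservesProjectiveObjects] (n : ℕ) (M : C) (h : HasProjectiveDimensionLE M n) :
    HasProjectiveDimensionLE (G.obj M) n := by
  induction n generalizing M with
  | zero =>
    simp only [HasProjectiveDimensionLE, zero_add] at h ⊢
    rw [← projective_iff_hasProjectiveDimensionLT_one] at h ⊢
    exact G.projective_obj M
  | succ n ih =>
    rcases EnoughProjectives.presentation M with ⟨⟨P, f⟩⟩
    let T := ShortComplex.mk (Limits.kernel.ι f) f (Limits.kernel.condition f)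
    have T_exact : T.ShortExact := { exact := ShortComplex.exact_kernel f }
    have TS_exact := T_exact.map_of_exact G
    have : Projective (T.map G).X₂ := G.projective_obj _
    have := (T_exact.hasProjectiveDimensionLT_X₃_iff n ‹_›).mp ‹_›
    exact (TS_exact.hasProjectiveDimensionLT_X₃_iff n ‹_›).mpr (ih (Limits.kernel f) this)

lemma hasPD_extend {R S : Type u} [CommRing R] [CommRing S] (f : R →+* S) (hf : f.Flat)
    (I : Ideal R) (n : ℕ) (h : HasProjectiveDimensionLE (ModuleCat.of R (R ⧸ I)) n) :
    HasProjectiveDimensionLE (ModuleCat.of S (S ⧸ I.map f)) n := by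
  have := ModuleCat.preservesFiniteLimits_extendScalars_of_flat hf
  have := Functor.preservesProjectiveObjects_of_adjunction_of_preservesEpimorphisms
    (ModuleCat.extendRestrictScalarsAdj.{u} f)
  have : Limits.PreservesFiniteColimits (ModuleCat.extendScalars f) := by
    have := (ModuleCat.extendRestrictScalarsAdj.{u} f).leftAdjoint_preservesColimits
    infer_instance
  have : (ModuleCat.extendScalars f).Additive := 
    (ModuleCat.extendRestrictScalarsAdj.{u} f).left_adjoint_additive
  have h2 := hasPD_map_exact (ModuleCat.extendScalars f) n _ h
  letI := f.toAlgebra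
  have e := (Algebra.TensorProduct.quotIdealMapEquivTensorQuot S I).symm.toLinearEquiv
  have e' : (ModuleCat.extendScalars f).obj (ModuleCat.of R (R ⧸ I)) ≅ 
     (ModuleCat.of S (S ⧸ I.map f)) := LinearEquiv.toModuleIso e
  exact hasProjectiveDimensionLT_of_iso e' _

lemma projective_trans' (R S M : Type*) [CommRing R] [CommRing S] [Algebra R S] [AddCommGroup M]
    [Module R M] [Module S M] [IsScalarTower R S M] [Module.Free R S]
    [hM : Module.Projective S M] : Module.Projective R M := by
  obtain ⟨s, hs⟩ := Module.projective_def'.1 hM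
  exact Module.Projective.of_split (M := M →₀ S) (s.restrictScalars R)
      ((Finsupp.linearCombination S id).restrictScalars R)
      (by ext x; exact congrArg (fun h => h x) hs)

lemma hasPD_restrict {R S : Type u} [CommRing R] [CommRing S] (f : R →+* S) 
    (hf : letI := f.toAlgebra; Module.Free R S) (g : S →+* R) (hg : g.comp f = RingHom.id R)
    (I : Ideal R) (n : ℕ) (h : HasProjectiveDimensionLE (ModuleCat.of S (S ⧸ I.map f)) n) :
    HasProjectiveDimensionLE (ModuleCat.of R (R ⧸ I)) n := by
  have : (ModuleCat.restrictScalars.{u} f).PreservesProjectiveObjects := by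
    constructor
    intro M hM
    letI := f.toAlgebra
    rw [← IsProjective.iff_projective] at hM ⊢
    letI : Module R M := Module.compHom M f
    haveI : IsScalarTower R S M := ⟨fun a b m => by
      change (f a * b) • m = f a • (b • m)
      rw [mul_smul]⟩
    haveI := hf
    exact projective_trans' R S M
  have h2 := hasPD_map_exact (ModuleCat.restrictScalars.{u} f) n _ h
  letI := f.toAlgebra
  let a : R ⧸ I →+* S ⧸ I.map f := Ideal.quotientMap _ f Ideal.le_comap_map
  have hle : I.map f ≤ I.comap g := by
    rw [Ideal.map_le_iff_le_comap, Ideal.comap_comap, hg, Ideal.comap_id]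
  let b : S ⧸ I.map f →+* R ⧸ I := Ideal.quotientMap _ g hle
  have hgf : ∀ r, g (f r) = r := fun r => by simpa using congrArg (fun h => h r) hg
  let a' : (ModuleCat.of R (R ⧸ I)) ⟶ (ModuleCat.restrictScalars.{u} f).obj (ModuleCat.of S (S ⧸ I.map f)) :=
    ModuleCat.ofHom (Y := (ModuleCat.restrictScalars.{u} f).obj (ModuleCat.of S (S ⧸ I.map f)))
     { toFun := a, map_add' := a.map_add, map_smul' := by
        intro r x
        obtain ⟨x, rfl⟩ := Ideal.Quotient.mk_surjective x
        exact (a.map_mul (Ideal.Quotient.mk _ r) (Ideal.Quotient.mk _ x)) }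
  let b' : (ModuleCat.restrictScalars.{u} f).obj (ModuleCat.of S (S ⧸ I.map f)) ⟶ (ModuleCat.of R (R ⧸ I)) :=
    ModuleCat.ofHom (X := (ModuleCat.restrictScalars.{u} f).obj (ModuleCat.of S (S ⧸ I.map f)))
     { toFun := b, map_add' := b.map_add, map_smul' := by
        intro r x
        obtain ⟨x, rfl⟩ := Ideal.Quotient.mk_surjective x
        refine (b.map_mul (Ideal.Quotient.mk _ (f r)) (Ideal.Quotient.mk _ x)).trans ?_
        simp only [b, Ideal.quotientMap_mk, hgf]
        rfl }
  have : a' ≫ b' = 𝟙 _ := by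
    refine ModuleCat.hom_ext (LinearMap.ext fun x => ?_)
    obtain ⟨x, rfl⟩ := Ideal.Quotient.mk_surjective x
    change b (a (Ideal.Quotient.mk _ x)) = _
    simp only [a, b, Ideal.quotientMap_mk, hgf]
    rfl
  exact (Retract.mk a' b' this).hasProjectiveDimensionLT _

end CR

section CR2
variable {V : Type*} {K : Type*} [Field K]

noncomputable def optInc (K : Type*) [Field K] (V : Type*) : MvPolynomial V K →+* MvPolynomial (Option V) K :=
  (rename (R := K) (some : V → Option V)).toRingHom

lemma optInc_free : letI := (optInc K V).toAlgebra; 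
    Module.Free (MvPolynomial V K) (MvPolynomial (Option V) K) := by
  letI := (optInc K V).toAlgebra
  let e := (optionEquivLeft K V)
  have he : ∀ p, e (optInc K V p) = Polynomial.C p := by
    intro p
    change ((e : MvPolynomial (Option V) K →ₐ[K] _).comp (rename some)) p = 
      (Algebra.ofId (MvPolynomial V K) (Polynomial (MvPolynomial V K))).restrictScalars K p
    congr 1
    ext i
    simp [e, Algebra.ofId_apply]
  have e' : MvPolynomial (Option V) K ≃ₗ[MvPolynomial V K] Polynomial (MvPolynomial V K) :=
    { e with
      map_smul' := by
        intro r x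
        change e (optInc K V r * x) = r • e x
        rw [map_mul, he, Polynomial.smul_eq_C_mul] }
  exact Module.Free.of_equiv e'.symm

lemma optInc_flat : (optInc K V).Flat := by
  letI := (optInc K V).toAlgebra
  haveI := optInc_free (K := K) (V := V)
  change Module.Flat _ _
  infer_instance

noncomputable def optRet (K : Type*) [Field K] (V : Type*) : MvPolynomial (Option V) K →+* MvPolynomial V K :=
  (aeval (R := K) (fun o : Option V => o.elim 0 X)).toRingHom

lemma optRet_comp : (optRet K V).comp (optInc K V) = RingHom.id _ := by
  ext i
  · simp [optRet, optInc]
  · simp [optRet, optInc]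

lemma hasPD_opt_iff (I : Ideal (MvPolynomial V K)) (n : ℕ) :
    HasProjectiveDimensionLE (ModuleCat.of (MvPolynomial (Option V) K) 
      (MvPolynomial (Option V) K ⧸ I.map (optInc K V))) n ↔
    HasProjectiveDimensionLE (ModuleCat.of (MvPolynomial V K) (MvPolynomial V K ⧸ I)) n :=
  ⟨hasPD_restrict _ optInc_free _ optRet_comp I n, hasPD_extend _ optInc_flat I n⟩

end CR2

end Part2

section Part3
open Abelian

section SES
universe u
variable {R : Type u} [CommRing R]

abbrev qMod (I : Ideal R) : ModuleCat.{u} R := ModuleCat.of R (R ⧸ I)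

def qMap {I J : Ideal R} (h : I ≤ J) : qMod I ⟶ qMod J :=
  ModuleCat.ofHom (Submodule.mapQ I J LinearMap.id h)

def qMul {I J : Ideal R} (x : R) (h : ∀ a ∈ I, x * a ∈ J) : qMod I ⟶ qMod J :=
  ModuleCat.ofHom (Submodule.mapQ I J (LinearMap.mulLeft R x) h)

lemma qMap_mk {I J : Ideal R} (h : I ≤ J) (a : R) :
    (qMap h).hom (Submodule.Quotient.mk a) = Submodule.Quotient.mk a := rfl

lemma qMul_mk {I J : Ideal R} (x : R) (h : ∀ a ∈ I, x * a ∈ J) (a : R) :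
    (qMul x h).hom (Submodule.Quotient.mk a) = Submodule.Quotient.mk (x * a) := rfl

lemma qHom_ext {I : Ideal R} {M : ModuleCat.{u} R} {f g : qMod I ⟶ M}
    (h : ∀ a : R, f.hom (Submodule.Quotient.mk a) = g.hom (Submodule.Quotient.mk a)) : f = g := by
  refine ModuleCat.hom_ext (LinearMap.ext fun x => ?_)
  obtain ⟨x, rfl⟩ := Submodule.Quotient.mk_surjective _ x
  exact h x

lemma qMap_comp {I J L : Ideal R} (h : I ≤ J) (h' : J ≤ L) :
    qMap h ≫ qMap h' = qMap (h.trans h') := qHom_ext fun _ => rfl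

lemma qMap_self {I : Ideal R} (h : I ≤ I) : qMap h = 𝟙 _ := qHom_ext fun _ => rfl

structure ColonData (J Q T : Ideal R) (x : R) : Prop where
  colon : ∀ a, x * a ∈ Q ↔ a ∈ J
  sup : T = Q ⊔ Ideal.span {x}

namespace ColonData
variable {J Q T : Ideal R} {x : R}

lemma le (h : ColonData J Q T x) : Q ≤ T := h.sup ▸ le_sup_left

lemma mem (h : ColonData J Q T x) : x ∈ T := by
  rw [h.sup]; exact Ideal.mem_sup_right (Ideal.mem_span_singleton_self x)

def sc (h : ColonData J Q T x) : ShortComplex (ModuleCat.{u} R) where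
  X₁ := qMod J
  X₂ := qMod Q
  X₃ := qMod T
  f := qMul x (fun a ha => (h.colon a).2 ha)
  g := qMap h.le
  zero := qHom_ext fun a => by
    change Submodule.Quotient.mk (x * a) = _
    rw [show ((0 : qMod J ⟶ qMod T).hom (Submodule.Quotient.mk a)) = 0 from rfl,
      Submodule.Quotient.mk_eq_zero]
    exact Ideal.mul_mem_right _ _ h.mem

lemma exact (h : ColonData J Q T x) : h.sc.ShortExact := by
  apply ShortComplex.ShortExact.mk'
  · rw [ShortComplex.ShortExact.moduleCat_exact_iff_function_exact]
    intro b
    obtain ⟨b, rfl⟩ := Submodule.Quotient.mk_surjective _ b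
    change Submodule.Quotient.mk b = (0 : R ⧸ T) ↔ _
    rw [Submodule.Quotient.mk_eq_zero]
    constructor
    · intro hb
      rw [h.sup, Submodule.mem_sup] at hb
      obtain ⟨q, hq, z, hz, rfl⟩ := hb
      obtain ⟨a, rfl⟩ := Ideal.mem_span_singleton'.1 hz
      refine ⟨Submodule.Quotient.mk a, ?_⟩
      change Submodule.Quotient.mk (x * a) = Submodule.Quotient.mk _
      rw [Submodule.Quotient.eq]
      have : x * a - (q + a * x) = -q := by ring
      rw [this]; exact neg_mem hq
    · rintro ⟨a, ha⟩
      obtain ⟨a, rfl⟩ := Submodule.Quotient.mk_surjective _ a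
      change Submodule.Quotient.mk (x * a) = Submodule.Quotient.mk b at ha
      rw [Submodule.Quotient.eq] at ha
      have h1 := h.le ha
      have h2 : x * a ∈ T := Ideal.mul_mem_right _ _ h.mem
      have := sub_mem h2 h1
      rwa [sub_sub_cancel] at this
  · rw [ModuleCat.mono_iff_injective, injective_iff_map_eq_zero]
    intro a ha
    obtain ⟨a, rfl⟩ := Submodule.Quotient.mk_surjective _ a
    change Submodule.Quotient.mk (x * a) = (0 : R ⧸ Q) at ha
    rw [Submodule.Quotient.mk_eq_zero] at ha
    exact (Submodule.Quotient.mk_eq_zero _).2 ((h.colon a).1 ha)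
  · rw [ModuleCat.epi_iff_surjective]
    intro a
    obtain ⟨a, rfl⟩ := Submodule.Quotient.mk_surjective _ a
    exact ⟨Submodule.Quotient.mk a, rfl⟩

noncomputable def δ (h : ColonData J Q T x) : Ext (qMod T) (qMod J) 1 := h.exact.extClass

lemma δ_nat {J' Q' T' : Ideal R} (h : ColonData J Q T x) (h' : ColonData J' Q' T' x)
    (hJ : J ≤ J') (hQ : Q ≤ Q') (hT : T ≤ T') :
    h.δ.comp (Ext.mk₀ (qMap hJ)) (add_zero 1) = (Ext.mk₀ (qMap hT)).comp h'.δ (zero_add 1) :=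
  ShortComplex.ShortExact.extClass_naturality h.exact h'.exact
    { τ₁ := qMap hJ, τ₂ := qMap hQ, τ₃ := qMap hT,
      comm₁₂ := qHom_ext fun _ => rfl
      comm₂₃ := qHom_ext fun _ => rfl }

/-- from a regular element. -/
lemma ofReg {I J : Ideal R} (hIJ : I ≤ J) (x : R) (hx : ∀ a, x * a ∈ I → a ∈ I) :
    ColonData J (I ⊔ Ideal.span {x} * J) (I ⊔ Ideal.span {x}) x where
  colon a := by
    constructor
    · intro h
      obtain ⟨q, hq, z, hz, e⟩ := Submodule.mem_sup.1 h
      obtain ⟨b, hb, rfl⟩ := Ideal.mem_span_singleton_mul.1 hz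
      have : x * (a - b) ∈ I := by
        have : x * (a - b) = q := by rw [mul_sub, ← e]; ring
        rwa [this]
      have := add_mem (hIJ (hx _ this)) hb
      rwa [sub_add_cancel] at this
    · intro h
      exact Ideal.mem_sup_right (Ideal.mul_mem_mul (Ideal.mem_span_singleton_self x) h)
  sup := by
    rw [sup_assoc]
    congr 1
    exact (sup_eq_right.2 Ideal.mul_le_left).symm

lemma ofReg' {I : Ideal R} (x : R) (hx : ∀ a, x * a ∈ I → a ∈ I) :
    ColonData I I (I ⊔ Ideal.span {x}) x where
  colon a := ⟨hx a, fun h => Ideal.mul_mem_left _ _ h⟩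
  sup := rfl

end ColonData

lemma Ext.qMul_comp_zero {I : Ideal R} (x : R) (h : ∀ a ∈ I, x * a ∈ I) (N : ModuleCat.{u} R)
    (hN : ∀ n : N, x • n = 0) {i : ℕ} (e : Ext (qMod I) N i) :
    (Ext.mk₀ (qMul x h)).comp e (zero_add i) = 0 := by
  have h1 : qMul x h = x • 𝟙 (qMod I) := qHom_ext fun _ => rfl
  have h2 : x • 𝟙 N = 0 := by
    ext n
    exact hN n
  rw [h1, Ext.mk₀_smul, Ext.smul_comp, Ext.mk₀_id_comp]
  have : x • e = e.comp (Ext.mk₀ (x • 𝟙 N)) (add_zero i) := by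
    rw [Ext.mk₀_smul, Ext.comp_smul, Ext.comp_mk₀_id]
  rw [this, h2, Ext.mk₀_zero, Ext.comp_zero]

lemma ColonData.ext_ne_zero {I T : Ideal R} {x : R} (h : ColonData I I T x) (N : ModuleCat.{u} R)
    (hN : ∀ n : N, x • n = 0) {i : ℕ} (e : Ext (qMod I) N i) (he : e ≠ 0) :
    h.δ.comp e (add_comm 1 i) ≠ 0 := by
  intro h0
  obtain ⟨x2, hx2⟩ := Ext.contravariant_sequence_exact₁ h.exact N e _ h0
  apply he
  rw [← hx2]
  exact Ext.qMul_comp_zero x _ N hN x2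

end SES

section Var
variable {σ : Type*} {K : Type*} [Field K]

noncomputable def varIdeal (K : Type*) [Field K] {σ : Type*} (s : Set σ) : Ideal (MvPolynomial σ K) :=
  Ideal.span (X '' s)

lemma mem_varIdeal {s : Set σ} {p : MvPolynomial σ K} :
    p ∈ varIdeal K s ↔ ∀ m ∈ p.support, ∃ i ∈ s, m i ≠ 0 := mem_ideal_span_X_image

lemma varIdeal_mono {s t : Set σ} (h : s ⊆ t) : varIdeal K s ≤ varIdeal K t :=
  Ideal.span_mono (Set.image_mono h)

lemma varIdeal_insert (y : σ) (s : Set σ) :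
    varIdeal K (insert y s) = varIdeal K s ⊔ Ideal.span {X y} := by
  rw [varIdeal, Set.image_insert_eq, Ideal.span_insert, sup_comm]; rfl

lemma varIdeal_reg (y : σ) (s : Set σ) (hy : y ∉ s) (a : MvPolynomial σ K)
    (h : X y * a ∈ varIdeal K s) : a ∈ varIdeal K s := by
  classical
  rw [mem_varIdeal] at h ⊢
  intro m hm
  have hm' : (Finsupp.single y 1 + m) ∈ (X y * a).support := by
    rw [mem_support_iff] at hm ⊢
    rw [coeff_X_mul]; exact hm
  obtain ⟨i, hi, h'⟩ := h _ hm'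
  refine ⟨i, hi, ?_⟩
  have : y ≠ i := fun e => hy (e ▸ hi)
  simpa [Finsupp.single_apply, this] using h'

noncomputable abbrev maxId (K : Type*) [Field K] (σ : Type*) : Ideal (MvPolynomial σ K) := varIdeal K Set.univ

lemma one_notMem_maxId : (1 : MvPolynomial σ K) ∉ maxId K σ := by
  rw [mem_varIdeal]
  push Not
  exact ⟨0, by simp, by simp⟩

lemma X_smul_k (y : σ) (n : qMod (maxId K σ)) : (X y : MvPolynomial σ K) • n = 0 := by
  obtain ⟨a, rfl⟩ := Submodule.Quotient.mk_surjective _ n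
  change Submodule.Quotient.mk (X y * a) = (0 : MvPolynomial σ K ⧸ maxId K σ)
  rw [Submodule.Quotient.mk_eq_zero]
  exact Ideal.mul_mem_right _ _ (Ideal.subset_span ⟨y, trivial, rfl⟩)

lemma cd (y : σ) (s : Set σ) (hy : y ∉ s) :
    ColonData (varIdeal K s) (varIdeal K s) (varIdeal K (insert y s)) (X y) := by
  rw [varIdeal_insert]
  exact ColonData.ofReg' _ (varIdeal_reg y s hy)

lemma cdm (y : σ) (s : Set σ) (hy : y ∉ s) :
    ColonData (maxId K σ) (varIdeal K s ⊔ Ideal.span {X y} * maxId K σ)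
      (varIdeal K (insert y s)) (X y) := by
  rw [varIdeal_insert]
  exact ColonData.ofReg (varIdeal_mono (Set.subset_univ _)) _ (varIdeal_reg y s hy)

lemma pd_varIdeal [DecidableEq σ] (s : Finset σ) :
    HasProjectiveDimensionLE (qMod (varIdeal K (s : Set σ))) s.card := by
  induction s using Finset.induction_on with
  | empty =>
    have : Projective (qMod (varIdeal K ((∅ : Finset σ) : Set σ))) := by
      rw [← IsProjective.iff_projective]
      have : varIdeal K ((∅ : Finset σ) : Set σ) = ⊥ := by simp [varIdeal]
      exact Module.Projective.of_equiv (Submodule.quotEquivOfEqBot _ this).symm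
    exact projective_iff_hasProjectiveDimensionLT_one.1 this
  | insert y t hy ih =>
    rw [Finset.card_insert_of_notMem hy, Finset.coe_insert]
    have h := (cd (K := K) y (t : Set σ) (by simpa using hy))
    have ih2 : HasProjectiveDimensionLT (qMod (varIdeal K (t : Set σ))) (t.card + 1) := ih
    exact h.exact.hasProjectiveDimensionLT_X₃ _ ih
      (hasProjectiveDimensionLT_of_ge (qMod (varIdeal K (t : Set σ))) (t.card+1) _ (by omega))

lemma ext_varIdeal [DecidableEq σ] (s : Finset σ) :
    ∃ e : Ext (qMod (varIdeal K (s : Set σ))) (qMod (maxId K σ)) s.card, e ≠ 0 := by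
  induction s using Finset.induction_on with
  | empty =>
    refine ⟨Ext.mk₀ (qMap (varIdeal_mono (Set.subset_univ _))), ?_⟩
    intro h
    replace h := (Ext.mk₀_eq_zero_iff _).1 h
    have := congrArg (fun f => f.hom (Submodule.Quotient.mk 1)) h
    change Submodule.Quotient.mk 1 = (0 : MvPolynomial σ K ⧸ maxId K σ) at this
    rw [Submodule.Quotient.mk_eq_zero] at this
    exact one_notMem_maxId this
  | insert y t hy ih =>
    obtain ⟨e, he⟩ := ih
    rw [Finset.card_insert_of_notMem hy, Finset.coe_insert]
    have h := (cd (K := K) y (t : Set σ) (by simpa using hy))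
    exact ⟨_, h.ext_ne_zero _ (X_smul_k y) e he⟩


def ExtFac (K : Type*) [Field K] {σ : Type*} (s : Set σ) (n : ℕ) : Prop :=
    ∀ e : Ext (qMod (varIdeal K s)) (qMod (maxId K σ)) n,
      ∃ ε : Ext (qMod (maxId K σ)) (qMod (maxId K σ)) n,
        e = (Ext.mk₀ (qMap (varIdeal_mono (Set.subset_univ _)))).comp ε (zero_add _)

lemma ext_factor_step [DecidableEq σ] (y : σ) (t : Finset σ) (hy : y ∉ (t : Set σ))
    (ih : ExtFac K (t : Set σ) t.card)
    (e : Ext (qMod (varIdeal K (insert y (t : Set σ)))) (qMod (maxId K σ)) (t.card + 1)) :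
    ∃ ε : Ext (qMod (maxId K σ)) (qMod (maxId K σ)) t.card,
      e = (cdm y (t : Set σ) hy).δ.comp ε (add_comm 1 _) := by
  have h := cd (K := K) y (t : Set σ) hy
  have ih2 : HasProjectiveDimensionLT (qMod (varIdeal K (t : Set σ))) (t.card + 1) := pd_varIdeal t
  obtain ⟨e1, he1⟩ := Ext.contravariant_sequence_exact₃ h.exact _ e
    (Ext.eq_zero_of_hasProjectiveDimensionLT (X := qMod (varIdeal K (t : Set σ))) _ (t.card+1) le_rfl)
    (add_comm 1 _)
  obtain ⟨ε, rfl⟩ := ih e1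
  refine ⟨ε, ?_⟩
  have hn := h.δ_nat (cdm (K := K) y (t : Set σ) hy) (varIdeal_mono (Set.subset_univ _))
    le_sup_left le_rfl
  rw [qMap_self, Ext.mk₀_id_comp] at hn
  rw [← hn, ← he1]
  exact (Ext.comp_assoc_of_second_deg_zero _ _ _ _).symm

lemma ext_factor [DecidableEq σ] (s : Finset σ) : ExtFac K (s : Set σ) s.card := by
  induction s using Finset.induction_on with
  | empty =>
    intro e
    obtain ⟨f, rfl⟩ : ∃ f, e = Ext.mk₀ f := ⟨_, (Ext.mk₀_homEquiv₀_apply e).symm⟩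
    obtain ⟨c, hc⟩ := Submodule.Quotient.mk_surjective _ (f.hom (Submodule.Quotient.mk 1))
    refine ⟨Ext.mk₀ (qMul c (fun a ha => Ideal.mul_mem_left _ _ ha)), ?_⟩
    change _ = (Ext.mk₀ _).comp (Ext.mk₀ _) (zero_add 0)
    rw [Ext.mk₀_comp_mk₀]
    congr 1
    refine qHom_ext fun a => ?_
    have : (Submodule.Quotient.mk a : MvPolynomial σ K ⧸ varIdeal K ((∅ : Finset σ) : Set σ)) =
      a • Submodule.Quotient.mk 1 := by rw [← Submodule.Quotient.mk_smul, smul_eq_mul, mul_one]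
    rw [this, map_smul, ← hc, map_smul]
    change a • _ = a • Submodule.Quotient.mk (c * 1)
    rw [mul_one]
  | insert y t hy ih =>
    rw [Finset.card_insert_of_notMem hy, Finset.coe_insert]
    have hy' : y ∉ (t : Set σ) := by simpa using hy
    intro e
    obtain ⟨ε, rfl⟩ := ext_factor_step y t hy' ih e
    have hins : insert y {i : σ | i ≠ y} = Set.univ := by
      ext i; simp [em]
    have h2 := cdm (K := K) y {i : σ | i ≠ y} (by simp)
    rw [hins] at h2
    have hn := (cdm (K := K) y (t : Set σ) hy').δ_nat h2 le_rfl
      (sup_le_sup_right (varIdeal_mono (fun i hi => fun h : i = y => hy' (h ▸ hi))) _)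
      (varIdeal_mono (Set.subset_univ _))
    rw [qMap_self, Ext.comp_mk₀_id] at hn
    refine ⟨h2.δ.comp ε (add_comm 1 _), ?_⟩
    rw [hn]
    exact Ext.comp_assoc _ _ _ _ _ (by omega)

lemma ext_restrict_zero [DecidableEq σ] (y : σ) (t : Finset σ) (hy : y ∉ (t : Set σ))
    (e : Ext (qMod (varIdeal K (insert y (t : Set σ)))) (qMod (maxId K σ)) (t.card + 1)) :
    (Ext.mk₀ (qMap (cdm (K := K) y (t : Set σ) hy).le)).comp e (zero_add _) = 0 := by
  obtain ⟨ε, rfl⟩ := ext_factor_step y t hy (ext_factor t) e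
  exact (cdm (K := K) y (t : Set σ) hy).exact.comp_extClass_assoc ε _

end Var

end Part3

section Part4
open Abelian

section Mono
variable {σ : Type*} {K : Type*} [Field K]

noncomputable def monIdeal (K : Type*) [Field K] {σ : Type*} (s : Set (σ →₀ ℕ)) :
    Ideal (MvPolynomial σ K) := Ideal.span ((fun a => monomial a (1 : K)) '' s)

lemma mem_monIdeal {s : Set (σ →₀ ℕ)} {p : MvPolynomial σ K} :
    p ∈ monIdeal K s ↔ ∀ m ∈ p.support, ∃ b ∈ s, b ≤ m := mem_ideal_span_monomial_image

lemma monIdeal_colon (t : Set (σ →₀ ℕ)) (a : σ →₀ ℕ) :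
    ColonData (monIdeal K ((fun b => b - a) '' t)) (monIdeal K t) (monIdeal K (insert a t))
      (monomial a 1) where
  colon p := by
    classical
    rw [mem_monIdeal, mem_monIdeal]
    constructor
    · intro h m hm
      have : a + m ∈ (monomial a (1 : K) * p).support := by
        rw [mem_support_iff] at hm ⊢
        rwa [coeff_monomial_mul, one_mul]
      obtain ⟨b, hb, hle⟩ := h _ this
      exact ⟨_, ⟨b, hb, rfl⟩, tsub_le_iff_left.2 hle⟩
    · intro h m hm
      rw [mem_support_iff, coeff_monomial_mul'] at hm
      split_ifs at hm with hle
      · obtain ⟨_, ⟨b, hb, rfl⟩, h2⟩ := h (m - a) (by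
          rw [mem_support_iff]; rwa [one_mul] at hm)
        refine ⟨b, hb, ?_⟩
        rw [tsub_le_iff_left] at h2
        rwa [add_tsub_cancel_of_le hle] at h2
      · exact absurd rfl hm
  sup := by
    rw [monIdeal, Set.image_insert_eq, Ideal.span_insert, sup_comm]; rfl

lemma monIdeal_finite_pd (n : ℕ) (s : Finset (σ →₀ ℕ)) (hs : s.card ≤ n) :
    ∃ m, HasProjectiveDimensionLE (qMod (monIdeal K (s : Set (σ →₀ ℕ)))) m := by
  classical
  induction n generalizing s with
  | zero =>
    obtain rfl : s = ∅ := by simpa using hs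
    refine ⟨0, ?_⟩
    have : Projective (qMod (monIdeal K ((∅ : Finset (σ →₀ ℕ)) : Set (σ →₀ ℕ)))) := by
      rw [← IsProjective.iff_projective]
      have : monIdeal K ((∅ : Finset (σ →₀ ℕ)) : Set (σ →₀ ℕ)) = ⊥ := by simp [monIdeal]
      exact Module.Projective.of_equiv (Submodule.quotEquivOfEqBot _ this).symm
    exact projective_iff_hasProjectiveDimensionLT_one.1 this
  | succ n ih =>
    induction s using Finset.induction_on with
    | empty => exact ih ∅ (by simp)
    | insert a t ha _ =>
      rw [Finset.card_insert_of_notMem ha] at hs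
      obtain ⟨m1, h1⟩ := ih t (by omega)
      obtain ⟨m2, h2⟩ := ih (t.image (fun b => b - a)) (Finset.card_image_le.trans (by omega))
      rw [Finset.coe_image] at h2
      rw [Finset.coe_insert]
      have h := monIdeal_colon (K := K) (t : Set (σ →₀ ℕ)) a
      refine ⟨max m1 m2 + 1, h.exact.hasProjectiveDimensionLT_X₃ _ ?_ ?_⟩
      · change HasProjectiveDimensionLT (qMod _) _
        have : HasProjectiveDimensionLT _ (m2 + 1) := h2
        exact hasProjectiveDimensionLT_of_ge _ (m2+1) _ (by omega)
      · change HasProjectiveDimensionLT (qMod _) _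
        have : HasProjectiveDimensionLT _ (m1 + 1) := h1
        exact hasProjectiveDimensionLT_of_ge _ (m1+1) _ (by omega)

noncomputable def sqExp (S : Finset σ) : σ →₀ ℕ := ∑ v ∈ S, Finsupp.single v 1

lemma sqExp_apply [DecidableEq σ] (S : Finset σ) (v : σ) : sqExp S v = if v ∈ S then 1 else 0 := by
  simp [sqExp, Finsupp.finsetSum_apply, Finsupp.single_apply]

lemma sqExp_le (S : Finset σ) (m : σ →₀ ℕ) : sqExp S ≤ m ↔ ∀ v ∈ S, m v ≠ 0 := by
  classical
  constructor
  · intro h v hv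
    have := h v
    rw [sqExp_apply, if_pos hv] at this
    omega
  · intro h v
    rw [sqExp_apply]
    split_ifs with hv
    · exact Nat.one_le_iff_ne_zero.2 (h v hv)
    · exact Nat.zero_le _

lemma prod_X_eq (S : Finset σ) : ∏ v ∈ S, (X v : MvPolynomial σ K) = monomial (sqExp S) 1 := by
  rw [sqExp, monomial_sum_one]; rfl

lemma srIdeal_eq [DecidableEq σ] (Δ : Set (Finset σ)) :
    srIdeal K Δ = monIdeal K (sqExp '' {S | S ∉ Δ}) := by
  rw [srIdeal, monIdeal, Set.image_image]
  simp_rw [prod_X_eq]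

lemma mem_srIdeal [DecidableEq σ] {Δ : Set (Finset σ)} {p : MvPolynomial σ K} :
    p ∈ srIdeal K Δ ↔ ∀ m ∈ p.support, ∃ S ∉ Δ, ∀ v ∈ S, m v ≠ 0 := by
  rw [srIdeal_eq, mem_monIdeal]
  simp [sqExp_le]

lemma srIdeal_finite_pd [DecidableEq σ] [Fintype σ] (Δ : Set (Finset σ)) :
    ∃ m, HasProjectiveDimensionLE (qMod (srIdeal K Δ)) m := by
  have hf : (sqExp '' {S | S ∉ Δ}).Finite := (Set.toFinite _).image _
  have := monIdeal_finite_pd (K := K) _ hf.toFinset le_rfl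
  rwa [hf.coe_toFinset, ← srIdeal_eq] at this

end Mono

end Part4

section Part5
open Abelian

section Graded
variable {σ : Type*} {K : Type*} [Field K]

/-- An `ℕ`-grading on a module over the polynomial ring, through its component maps. -/
structure Gr (K : Type*) [Field K] (σ : Type*) (M : Type*) [AddCommGroup M]
    [Module (MvPolynomial σ K) M] where
  comp : ℕ → M →+ M
  comp_X : ∀ e i v, comp (e + 1) ((X i : MvPolynomial σ K) • v) = (X i : MvPolynomial σ K) • comp e v
  comp_zero_X : ∀ i v, comp 0 ((X i : MvPolynomial σ K) • v) = 0
  comp_C : ∀ e a v, comp e ((C a : MvPolynomial σ K) • v) = (C a : MvPolynomial σ K) • comp e v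
  orth : ∀ e f v, comp e (comp f v) = if e = f then comp e v else 0
  fin : ∀ v, ∃ N, ∀ n, N ≤ n → ∑ e ∈ Finset.range n, comp e v = v

/-- homogeneous component, shifted. -/
noncomputable def hcs (d e : ℕ) : MvPolynomial σ K →+ MvPolynomial σ K :=
  if d ≤ e then (homogeneousComponent (e - d)).toAddMonoidHom else 0

lemma coeff_hcs (d e : ℕ) (p : MvPolynomial σ K) (m : σ →₀ ℕ) :
    coeff m (hcs d e p) = if m.degree + d = e then coeff m p else 0 := by
  rw [hcs]
  split_ifs with h1 h2 h2
  · simp only [LinearMap.toAddMonoidHom_coe, coeff_homogeneousComponent]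
    rw [if_pos (by omega)]
  · simp only [LinearMap.toAddMonoidHom_coe, coeff_homogeneousComponent]
    rw [if_neg (by omega)]
  · omega
  · simp

lemma degree_sub_single (m : σ →₀ ℕ) (i : σ) (hi : i ∈ m.support) :
    (m - Finsupp.single i 1).degree + 1 = m.degree := by
  have : m - Finsupp.single i 1 + Finsupp.single i 1 = m := by
    apply tsub_add_cancel_of_le
    rw [Finsupp.single_le_iff]
    exact Nat.one_le_iff_ne_zero.2 (Finsupp.mem_support_iff.1 hi)
  conv_rhs => rw [← this, map_add]
  simp

lemma hcs_X (d e : ℕ) (i : σ) (p : MvPolynomial σ K) :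
    hcs d (e + 1) (X i * p) = X i * hcs d e p := by
  classical
  ext m
  rw [coeff_hcs, coeff_X_mul', coeff_X_mul', coeff_hcs]
  by_cases hi : i ∈ m.support
  · have := degree_sub_single m i hi
    simp only [hi, if_true]
    congr 1
    apply propext
    omega
  · simp [hi]

lemma hcs_zero_X (d : ℕ) (i : σ) (p : MvPolynomial σ K) :
    hcs d 0 (X i * p) = 0 := by
  classical
  ext m
  rw [coeff_hcs, coeff_X_mul']
  by_cases hi : i ∈ m.support
  · have := degree_sub_single m i hi
    rw [if_neg (by omega), coeff_zero]
  · simp [hi]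

lemma hcs_C (d e : ℕ) (a : K) (p : MvPolynomial σ K) :
    hcs d e (C a * p) = C a * hcs d e p := by
  ext m
  simp only [coeff_hcs, coeff_C_mul]
  split_ifs <;> simp

lemma hcs_orth (d e f : ℕ) (p : MvPolynomial σ K) :
    hcs d e (hcs d f p) = if e = f then hcs d e p else 0 := by
  ext m
  by_cases h : e = f
  · subst h
    simp only [coeff_hcs, if_true]
    split_ifs <;> rfl
  · simp only [coeff_hcs, if_neg h, coeff_zero]
    split_ifs <;> first | rfl | omega

lemma hcs_sum (d : ℕ) (p : MvPolynomial σ K) (n : ℕ) (hn : p.totalDegree + d + 1 ≤ n) :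
    ∑ e ∈ Finset.range n, hcs d e p = p := by
  ext m
  simp only [coeff_sum, coeff_hcs]
  rw [Finset.sum_ite_eq]
  split_ifs with h
  · rfl
  · by_contra h0
    have : m ∈ p.support := by rw [mem_support_iff]; exact fun h => h0 h.symm
    have := le_totalDegree this
    rw [Finset.mem_range] at h
    apply h
    have h3 : m.degree = m.sum fun _ e => e := rfl
    omega

noncomputable def Gr.free {ι : Type*} [Fintype ι] (d : ι → ℕ) :
    Gr K σ (ι → MvPolynomial σ K) where
  comp e := 
    { toFun := fun f i => hcs (d i) e (f i)
      map_zero' := by ext i : 1; simp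
      map_add' := fun f g => by ext i : 1; simp }
  comp_X e i v := by ext j : 1; exact hcs_X _ _ _ _
  comp_zero_X i v := by ext j : 1; exact hcs_zero_X _ _ _
  comp_C e a v := by ext j : 1; exact hcs_C _ _ _ _
  orth e f v := by
    ext j : 1
    change hcs _ _ (hcs _ _ _) = _
    rw [hcs_orth]; split_ifs <;> rfl
  fin v := by
    refine ⟨∑ i, ((v i).totalDegree + d i + 1), fun n hn => ?_⟩
    ext j : 1
    rw [Finset.sum_apply]
    apply hcs_sum
    exact le_trans (Finset.single_le_sum (f := fun i => (v i).totalDegree + d i + 1) (fun _ _ => Nat.zero_le _) (Finset.mem_univ j)) hn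

lemma Gr.free_comp {ι : Type*} [Fintype ι] (d : ι → ℕ) (e : ℕ) (f : ι → MvPolynomial σ K) (i : ι) :
    (Gr.free d).comp e f i = hcs (d i) e (f i) := rfl

variable {M : Type*} [AddCommGroup M] [Module (MvPolynomial σ K) M]

def Gr.sub (G : Gr K σ M) (N : Submodule (MvPolynomial σ K) M) (hN : ∀ e, ∀ v ∈ N, G.comp e v ∈ N) :
    Gr K σ N where
  comp e := 
    { toFun := fun v => ⟨G.comp e v, hN e v v.2⟩
      map_zero' := by ext; simp
      map_add' := fun f g => by ext; simp }
  comp_X e i v := by ext; exact G.comp_X _ _ _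
  comp_zero_X i v := by ext; exact G.comp_zero_X _ _
  comp_C e a v := by ext; exact G.comp_C _ _ _
  orth e f v := by 
    ext
    refine (G.orth _ _ _).trans ?_
    split_ifs <;> rfl
  fin v := by
    obtain ⟨N, h⟩ := G.fin v.1
    refine ⟨N, fun n hn => ?_⟩
    ext
    rw [AddSubmonoidClass.coe_finsetSum]
    exact h n hn

lemma Gr.comp_smul (G : Gr K σ M) (d e : ℕ) (g : M) (hg : G.comp d g = g) (p : MvPolynomial σ K) :
    G.comp e (p • g) = hcs d e p • g := by
  classical
  induction p using MvPolynomial.induction_on generalizing e with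
  | C a =>
    rw [G.comp_C]
    have h1 : G.comp e g = if e = d then g else 0 := by
      conv_lhs => rw [← hg]
      rw [G.orth]
      split_ifs with h
      · rw [h, hg]
      · rfl
    have h2 : hcs d e (C a : MvPolynomial σ K) = if e = d then C a else 0 := by
      ext m
      rw [coeff_hcs]
      by_cases hm : 0 = m
      · subst hm
        simp only [map_zero, zero_add]
        by_cases h : e = d
        · simp [h]
        · rw [if_neg (Ne.symm h), if_neg h, coeff_zero]
      · rw [coeff_C, if_neg hm]
        simp only [ite_self]
        split_ifs
        · rw [coeff_C, if_neg hm]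
        · rfl
    rw [h1, h2]
    split_ifs <;> simp
  | add p q hp hq => rw [add_smul, map_add, hp, hq, map_add, add_smul]
  | mul_X p i hp =>
    rw [mul_comm, mul_smul]
    cases e with
    | zero => rw [G.comp_zero_X, hcs_zero_X, zero_smul]
    | succ e => rw [G.comp_X, hcs_X, hp, mul_smul]

end Graded

end Part5

section Part6
open Abelian

section Cover
universe u
variable {σ : Type*} {K : Type*} [Field K]

def NiceCover (K : Type*) [Field K] (σ : Type*) (M : Type u) [AddCommGroup M]
    [Module (MvPolynomial σ K) M] : Prop :=
  ∃ (ι : Type u) (_ : Fintype ι) (φ : (ι → MvPolynomial σ K) →ₗ[MvPolynomial σ K] M),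
    Function.Surjective φ ∧ (∀ f, φ f = 0 → ∀ i, f i ∈ maxId K σ) ∧
    Nonempty (Gr K σ (LinearMap.ker φ))

lemma mem_maxId_iff (p : MvPolynomial σ K) : p ∈ maxId K σ ↔ coeff 0 p = 0 := by
  rw [mem_varIdeal]
  constructor
  · intro h
    by_contra h0
    obtain ⟨i, -, hi⟩ := h 0 (mem_support_iff.2 h0)
    exact hi rfl
  · intro h m hm
    have : m ≠ 0 := by
      rintro rfl
      exact (mem_support_iff.1 hm) h
    obtain ⟨i, hi⟩ := Finsupp.ne_iff.1 this
    exact ⟨i, trivial, hi⟩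

lemma Gr.niceCover {M : Type u} [AddCommGroup M]
    [Module (MvPolynomial σ K) M] [Module.Finite (MvPolynomial σ K) M] (G : Gr K σ M) :
    NiceCover K σ M := by
  classical
  let P : ℕ → Prop := fun n => ∃ s : Finset M, s.card = n ∧ (∀ v ∈ s, ∃ d, G.comp d v = v) ∧
    Submodule.span (MvPolynomial σ K) (s : Set M) = ⊤
  have hex : ∃ n, P n := by
    obtain ⟨s, hs⟩ := Module.finite_def.1 (inferInstance : (Module.Finite (MvPolynomial σ K) M))
    choose N hN using G.fin
    refine ⟨_, s.biUnion (fun v => (Finset.range (N v)).image (fun e => G.comp e v)), rfl, ?_, ?_⟩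
    · intro w hw
      simp only [Finset.mem_biUnion, Finset.mem_image] at hw
      obtain ⟨v, hv, e, he, rfl⟩ := hw
      exact ⟨e, by rw [G.orth, if_pos rfl]⟩
    · rw [eq_top_iff, ← hs, Submodule.span_le]
      intro v hv
      rw [← hN v (N v) le_rfl]
      refine Submodule.sum_mem _ fun e he => Submodule.subset_span ?_
      simp only [Finset.coe_biUnion, Set.mem_iUnion, Finset.coe_image]
      exact ⟨v, hv, e, he, rfl⟩
  obtain ⟨s, hcard, hhom, hspan⟩ := Nat.find_spec hex
  have hmin : ∀ t : Finset M, (∀ v ∈ t, ∃ d, G.comp d v = v) →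
    Submodule.span (MvPolynomial σ K) (t : Set M) = ⊤ → s.card ≤ t.card := fun t h1 h2 => by
      rw [hcard]; exact Nat.find_min' hex ⟨t, rfl, h1, h2⟩
  choose d hd using hhom
  let d' : s → ℕ := fun i => d i.1 i.2
  let φ : (s → MvPolynomial σ K) →ₗ[MvPolynomial σ K] M :=
    Fintype.linearCombination (MvPolynomial σ K) (fun i : s => (i : M))
  have hφ : ∀ f, φ f = ∑ i, f i • (i : M) := fun f => Fintype.linearCombination_apply _ _ _
  have hcomm : ∀ e f, φ ((Gr.free d').comp e f) = G.comp e (φ f) := by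
    intro e f
    rw [hφ, hφ, map_sum]
    refine Finset.sum_congr rfl fun i _ => ?_
    rw [Gr.free_comp, G.comp_smul (d' i) e i.1 (hd i.1 i.2)]
  have hker : ∀ e, ∀ v ∈ LinearMap.ker φ, (Gr.free d').comp e v ∈ LinearMap.ker φ := by
    intro e v hv
    rw [LinearMap.mem_ker] at hv ⊢
    rw [hcomm, hv, map_zero]
  refine ⟨s, inferInstance, φ, ?_, ?_, ⟨(Gr.free d').sub _ hker⟩⟩
  · rw [← LinearMap.range_eq_top, Fintype.range_linearCombination]
    simpa using hspan
  · intro f hf i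
    rw [mem_maxId_iff]
    by_contra hc
    have h1 : φ ((Gr.free d').comp (d' i) f) = 0 := by rw [hcomm, hf, map_zero]
    have h2 : (Gr.free d').comp (d' i) f i = C (coeff 0 (f i)) := by
      rw [Gr.free_comp]
      ext m
      rw [coeff_hcs, coeff_C]
      by_cases hm : 0 = m
      · subst hm; simp
      · rw [if_neg hm, if_neg]
        intro h
        have : m.degree = 0 := by omega
        rw [Finsupp.degree_eq_zero_iff] at this
        exact hm this.symm
    rw [hφ, ← Finset.add_sum_erase _ _ (Finset.mem_univ i), h2] at h1
    have h3 : (i : M) ∈ Submodule.span (MvPolynomial σ K) ((s.erase i.1 : Finset M) : Set M) := by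
      have h4 : (C (coeff 0 (f i)) : MvPolynomial σ K) • (i : M) ∈
          Submodule.span (MvPolynomial σ K) ((s.erase i.1 : Finset M) : Set M) := by
        rw [eq_neg_of_add_eq_zero_left h1]
        refine neg_mem (Submodule.sum_mem _ fun j hj => Submodule.smul_mem _ _ (Submodule.subset_span ?_))
        rw [Finset.mem_coe, Finset.mem_erase]
        exact ⟨fun h => (Finset.mem_erase.1 hj).1 (Subtype.ext h), j.2⟩
      have h5 := Submodule.smul_mem _ (C (coeff 0 (f i))⁻¹ : MvPolynomial σ K) h4
      rwa [← mul_smul, ← C_mul, inv_mul_cancel₀ hc, C_1, one_smul] at h5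
    have h6 := hmin (s.erase i.1) (fun v hv => ⟨d v (Finset.mem_of_mem_erase hv), hd _ _⟩) (by
      rw [eq_top_iff, ← hspan, Submodule.span_le]
      intro v hv
      by_cases hvi : v = i
      · rw [hvi]; exact h3
      · exact Submodule.subset_span (Finset.mem_coe.2 (Finset.mem_erase.2 ⟨hvi, hv⟩)))
    rw [Finset.card_erase_of_mem i.2] at h6
    have : 0 < s.card := Finset.card_pos.2 ⟨_, i.2⟩
    omega

end Cover

section Min
universe v w
variable {σ : Type v} {K : Type w} [Field K]

theorem graded_min [Finite σ] (d : ℕ) (M : Type (max v w)) [AddCommGroup M] [Module (MvPolynomial σ K) M]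
    (hM : NiceCover K σ M)
    (h : HasProjectiveDimensionLT (ModuleCat.of (MvPolynomial σ K) M) (d + 1))
    (he : ∀ e : Ext (ModuleCat.of (MvPolynomial σ K) M) (qMod (maxId K σ)) d, e = 0) :
    HasProjectiveDimensionLT (ModuleCat.of (MvPolynomial σ K) M) d := by
  classical
  induction d generalizing M with
  | zero =>
    obtain ⟨ι, _, φ, hs, hmin, hG⟩ := hM
    rw [hasProjectiveDimensionLT_zero_iff_isZero, ModuleCat.isZero_iff_subsingleton]
    rcases isEmpty_or_nonempty ι with hι | ⟨⟨i⟩⟩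
    · exact hs.subsingleton
    · exfalso
      let ψ : (ι → MvPolynomial σ K) →ₗ[MvPolynomial σ K] (MvPolynomial σ K ⧸ maxId K σ) :=
        (Submodule.mkQ (maxId K σ)).comp (LinearMap.proj i)
      have hψ : LinearMap.ker φ ≤ LinearMap.ker ψ := by
        intro f hf
        exact (Submodule.Quotient.mk_eq_zero _).2 (hmin f hf i)
      let χ : M →ₗ[MvPolynomial σ K] (MvPolynomial σ K ⧸ maxId K σ) :=
        ((LinearMap.ker φ).liftQ ψ hψ).comp (φ.quotKerEquivOfSurjective hs).symm.toLinearMap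
      have h0 := he (Ext.mk₀ (ModuleCat.ofHom χ))
      rw [Ext.mk₀_eq_zero_iff] at h0
      have h1 : χ = 0 := congrArg (fun f => f.hom) h0
      have h2 : χ (φ (Pi.single i 1)) = Submodule.Quotient.mk 1 := by
        have : (φ.quotKerEquivOfSurjective hs).symm (φ (Pi.single i 1)) =
            Submodule.Quotient.mk (Pi.single i 1) := by
          rw [LinearEquiv.symm_apply_eq]; rfl
        change (LinearMap.ker φ).liftQ ψ hψ ((φ.quotKerEquivOfSurjective hs).symm (φ (Pi.single i 1))) = _
        rw [this]
        change Submodule.Quotient.mk ((Pi.single i 1 : ι → MvPolynomial σ K) i) = _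
        rw [Pi.single_eq_same]
      rw [h1, LinearMap.zero_apply, eq_comm, Submodule.Quotient.mk_eq_zero] at h2
      exact one_notMem_maxId h2
  | succ d ih =>
    obtain ⟨ι, _, φ, hs, hmin, ⟨G⟩⟩ := hM
    have hex := LinearMap.shortExact_shortComplexKer hs
    have hproj : Projective (ModuleCat.of (MvPolynomial σ K) (ι → MvPolynomial σ K)) := by
      rw [← IsProjective.iff_projective]
      infer_instance
    have hp1 := projective_iff_hasProjectiveDimensionLT_one.1 hproj
    have hN : HasProjectiveDimensionLT (ModuleCat.of (MvPolynomial σ K) (LinearMap.ker φ)) (d + 1) :=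
      (hex.hasProjectiveDimensionLT_X₃_iff d hproj).1 h
    have hN2 := ih (LinearMap.ker φ) G.niceCover hN (by
      intro e
      obtain ⟨e2, rfl⟩ := Ext.contravariant_sequence_exact₁ hex _ e (add_comm 1 d) (he _)
      cases d with
      | zero =>
        obtain ⟨f, rfl⟩ : ∃ f, e2 = Ext.mk₀ f := ⟨_, (Ext.mk₀_homEquiv₀_apply e2).symm⟩
        rw [Ext.mk₀_comp_mk₀, Ext.mk₀_eq_zero_iff]
        refine ModuleCat.hom_ext (LinearMap.ext fun x => ?_)
        change f.hom x.1 = 0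
        have hx : x.1 = ∑ i, x.1 i • (Pi.single i 1 : ι → MvPolynomial σ K) := by
          ext j : 1
          simp [Finset.sum_apply, Pi.single_apply]
        rw [hx, map_sum]
        refine Finset.sum_eq_zero fun i _ => ?_
        rw [map_smul]
        obtain ⟨c, hc⟩ := Submodule.Quotient.mk_surjective _ (f.hom (Pi.single i 1))
        refine (congrArg (fun z => x.1 i • z) hc.symm).trans ?_
        exact (Submodule.Quotient.mk_eq_zero _).2 (Ideal.mul_mem_right _ _ (hmin x.1 x.2 i))
      | succ d =>
        have : e2 = 0 := 
          Ext.eq_zero_of_hasProjectiveDimensionLT (X := ModuleCat.of (MvPolynomial σ K) (ι → MvPolynomial σ K)) e2 1 (by omega)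
        rw [this, Ext.comp_zero])
    refine hex.hasProjectiveDimensionLT_X₃ d hN2 ?_
    exact hasProjectiveDimensionLT_of_ge (ModuleCat.of (MvPolynomial σ K) (ι → MvPolynomial σ K)) 1 _ (by omega)

/-- ideals whose membership depends only on the support are graded. -/
lemma niceCover_quot (I : Ideal (MvPolynomial σ K)) (hI : I ≤ maxId K σ)
    (hh : ∀ e, ∀ p ∈ I, hcs 0 e p ∈ I) : NiceCover K σ (MvPolynomial σ K ⧸ I) := by
  let φ : (PUnit.{(max v w) + 1} → MvPolynomial σ K) →ₗ[MvPolynomial σ K] (MvPolynomial σ K ⧸ I) :=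
    (Submodule.mkQ I).comp (LinearMap.proj PUnit.unit)
  have hφ : ∀ f, φ f = 0 ↔ f PUnit.unit ∈ I := fun f => Submodule.Quotient.mk_eq_zero _
  refine ⟨PUnit, inferInstance, φ, ?_, ?_, ⟨(Gr.free (fun _ => 0)).sub _ ?_⟩⟩
  · intro a
    obtain ⟨a, rfl⟩ := Submodule.Quotient.mk_surjective _ a
    exact ⟨fun _ => a, rfl⟩
  · intro f hf i
    exact hI ((hφ f).1 hf)
  · intro e f hf
    rw [LinearMap.mem_ker, hφ] at hf ⊢
    exact hh _ _ hf

lemma niceCover_mon (s : Set (σ →₀ ℕ)) (hs : 0 ∉ s) :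
    NiceCover K σ (MvPolynomial σ K ⧸ monIdeal K s) := by
  apply niceCover_quot
  · intro p hp
    rw [mem_monIdeal] at hp
    rw [mem_maxId_iff]
    by_contra h0
    obtain ⟨b, hb, hle⟩ := hp 0 (mem_support_iff.2 h0)
    obtain rfl : b = 0 := le_antisymm hle (by simp)
    exact hs hb
  · intro e p hp
    rw [mem_monIdeal] at hp ⊢
    intro m hm
    apply hp
    rw [mem_support_iff, coeff_hcs] at hm
    rw [mem_support_iff]
    split_ifs at hm
    · exact hm
    · exact absurd rfl hm

end Min

end Part6

section Part7
open Abelian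

section Comb
variable {V : Type*} [DecidableEq V] {K : Type*} [Field K]

noncomputable abbrev extSR (K : Type*) [Field K] (Δ : Set (Finset V)) : Ideal (MvPolynomial (Option V) K) :=
  (srIdeal K Δ).map (optInc K V)

lemma optInc_prod (S : Finset V) : optInc K V (∏ v ∈ S, X v) = ∏ w ∈ S.map Function.Embedding.some, X w := by
  rw [map_prod, Finset.prod_map]
  refine Finset.prod_congr rfl fun v _ => ?_
  simp [optInc]

lemma extSR_eq_span (Δ : Set (Finset V)) : extSR K Δ =
    Ideal.span ((fun S : Finset V => ∏ w ∈ S.map Function.Embedding.some,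
      (X w : MvPolynomial (Option V) K)) '' {S | S ∉ Δ}) := by
  rw [extSR, srIdeal, Ideal.map_span, Set.image_image]
  simp_rw [optInc_prod]

lemma extSR_eq (Δ : Set (Finset V)) :
    extSR K Δ = monIdeal K ((fun S : Finset V => sqExp (S.map Function.Embedding.some)) '' {S | S ∉ Δ}) := by
  rw [extSR_eq_span, monIdeal, Set.image_image]
  simp_rw [prod_X_eq]

lemma mem_extSR {Δ : Set (Finset V)} {p : MvPolynomial (Option V) K} :
    p ∈ extSR K Δ ↔ ∀ m ∈ p.support, ∃ S ∉ Δ, ∀ v ∈ S, m (some v) ≠ 0 := by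
  rw [extSR_eq, mem_monIdeal]
  simp [sqExp_le]

lemma extSR_reg (Δ : Set (Finset V)) (a : MvPolynomial (Option V) K)
    (h : X none * a ∈ extSR K Δ) : a ∈ extSR K Δ := by
  rw [mem_extSR] at h ⊢
  intro m hm
  have hm' : (Finsupp.single none 1 + m) ∈ (X none * a).support := by
    rw [mem_support_iff] at hm ⊢
    rw [coeff_X_mul]; exact hm
  obtain ⟨S, hS, h'⟩ := h _ hm'
  exact ⟨S, hS, fun v hv => by simpa using h' v hv⟩

lemma mul_mem_prod {σ : Type*} [DecidableEq σ] (T : Finset σ) (a b : σ) (ha : a ∈ T) (hb : b ∈ T)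
    (hab : b ≠ a) : ∃ q : MvPolynomial σ K, ∏ w ∈ T, X w = X a * X b * q := by
  refine ⟨∏ w ∈ (T.erase a).erase b, X w, ?_⟩
  rw [mul_assoc, Finset.mul_prod_erase _ _ (Finset.mem_erase.2 ⟨hab, hb⟩), Finset.mul_prod_erase _ _ ha]

lemma extSR_le_var {Δ : Set (Finset V)} (hΔ : IsSimplicialComplex Δ) {F : Finset V} (hF : F ∈ Δ)
    (s : Set (Option V)) (hs : ∀ v, v ∉ F → some v ∈ s) : extSR K Δ ≤ varIdeal K s := by
  rw [extSR_eq_span, Ideal.span_le]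
  rintro _ ⟨S, hS, rfl⟩
  obtain ⟨v, hv, hvF⟩ : ∃ v ∈ S, v ∉ F := by
    by_contra! h
    exact hS (hΔ.2 F hF S h)
  have h1 : some v ∈ S.map Function.Embedding.some := by simpa using hv
  dsimp only
  rw [← Finset.mul_prod_erase _ _ h1]
  exact Ideal.mul_mem_right _ _ (Ideal.subset_span ⟨_, hs v hvF, rfl⟩)

lemma extSR_le_J {Δ : Set (Finset V)} (hΔ : IsSimplicialComplex Δ) {F : Finset V} (hF : F ∈ Δ)
    (y : V) (t : Set (Option V)) (ht : ∀ v, v ∉ F → v ≠ y → some v ∈ t) :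
    extSR K Δ ≤ varIdeal K t ⊔ Ideal.span {X (some y)} * maxId K (Option V) := by
  rw [extSR_eq_span, Ideal.span_le]
  rintro _ ⟨S, hS, rfl⟩
  dsimp only
  by_cases hex : ∃ v ∈ S, v ∉ F ∧ v ≠ y
  · obtain ⟨v, hv, hvF, hvy⟩ := hex
    have h1 : some v ∈ S.map Function.Embedding.some := by simpa using hv
    rw [← Finset.mul_prod_erase _ _ h1]
    exact Ideal.mem_sup_left (Ideal.mul_mem_right _ _ (Ideal.subset_span ⟨_, ht v hvF hvy, rfl⟩))
  · obtain ⟨v, hv, hvF⟩ : ∃ v ∈ S, v ∉ F := by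
      by_contra! h
      exact hS (hΔ.2 F hF S h)
    obtain rfl : v = y := by
      by_contra h; exact hex ⟨v, hv, hvF, h⟩
    obtain ⟨w, hw, hwv⟩ : ∃ w ∈ S, w ≠ v := by
      by_contra! h
      exact hS (hΔ.2 {v} (hΔ.1 v) S (fun w hw => Finset.mem_singleton.2 (h w hw)))
    obtain ⟨q, hq⟩ := mul_mem_prod (K := K) (S.map Function.Embedding.some) (some v) (some w)
      (by simpa using hv) (by simpa using hw) (by simpa using hwv)
    rw [hq]
    exact Ideal.mem_sup_right (Ideal.mul_mem_right _ _ (Ideal.mul_mem_mul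
      (Ideal.mem_span_singleton_self _) (Ideal.subset_span ⟨_, trivial, rfl⟩)))

lemma srIdeal_cone {Δ : Set (Finset V)} (hΔ : IsSimplicialComplex Δ) {F : Finset V} (hF : F ∈ Δ)
    (s : Set (Option V)) (hs : ∀ w, w ∈ s ↔ ∃ v, v ∉ F ∧ w = some v) :
    srIdeal K (coneUnion Δ F) = extSR K Δ ⊔ Ideal.span {X none} * varIdeal K s := by
  apply le_antisymm
  · rw [srIdeal, Ideal.span_le]
    rintro _ ⟨T, hT, rfl⟩
    dsimp only
    by_cases hn : none ∈ T
    · have h2 : ¬ T ⊆ insert none (F.map Function.Embedding.some) := fun h => hT (Or.inr h)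
      obtain ⟨w, hw, hw2⟩ := Finset.not_subset.1 h2
      cases w with
      | none => simp at hw2
      | some v =>
        have hv : v ∉ F := by simpa using hw2
        obtain ⟨q, hq⟩ := mul_mem_prod (K := K) T none (some v) hn hw (by simp)
        rw [hq]
        exact Ideal.mem_sup_right (Ideal.mul_mem_right _ _ (Ideal.mul_mem_mul
          (Ideal.mem_span_singleton_self _) (Ideal.subset_span ⟨_, (hs _).2 ⟨v, hv, rfl⟩, rfl⟩)))
    · obtain ⟨S, rfl⟩ : ∃ S : Finset V, T = S.map Function.Embedding.some := by
        refine ⟨Finset.eraseNone T, ?_⟩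
        rw [Finset.map_some_eraseNone, Finset.erase_eq_of_notMem hn]
      have hS : S ∉ Δ := fun h => hT (Or.inl ⟨S, h, rfl⟩)
      refine Ideal.mem_sup_left ?_
      rw [extSR_eq_span]
      exact Ideal.subset_span ⟨S, hS, rfl⟩
  · apply sup_le
    · rw [extSR_eq_span, Ideal.span_le]
      rintro _ ⟨S, hS, rfl⟩
      refine Ideal.subset_span ⟨S.map Function.Embedding.some, ?_, rfl⟩
      rintro (⟨S', hS', h⟩ | h)
      · exact hS (Finset.map_injective _ h ▸ hS')
      · apply hS
        refine hΔ.2 F hF S fun v hv => ?_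
        have := h (Finset.mem_map_of_mem _ hv)
        simpa using this
    · rw [varIdeal, Ideal.span_mul_span', Ideal.span_le]
      rintro _ ⟨_, rfl, _, ⟨w, hw, rfl⟩, rfl⟩
      obtain ⟨v, hv, rfl⟩ := (hs w).1 hw
      refine Ideal.subset_span ⟨{none, some v}, ?_, ?_⟩
      · rintro (⟨S', hS', h⟩ | h)
        · have : (none : Option V) ∈ S'.map Function.Embedding.some := by
            dsimp only at h
            rw [h]; simp
          simp at this
        · have := h (show some v ∈ ({none, some v} : Finset (Option V)) by simp)
          exact hv (by simpa using this)
      · dsimp only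
        rw [Finset.prod_pair (by simp)]

end Comb

section Final
variable {V : Type*} [Fintype V] [DecidableEq V] {K : Type*} [Field K]

lemma extSR_top {Δ : Set (Finset V)} (hΔ : IsSimplicialComplex Δ) {F : Finset V} (hF : F ∈ Δ) (p : ℕ)
    (hp : HasProjectiveDimensionLE (qMod (srIdeal K Δ)) p)
    (hmin : ∀ m, HasProjectiveDimensionLE (qMod (srIdeal K Δ)) m → p ≤ m) :
    ∃ e : Ext (qMod (extSR K Δ)) (qMod (maxId K (Option V))) p, e ≠ 0 := by
  by_contra! hall
  have hcov : NiceCover K (Option V) (MvPolynomial (Option V) K ⧸ extSR K Δ) := by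
    rw [extSR_eq]
    apply niceCover_mon
    rintro ⟨S, hS, h0⟩
    apply hS
    have : S = ∅ := by
      by_contra hne
      obtain ⟨v, hv⟩ := Finset.nonempty_iff_ne_empty.2 hne
      have := (sqExp_le _ _).1 h0.le (some v) (by simpa using hv)
      exact this rfl
    rw [this]
    exact hΔ.2 F hF ∅ (by simp)
  have h := graded_min (σ := Option V) (K := K) p _ hcov ((hasPD_opt_iff _ _).2 hp) hall
  cases p with
  | zero =>
    rw [hasProjectiveDimensionLT_zero_iff_isZero, ModuleCat.isZero_iff_subsingleton] at h
    have h1 : (Submodule.Quotient.mk 1 : MvPolynomial (Option V) K ⧸ extSR K Δ) = 0 :=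
      Subsingleton.elim (α := ModuleCat.of (MvPolynomial (Option V) K) (MvPolynomial (Option V) K ⧸ extSR K Δ)) _ _
    rw [Submodule.Quotient.mk_eq_zero] at h1
    exact one_notMem_maxId (extSR_le_var hΔ hF Set.univ (by simp) h1)
  | succ p =>
    have := hmin p ((hasPD_opt_iff _ _).1 h)
    omega

lemma pd_cone {Δ : Set (Finset V)} (hΔ : IsSimplicialComplex Δ) {F : Finset V} (hF : F ∈ Δ)
    (hFX : F ≠ Finset.univ) (p : ℕ)
    (hp : HasProjectiveDimensionLE (qMod (srIdeal K Δ)) p)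
    (hmin : ∀ m, HasProjectiveDimensionLE (qMod (srIdeal K Δ)) m → p ≤ m) :
    HasProjectiveDimensionLE (qMod (srIdeal K (coneUnion Δ F))) (max (p + 1) (Fintype.card V - F.card)) ∧
    ∀ m, HasProjectiveDimensionLE (qMod (srIdeal K (coneUnion Δ F))) m →
      max (p + 1) (Fintype.card V - F.card) ≤ m := by
  obtain ⟨y, hy⟩ : ∃ y, y ∉ F := by
    by_contra! h
    exact hFX (Finset.eq_univ_iff_forall.2 h)
  let t : Finset (Option V) := (Fᶜ.erase y).map Function.Embedding.some
  have hyt : some y ∉ (t : Set (Option V)) := by simp [t]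
  have hyt' : some y ∉ t := hyt
  have htc : t.card + 1 = Fintype.card V - F.card := by
    rw [Finset.card_map, Finset.card_erase_add_one (by simpa using hy), Finset.card_compl]
  rw [← htc]
  have hs : ∀ w, w ∈ insert (some y) (t : Set (Option V)) ↔ ∃ v, v ∉ F ∧ w = some v := by
    intro w
    simp only [t, Set.mem_insert_iff, Finset.mem_coe, Finset.mem_map, Finset.mem_erase,
      Finset.mem_compl, Function.Embedding.some_apply]
    constructor
    · rintro (rfl | ⟨v, ⟨_, h⟩, rfl⟩)
      · exact ⟨y, hy, rfl⟩
      · exact ⟨v, h, rfl⟩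
    · rintro ⟨v, h, rfl⟩
      by_cases hv : v = y
      · left; rw [hv]
      · right; exact ⟨v, ⟨hv, h⟩, rfl⟩
  rw [srIdeal_cone hΔ hF _ hs]
  obtain ⟨eI, heI⟩ := extSR_top (K := K) hΔ hF p hp hmin
  have hpI : HasProjectiveDimensionLT (qMod (extSR K Δ)) (p + 1) := (hasPD_opt_iff _ _).2 hp
  have hpI2 : HasProjectiveDimensionLT (qMod (extSR K Δ)) (p + 1 + 1) :=
    hasProjectiveDimensionLT_of_ge _ (p+1) _ (by omega)
  have hpA : HasProjectiveDimensionLT (qMod (varIdeal K (insert (some y) (t : Set (Option V)))))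
      (t.card + 1 + 1) := by
    have := pd_varIdeal (K := K) (insert (some y) t)
    rwa [Finset.card_insert_of_notMem hyt', Finset.coe_insert] at this
  have heA := ext_varIdeal (K := K) (insert (some y) t)
  rw [Finset.card_insert_of_notMem hyt', Finset.coe_insert] at heA
  obtain ⟨eA, heA⟩ := heA
  have hIP : extSR K Δ ≤ varIdeal K (insert (some y) (t : Set (Option V))) :=
    extSR_le_var hΔ hF _ (fun v hv => (hs _).2 ⟨v, hv, rfl⟩)
  have hC := ColonData.ofReg' (X none) (extSR_reg (K := K) Δ)
  have hB := ColonData.ofReg hIP (X none) (extSR_reg (K := K) Δ)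
  have hpC : HasProjectiveDimensionLT (qMod (extSR K Δ ⊔ Ideal.span {X none})) (p + 1 + 1) :=
    hC.exact.hasProjectiveDimensionLT_X₃ _ hpI hpI2
  have heC := hC.ext_ne_zero _ (X_smul_k none) eI heI
  constructor
  · refine hB.exact.hasProjectiveDimensionLT_X₂ _ ?_ ?_
    · exact hasProjectiveDimensionLT_of_ge (qMod _) (t.card+1+1) _ (by omega)
    · exact hasProjectiveDimensionLT_of_ge (qMod _) (p+1+1) _ (by omega)
  · intro m hm
    have hm' : HasProjectiveDimensionLT hB.sc.X₂ (m + 1) := hm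
    by_contra hlt
    rw [not_le, lt_max_iff] at hlt
    by_cases hcp : p < t.card + 1
    · obtain ⟨e2, he2⟩ := Ext.contravariant_sequence_exact₁ hB.exact _ eA (add_comm 1 _)
        (Ext.eq_zero_of_hasProjectiveDimensionLT (X := qMod (extSR K Δ ⊔ Ideal.span {X none})) _ (p+1+1) (by omega))
      have : e2 = 0 := Ext.eq_zero_of_hasProjectiveDimensionLT _ (m+1) (by omega)
      rw [this, Ext.comp_zero] at he2
      exact heA he2.symm
    · obtain ⟨e1, he1⟩ := Ext.contravariant_sequence_exact₃ hB.exact _ (hC.δ.comp eI (add_comm 1 p))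
        (Ext.eq_zero_of_hasProjectiveDimensionLT _ (m+1) (by omega)) (add_comm 1 p)
      apply heC
      rw [← he1]
      rcases (show t.card + 1 < p ∨ t.card + 1 = p by omega) with hlt2 | rfl
      · have : e1 = 0 := Ext.eq_zero_of_hasProjectiveDimensionLT (X := qMod (varIdeal K (insert (some y) (t : Set (Option V))))) e1 (t.card+1+1) (by omega)
        rw [this, Ext.comp_zero]
        rfl
      · have hIJ := extSR_le_J (K := K) hΔ hF y (t : Set (Option V)) (by
          intro v hv hvy
          simp [t, hv, hvy])
        have hBt := ColonData.ofReg hIJ (X none) (extSR_reg (K := K) Δ)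
        have hJP := (cdm (K := K) (some y) (t : Set (Option V)) hyt).le
        have hn := hBt.δ_nat hB hJP (sup_le_sup_left (Ideal.mul_mono_right hJP) _) le_rfl
        rw [qMap_self, Ext.mk₀_id_comp] at hn
        change hB.δ.comp e1 _ = 0
        rw [← hn]
        refine (Ext.comp_assoc_of_second_deg_zero _ _ _ _).trans ?_
        have hz := ext_restrict_zero (K := K) (some y) t hyt e1
        rw [hz, Ext.comp_zero]

end Final


end Part7

/-- STATEMENT 11: for a face `F ≠ X` of `Δ` and `Δ' = Δ ∪ co_{x₀}F`,
`pd K[Δ'] = max (pd K[Δ] + 1) (n − |F|)`. -/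
theorem projDim_coneUnion {V : Type*} [Fintype V] [DecidableEq V]
    (K : Type*) [Field K] (Δ : Set (Finset V)) (hΔ : IsSimplicialComplex Δ)
    (F : Finset V) (hF : F ∈ Δ) (hFX : F ≠ Finset.univ) :
    projDim (ModuleCat.of (MvPolynomial (Option V) K)
        (MvPolynomial (Option V) K ⧸ srIdeal K (coneUnion Δ F))) =
      max (projDim (ModuleCat.of (MvPolynomial V K) (MvPolynomial V K ⧸ srIdeal K Δ)) + 1)
        (Fintype.card V - F.card) := by
  have h1 := fun m => projDim_le_iff (qMod (srIdeal K Δ)) (srIdeal_finite_pd Δ) m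
  have h2 := fun m => projDim_le_iff (qMod (srIdeal K (coneUnion Δ F))) (srIdeal_finite_pd _) m
  obtain ⟨hle, hge⟩ := pd_cone (K := K) hΔ hF hFX _ ((h1 _).1 le_rfl) (fun m hm => (h1 m).2 hm)
  exact le_antisymm ((h2 _).2 hle) (hge _ ((h2 _).1 le_rfl))
end

section
/- Let K be an algebraically closed field, Δ a simplicial complex on X = {x_1,...,x_n}, F a face of Δ, and Δ' = Δ ∪ co_{x_0}F. If ara I_Δ = pd K[Δ], then ara I_{Δ'} = pd K[Δ']. -/
open MvPolynomial

open CategoryTheory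

section
open CategoryTheory

namespace AraPd
universe u

section Api
variable {R : Type u} [CommRing R]

/-- Ext groups of unbundled modules. -/
abbrev XE (R : Type u) [CommRing R] (M N : Type u) [AddCommGroup M] [Module R M]
    [AddCommGroup N] [Module R N] (i : ℕ) : Type u :=
  Abelian.Ext.{u} (ModuleCat.of R M) (ModuleCat.of R N) i

variable {A B C A' B' C' N : Type u}
  [AddCommGroup A] [Module R A] [AddCommGroup B] [Module R B] [AddCommGroup C] [Module R C]
  [AddCommGroup A'] [Module R A'] [AddCommGroup B'] [Module R B'] [AddCommGroup C'] [Module R C']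
  [AddCommGroup N] [Module R N]

/-- Pullback of Ext classes along a linear map. -/
noncomputable def pull (f : A →ₗ[R] B) {i : ℕ} (α : XE R B N i) : XE R A N i :=
  (Abelian.Ext.mk₀ (ModuleCat.ofHom f)).comp α (zero_add i)

lemma pull_pull (f : A →ₗ[R] B) (g : B →ₗ[R] C) {i : ℕ} (α : XE R C N i) :
    pull f (pull g α) = pull (g ∘ₗ f) α := by
  unfold pull
  rw [Abelian.Ext.mk₀_comp_mk₀_assoc]
  rfl

lemma pull_id {i : ℕ} (α : XE R A N i) : pull LinearMap.id α = α := by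
  unfold pull
  exact Abelian.Ext.mk₀_id_comp α

@[simp] lemma pull_zero (f : A →ₗ[R] B) {i : ℕ} : pull f (0 : XE R B N i) = 0 := by
  simp [pull]

@[simp] lemma pull_zero_left {i : ℕ} (α : XE R B N i) : pull (0 : A →ₗ[R] B) α = 0 := by
  unfold pull
  have : ModuleCat.ofHom (0 : A →ₗ[R] B) = 0 := rfl
  rw [this]; simp

lemma pull_add (f : A →ₗ[R] B) {i : ℕ} (α β : XE R B N i) :
    pull f (α + β) = pull f α + pull f β := by
  simp [pull]

lemma pull_sub (f : A →ₗ[R] B) {i : ℕ} (α β : XE R B N i) :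
    pull f (α - β) = pull f α - pull f β := by
  simp [pull, sub_eq_add_neg]

lemma pull_sum (f : A →ₗ[R] B) {i : ℕ} {ι : Type*} (s : Finset ι) (α : ι → XE R B N i) :
    pull f (∑ j ∈ s, α j) = ∑ j ∈ s, pull f (α j) := by
  classical
  induction s using Finset.induction_on with
  | empty => simp
  | insert a s ha ih => rw [Finset.sum_insert ha, Finset.sum_insert ha, pull_add, ih]

lemma pull_add_left (f g : A →ₗ[R] B) {i : ℕ} (α : XE R B N i) :
    pull (f + g) α = pull f α + pull g α := by
  unfold pull
  have : ModuleCat.ofHom (f + g) = ModuleCat.ofHom f + ModuleCat.ofHom g := rfl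
  rw [this, Abelian.Ext.mk₀_add, Abelian.Ext.add_comp]

lemma pull_smul (r : R) (f : A →ₗ[R] B) {i : ℕ} (α : XE R B N i) :
    pull (r • f) α = r • pull f α := by
  unfold pull
  have : ModuleCat.ofHom (r • f) = r • ModuleCat.ofHom f := rfl
  rw [this, Abelian.Ext.mk₀_smul, Abelian.Ext.smul_comp]

lemma pull_smul_right (r : R) (f : A →ₗ[R] B) {i : ℕ} (α : XE R B N i) :
    pull f (r • α) = r • pull f α := by
  simp [pull]

lemma smul_eq_zero_of_killed (r : R) (h : ∀ n : N, r • n = 0) {i : ℕ} (α : XE R A N i) :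
    r • α = 0 := by
  rw [Abelian.Ext.smul_eq_comp_mk₀]
  have : r • 𝟙 (ModuleCat.of R N) = 0 := by
    ext n; exact h n
  rw [this]; simp

lemma smul_eq_zero_of_killed_left (r : R) (h : ∀ n : A, r • n = 0) {i : ℕ} (α : XE R A N i) :
    r • α = 0 := by
  have h1 : (r • LinearMap.id : A →ₗ[R] A) = 0 := by
    ext n; exact h n
  rw [← pull_id α, ← pull_smul, h1, pull_zero_left]

/-- Data of a short exact sequence of modules. -/
structure SES (f : A →ₗ[R] B) (g : B →ₗ[R] C) : Prop where
  inj : Function.Injective f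
  exact : Function.Exact f g
  surj : Function.Surjective g

/-- the short complex. -/
abbrev SES.sc {f : A →ₗ[R] B} {g : B →ₗ[R] C} (h : SES f g) : ShortComplex (ModuleCat.{u} R) :=
  ShortComplex.mk (ModuleCat.ofHom f) (ModuleCat.ofHom g) (by
    rw [← ModuleCat.ofHom_comp, h.exact.linearMap_comp_eq_zero]; rfl)

lemma SES.shortExact {f : A →ₗ[R] B} {g : B →ₗ[R] C} (h : SES f g) : h.sc.ShortExact :=
  ModuleCat.shortComplex_shortExact _ h.exact h.inj h.surj

/-- The connecting homomorphism. -/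
noncomputable def SES.δ {f : A →ₗ[R] B} {g : B →ₗ[R] C} (h : SES f g) {i : ℕ}
    (α : XE R A N i) : XE R C N (i + 1) :=
  h.shortExact.extClass.comp α (add_comm 1 i)

variable {f : A →ₗ[R] B} {g : B →ₗ[R] C} {f' : A' →ₗ[R] B'} {g' : B' →ₗ[R] C'}

lemma SES.δ_smul (h : SES f g) {i : ℕ} (r : R) (α : XE R A N i) : h.δ (r • α) = r • h.δ α := by
  simp [SES.δ]

@[simp] lemma SES.δ_zero (h : SES f g) {i : ℕ} : h.δ (0 : XE R A N i) = 0 := by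
  simp [SES.δ]

lemma SES.exact1 (h : SES f g) {i : ℕ} (α : XE R A N i) (hα : h.δ α = 0) :
    ∃ β : XE R B N i, pull f β = α :=
  Abelian.Ext.contravariant_sequence_exact₁ h.shortExact _ α (add_comm 1 i) hα

lemma SES.exact2 (h : SES f g) {i : ℕ} (β : XE R B N i) (hβ : pull f β = 0) :
    ∃ γ : XE R C N i, pull g γ = β :=
  Abelian.Ext.contravariant_sequence_exact₂ h.shortExact _ β hβ

lemma SES.exact3 (h : SES f g) {i : ℕ} (γ : XE R C N (i + 1)) (hγ : pull g γ = 0) :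
    ∃ α : XE R A N i, h.δ α = γ :=
  Abelian.Ext.contravariant_sequence_exact₃ h.shortExact _ γ hγ (add_comm 1 i)

lemma SES.δ_pull (h : SES f g) {i : ℕ} (β : XE R B N i) : h.δ (pull f β) = 0 :=
  h.shortExact.extClass_comp_assoc β

lemma SES.pull_δ (h : SES f g) {i : ℕ} (α : XE R A N i) : pull g (h.δ α) = 0 :=
  h.shortExact.comp_extClass_assoc α _

lemma SES.pull_pull_zero (h : SES f g) {i : ℕ} (γ : XE R C N i) : pull f (pull g γ) = 0 := by
  rw [pull_pull, h.exact.linearMap_comp_eq_zero, pull_zero_left]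

lemma SES.δ_nat (h : SES f g) (h' : SES f' g') (a : A →ₗ[R] A') (b : B →ₗ[R] B')
    (c : C →ₗ[R] C') (hab : f' ∘ₗ a = b ∘ₗ f) (hbc : g' ∘ₗ b = c ∘ₗ g) {i : ℕ}
    (α : XE R A' N i) : h.δ (pull a α) = pull c (h'.δ α) := by
  have key := ShortComplex.ShortExact.extClass_naturality h.shortExact h'.shortExact
    (ShortComplex.homMk (ModuleCat.ofHom a) (ModuleCat.ofHom b) (ModuleCat.ofHom c)
      (by simp only [← ModuleCat.ofHom_comp, hab])
      (by simp only [← ModuleCat.ofHom_comp, hbc]) : h.sc ⟶ h'.sc)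
  unfold SES.δ pull
  rw [← Abelian.Ext.comp_assoc (a₁₂ := 1) _ _ _ (by omega) (by omega) (by omega),
    ← Abelian.Ext.comp_assoc (a₁₂ := 1) _ _ _ (by omega) (by omega) (by omega)]
  exact congrArg (fun t => t.comp α (add_comm 1 i)) key

lemma ext_proj [Module.Projective R A] {i : ℕ} (α : XE R A N (i + 1)) : α = 0 := by
  haveI : Projective (ModuleCat.of R A) := (IsProjective.iff_projective A).1 inferInstance
  exact Abelian.Ext.eq_zero_of_projective α

/-- degree zero classes are maps -/
noncomputable def ofMap (f : A →ₗ[R] N) : XE R A N 0 := Abelian.Ext.mk₀ (ModuleCat.ofHom f)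

lemma ofMap_surj (α : XE R A N 0) : ∃ f : A →ₗ[R] N, ofMap f = α := by
  obtain ⟨f, rfl⟩ := (Abelian.Ext.mk₀_bijective _ _).2 α
  exact ⟨f.hom, rfl⟩

lemma ofMap_inj {f g : A →ₗ[R] N} (h : ofMap f = ofMap g) : f = g := by
  have := (Abelian.Ext.mk₀_bijective _ _).1 h
  exact ModuleCat.hom_ext_iff.1 this

lemma pull_ofMap (f : A →ₗ[R] B) (g : B →ₗ[R] N) : pull f (ofMap g) = ofMap (g ∘ₗ f) := by
  unfold pull ofMap
  rw [Abelian.Ext.mk₀_comp_mk₀]; rfl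

lemma ofMap_zero : ofMap (0 : A →ₗ[R] N) = 0 := Abelian.Ext.mk₀_zero _ _

lemma ofMap_eq_zero {f : A →ₗ[R] N} (h : ofMap f = 0) : f = 0 :=
  ofMap_inj (h.trans ofMap_zero.symm)

end Api
end AraPd

end

section
open CategoryTheory

namespace AraPd
universe u

section Res
variable {R : Type u} [CommRing R]
variable {A B C A' B' C' N : Type u}
  [AddCommGroup A] [Module R A] [AddCommGroup B] [Module R B] [AddCommGroup C] [Module R C]
  [AddCommGroup A'] [Module R A'] [AddCommGroup B'] [Module R B'] [AddCommGroup C'] [Module R C']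
  [AddCommGroup N] [Module R N]

/-- The map induces zero on Ext in degree `i`. -/
def ZExt (π : A →ₗ[R] B) (i : ℕ) : Prop :=
  ∀ (N : Type u) [AddCommGroup N] [Module R N] (α : XE R B N i), pull π α = 0

variable (R A) in
/-- Ext vanishes in degree `i`. -/
def VExt (i : ℕ) : Prop :=
  ∀ (N : Type u) [AddCommGroup N] [Module R N] (α : XE R A N i), α = 0

lemma vExt_iff (i : ℕ) : VExt R A i ↔ ZExt (LinearMap.id : A →ₗ[R] A) i := by
  constructor
  · intro h N _ _ α; rw [pull_id]; exact h N α
  · intro h N _ _ α; rw [← pull_id α]; exact h N α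

lemma ZExt.comp_right {π : A →ₗ[R] B} {i : ℕ} (h : ZExt π i) (f : C →ₗ[R] A) :
    ZExt (π ∘ₗ f) i := by
  intro N _ _ α
  rw [← pull_pull, h N α, pull_zero]

lemma ZExt.comp_left {π : A →ₗ[R] B} {i : ℕ} (h : ZExt π i) (f : B →ₗ[R] C) :
    ZExt (f ∘ₗ π) i := by
  intro N _ _ α
  rw [← pull_pull, h N]

lemma ses_ker (g : B →ₗ[R] C) (hg : Function.Surjective g) :
    SES (LinearMap.ker g).subtype g where
  inj := Subtype.val_injective
  exact := LinearMap.exact_subtype_ker_map g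
  surj := hg

lemma ZExt.lift {π : A →ₗ[R] B} (h : ZExt π 1) (g : C →ₗ[R] B) (hg : Function.Surjective g) :
    ∃ l : A →ₗ[R] C, g ∘ₗ l = π := by
  have hs := ses_ker g hg
  obtain ⟨x, hx⟩ := Abelian.Ext.covariant_sequence_exact₃ (X := ModuleCat.of R A)
    (hS := hs.shortExact) (ofMap π) (zero_add 1) (h _ hs.shortExact.extClass)
  obtain ⟨l, rfl⟩ := ofMap_surj x
  refine ⟨l, ofMap_inj ?_⟩
  rw [← hx]
  exact (pull_ofMap l g).symm

lemma ZExt.of_lift {π : A →ₗ[R] B} [Module.Projective R C] (g : C →ₗ[R] B) (l : A →ₗ[R] C)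
    (h : g ∘ₗ l = π) (i : ℕ) : ZExt π (i + 1) := by
  intro N _ _ α
  rw [← h, ← pull_pull, ext_proj (pull g α), pull_zero]

lemma VExt.projective (h : VExt R A 1) : Module.Projective R A := by
  obtain ⟨l, hl⟩ := ((vExt_iff 1).1 h).lift (Finsupp.linearCombination R (id : A → A))
    (Finsupp.linearCombination_id_surjective R A)
  exact Module.Projective.of_split l _ hl

variable {f : A →ₗ[R] B} {g : B →ₗ[R] C} {f' : A' →ₗ[R] B'} {g' : B' →ₗ[R] C'}

lemma ZExt.shift (h : SES f g) (h' : SES f' g') [Module.Projective R B]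
    (a : A →ₗ[R] A') (b : B →ₗ[R] B')
    (c : C →ₗ[R] C') (hab : f' ∘ₗ a = b ∘ₗ f) (hbc : g' ∘ₗ b = c ∘ₗ g) {i : ℕ}
    (hz : ZExt c (i + 2)) : ZExt a (i + 1) := by
  intro N _ _ α
  have h1 : h.δ (pull a α) = 0 := by
    rw [h.δ_nat h' a b c hab hbc, hz N]
  obtain ⟨β, hβ⟩ := h.exact1 _ h1
  rw [← hβ, ext_proj β, pull_zero]

lemma ZExt.unshift (h : SES f g) (h' : SES f' g') [Module.Projective R B']
    (a : A →ₗ[R] A') (b : B →ₗ[R] B')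
    (c : C →ₗ[R] C') (hab : f' ∘ₗ a = b ∘ₗ f) (hbc : g' ∘ₗ b = c ∘ₗ g) {i : ℕ}
    (hz : ZExt a (i + 1)) : ZExt c (i + 2) := by
  intro N _ _ γ
  obtain ⟨α, rfl⟩ := h'.exact3 γ (ext_proj _)
  rw [← h.δ_nat h' a b c hab hbc, hz N, SES.δ_zero]

lemma VExt.shift (h : SES f g) [Module.Projective R B] {i : ℕ}
    (hz : VExt R C (i + 2)) : VExt R A (i + 1) :=
  (vExt_iff _).2 (ZExt.shift h h LinearMap.id LinearMap.id LinearMap.id rfl rfl ((vExt_iff _).1 hz))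

lemma VExt.unshift (h : SES f g) [Module.Projective R B] {i : ℕ}
    (hz : VExt R A (i + 1)) : VExt R C (i + 2) :=
  (vExt_iff _).2 (ZExt.unshift h h LinearMap.id LinearMap.id LinearMap.id rfl rfl
    ((vExt_iff _).1 hz))

lemma VExt.succ_of (i : ℕ) : ∀ (A : Type u) [AddCommGroup A] [Module R A]
    (_ : VExt R A (i + 1)), VExt R A (i + 2) := by
  induction i with
  | zero =>
    intro A _ _ h
    have := h.projective
    intro N _ _ α
    exact ext_proj α
  | succ i ih =>
    intro A _ _ h
    have hs := ses_ker (Finsupp.linearCombination R (id : A → A))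
      (Finsupp.linearCombination_id_surjective R A)
    exact VExt.unshift hs (ih _ (VExt.shift hs h))

lemma VExt.mono {i j : ℕ} (hi : 1 ≤ i) (hij : i ≤ j) (h : VExt R A i) : VExt R A j := by
  induction j, hij using Nat.le_induction with
  | base => exact h
  | succ j hj ih =>
    obtain ⟨k, rfl⟩ : ∃ k, j = k + 1 := ⟨j - 1, by omega⟩
    exact VExt.succ_of k A ih

lemma VExt.of_retract {i : ℕ} (s : A →ₗ[R] B) (t : B →ₗ[R] A) (h : t ∘ₗ s = LinearMap.id)
    (hB : VExt R B i) : VExt R A i := by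
  intro N _ _ α
  rw [← pull_id α, ← h, ← pull_pull, hB N (pull t α), pull_zero]

end Res

section Restrict
variable {R S : Type u} [CommRing R] [CommRing S] [Algebra R S] [Module.Projective R S]

lemma proj_finsupp (ι : Type u) : Module.Projective R (ι →₀ S) := by
  classical
  exact Module.Projective.of_equiv (finsuppLequivDFinsupp (ι := ι) (M := S) R).symm

lemma SES.restrict {A B C : Type u} [AddCommGroup A] [AddCommGroup B] [AddCommGroup C]
    [Module R A] [Module S A] [IsScalarTower R S A] [Module R B] [Module S B] [IsScalarTower R S B]
    [Module R C] [Module S C] [IsScalarTower R S C]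
    {f : A →ₗ[S] B} {g : B →ₗ[S] C} (h : SES f g) :
    SES (f.restrictScalars R) (g.restrictScalars R) where
  inj := h.inj
  exact := h.exact
  surj := h.surj

lemma ZExt.restrict (i : ℕ) : ∀ {A B : Type u} [AddCommGroup A] [AddCommGroup B] [Module R A]
    [Module S A] [IsScalarTower R S A] [Module R B] [Module S B] [IsScalarTower R S B]
    (π : A →ₗ[S] B) (_ : ZExt π (i + 1)), ZExt (π.restrictScalars R) (i + 1) := by
  induction i with
  | zero =>
    intro A B _ _ _ _ _ _ _ _ π h
    obtain ⟨l, hl⟩ := h.lift (Finsupp.linearCombination S (id : B → B))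
      (Finsupp.linearCombination_id_surjective S B)
    have := proj_finsupp (R := R) (S := S) B
    refine ZExt.of_lift (C := B →₀ S) ((Finsupp.linearCombination S (id : B → B)).restrictScalars R)
      (l.restrictScalars R) ?_ 0
    rw [← hl]; rfl
  | succ i ih =>
    intro A B _ _ _ _ _ _ _ _ π h
    have hA := Finsupp.linearCombination_id_surjective S A
    have hB := Finsupp.linearCombination_id_surjective S B
    obtain ⟨b, hb⟩ := Module.projective_lifting_property
      (Finsupp.linearCombination S (id : B → B)) (π ∘ₗ Finsupp.linearCombination S (id : A → A)) hB
    have hk : ∀ x ∈ LinearMap.ker (Finsupp.linearCombination S (id : A → A)),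
        b x ∈ LinearMap.ker (Finsupp.linearCombination S (id : B → B)) := by
      intro x hx
      have := LinearMap.congr_fun hb x
      simp only [LinearMap.comp_apply] at this
      rw [LinearMap.mem_ker] at hx ⊢
      rw [this, hx, map_zero]
    have hsA := ses_ker _ hA
    have hsB := ses_ker _ hB
    have h1 := ih _ (ZExt.shift hsA hsB (b.restrict hk) b π rfl hb h)
    have := proj_finsupp (R := R) (S := S) B
    have hsA' := hsA.restrict (R := R)
    have hsB' := hsB.restrict (R := R)
    refine ZExt.unshift hsA' hsB' _ (b.restrictScalars R) _ rfl ?_ h1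
    exact LinearMap.ext fun x => LinearMap.congr_fun hb x

end Restrict

section Resolution
variable {R : Type u} [CommRing R]

/-- A bare-bones finite projective resolution. -/
structure Res (M : ModuleCat.{u} R) (m : ℕ) where
  X : ℕ → ModuleCat.{u} R
  d : ∀ n, X (n + 1) ⟶ X n
  ε : X 0 ⟶ M
  proj : ∀ n, Projective (X n)
  ex : ∀ n, Function.Exact (d (n + 1)).hom (d n).hom
  ex0 : Function.Exact (d 0).hom ε.hom
  surj : Function.Surjective ε.hom
  zero : ∀ i, m < i → Limits.IsZero (X i)

lemma Res.d_comp {M : ModuleCat.{u} R} {m : ℕ} (r : Res M m) (n : ℕ) :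
    r.d (n + 1) ≫ r.d n = 0 := by
  ext x; exact (r.ex n).apply_apply_eq_zero x

lemma Res.d_comp0 {M : ModuleCat.{u} R} {m : ℕ} (r : Res M m) :
    r.d 0 ≫ r.ε = 0 := by
  ext x; exact r.ex0.apply_apply_eq_zero x

/-- base -/
noncomputable def Res.base (M : ModuleCat.{u} R) [Projective M] : Res M 0 where
  X := fun n => match n with
    | 0 => M
    | _ + 1 => ModuleCat.of R PUnit
  d := fun _ => 0
  ε := 𝟙 M
  proj := fun n => match n with
    | 0 => inferInstance
    | _ + 1 => (IsProjective.iff_projective (PUnit.{u+1})).1 inferInstance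
  ex := fun n x => ⟨fun _ => ⟨0, Subsingleton.elim (α := PUnit) _ _⟩, fun _ => rfl⟩
  ex0 := fun x => ⟨fun h => ⟨0, h.symm⟩, fun ⟨y, hy⟩ => hy ▸ rfl⟩
  surj := fun x => ⟨x, rfl⟩
  zero := fun i hi => match i with
    | 0 => absurd hi (lt_irrefl 0)
    | _ + 1 => ModuleCat.isZero_of_subsingleton (ModuleCat.of R PUnit)

/-- splice -/
noncomputable def Res.splice {A B C : Type u} [AddCommGroup A] [AddCommGroup B] [AddCommGroup C]
    [Module R A] [Module R B] [Module R C] {f : A →ₗ[R] B} {g : B →ₗ[R] C} (h : SES f g)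
    [Module.Projective R B] {m : ℕ} (r : Res (ModuleCat.of R A) m) :
    Res (ModuleCat.of R C) (m + 1) where
  X := fun n => match n with
    | 0 => ModuleCat.of R B
    | n + 1 => r.X n
  d := fun n => match n with
    | 0 => r.ε ≫ ModuleCat.ofHom f
    | n + 1 => r.d n
  ε := ModuleCat.ofHom g
  proj := fun n => match n with
    | 0 => (IsProjective.iff_projective B).1 inferInstance
    | n + 1 => r.proj n
  ex := fun n => match n with
    | 0 => fun x => ⟨fun hx => (r.ex0 x).1 (h.inj (hx.trans (map_zero f).symm)),
        fun hx => (congrArg f ((r.ex0 x).2 hx)).trans (map_zero f)⟩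
    | n + 1 => r.ex n
  ex0 := fun x => ⟨fun hx => by
      obtain ⟨y, rfl⟩ := (h.exact x).1 hx
      obtain ⟨z, rfl⟩ := r.surj y
      exact ⟨z, rfl⟩, fun ⟨y, hy⟩ => by
      rw [← hy]; exact h.exact.apply_apply_eq_zero _⟩
  surj := h.surj
  zero := fun i hi => match i with
    | 0 => absurd hi (Nat.not_lt_zero _)
    | i + 1 => r.zero i (Nat.lt_of_succ_lt_succ hi)

lemma exists_res (m : ℕ) : ∀ (A : Type u) [AddCommGroup A] [Module R A]
    (_ : VExt R A (m + 1)), Nonempty (Res (ModuleCat.of R A) m) := by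
  induction m with
  | zero =>
    intro A _ _ h
    have := h.projective
    have : Projective (ModuleCat.of R A) := (IsProjective.iff_projective A).1 inferInstance
    exact ⟨Res.base _⟩
  | succ m ih =>
    intro A _ _ h
    have hs := ses_ker (Finsupp.linearCombination R (id : A → A))
      (Finsupp.linearCombination_id_surjective R A)
    obtain ⟨r⟩ := ih _ (VExt.shift hs h)
    exact ⟨r.splice hs⟩

/-- The chain complex. -/
noncomputable def Res.cx {M : ModuleCat.{u} R} {m : ℕ} (r : Res M m) :
    ChainComplex (ModuleCat.{u} R) ℕ := ChainComplex.of r.X r.d r.d_comp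

lemma Res.cx_d {M : ModuleCat.{u} R} {m : ℕ} (r : Res M m) (n : ℕ) :
    r.cx.d (n + 1) n = r.d n := ChainComplex.of_d r.X r.d n

/-- A genuine projective resolution. -/
noncomputable def Res.toPR {M : ModuleCat.{u} R} {m : ℕ} (r : Res M m) : ProjectiveResolution M where
  complex := r.cx
  projective := r.proj
  π := (ChainComplex.toSingle₀Equiv _ _).symm ⟨r.ε, by
    rw [r.cx_d 0]; exact r.d_comp0⟩
  quasiIso := ⟨fun n => by
    cases n with
    | zero =>
      rw [ChainComplex.quasiIsoAt₀_iff, ShortComplex.quasiIso_iff_of_zeros']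
      · refine ⟨?_, ?_⟩
        · rw [ShortComplex.ShortExact.moduleCat_exact_iff_function_exact]
          have h1 := r.ex0
          rw [← r.cx_d 0] at h1
          exact h1
        · exact (ModuleCat.epi_iff_surjective _).2 r.surj
      all_goals rfl
    | succ n =>
      rw [quasiIsoAt_iff_exactAt']
      · rw [HomologicalComplex.exactAt_iff' _ (n + 1 + 1) (n + 1) n (by simp) (by simp)]
        rw [ShortComplex.ShortExact.moduleCat_exact_iff_function_exact]
        have h1 := r.ex n
        rw [← r.cx_d n, ← r.cx_d (n + 1)] at h1
        exact h1
      · apply ChainComplex.exactAt_succ_single_obj⟩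

lemma exists_pr {A : Type u} [AddCommGroup A] [Module R A] {m : ℕ} (h : VExt R A (m + 1)) :
    ∃ P : ProjectiveResolution (ModuleCat.of R A), ∀ i : ℕ, m < i →
      Limits.IsZero (P.complex.X i) := by
  obtain ⟨r⟩ := exists_res m A h
  exact ⟨r.toPR, r.zero⟩

lemma vext_of_pr {A : Type u} [AddCommGroup A] [Module R A] {m i : ℕ} (hi : m < i)
    (h : ∃ P : ProjectiveResolution (ModuleCat.of R A), ∀ i : ℕ, m < i →
      Limits.IsZero (P.complex.X i)) : VExt R A i := by
  obtain ⟨P, hP⟩ := h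
  intro N _ _ α
  obtain ⟨f, hf, rfl⟩ := P.extMk_surjective α (i + 1) rfl
  obtain rfl := (hP i hi).eq_of_src f 0
  exact P.extMk_zero _ _

end Resolution
end AraPd

end

section
open CategoryTheory

namespace AraPd
universe u

section Van
variable {R : Type u} [CommRing R]

/-- Multiplication maps between cyclic modules. -/
def mq (J₁ J₂ : Ideal R) (f : R) (h : ∀ x ∈ J₁, f * x ∈ J₂) : (R ⧸ J₁) →ₗ[R] (R ⧸ J₂) :=
  Submodule.mapQ J₁ J₂ (LinearMap.mulLeft R f) h

lemma mq_mk (J₁ J₂ : Ideal R) (f : R) (h : ∀ x ∈ J₁, f * x ∈ J₂) (x : R) :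
    mq J₁ J₂ f h (Ideal.Quotient.mk J₁ x) = Ideal.Quotient.mk J₂ (f * x) := rfl

lemma q_ext {J : Ideal R} {M : Type*} [AddCommGroup M] [Module R M] {f g : (R ⧸ J) →ₗ[R] M}
    (h : ∀ x : R, f (Ideal.Quotient.mk J x) = g (Ideal.Quotient.mk J x)) : f = g := by
  refine LinearMap.ext fun x => ?_
  obtain ⟨x, rfl⟩ := Ideal.Quotient.mk_surjective x
  exact h x

lemma q_smul (J : Ideal R) (r x : R) :
    r • Ideal.Quotient.mk J x = Ideal.Quotient.mk J (r * x) := rfl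

lemma mq_comp (J₁ J₂ J₃ : Ideal R) (f g : R) (h : ∀ x ∈ J₁, f * x ∈ J₂) (h' : ∀ x ∈ J₂, g * x ∈ J₃)
    (h'' : ∀ x ∈ J₁, (g * f) * x ∈ J₃) :
    mq J₂ J₃ g h' ∘ₗ mq J₁ J₂ f h = mq J₁ J₃ (g * f) h'' := by
  refine q_ext fun x => ?_
  simp only [LinearMap.comp_apply, mq_mk, mul_assoc]

lemma mq_congr {J₁ J₂ : Ideal R} {f g : R} {h : ∀ x ∈ J₁, f * x ∈ J₂} {h' : ∀ x ∈ J₁, g * x ∈ J₂}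
    (e : f = g) : mq J₁ J₂ f h = mq J₁ J₂ g h' := by
  subst e; rfl

/-- projection -/
abbrev qm {J₁ J₂ : Ideal R} (h : J₁ ≤ J₂) : (R ⧸ J₁) →ₗ[R] (R ⧸ J₂) :=
  mq J₁ J₂ 1 (fun x hx => by rw [one_mul]; exact h hx)

lemma qm_mk {J₁ J₂ : Ideal R} (h : J₁ ≤ J₂) (x : R) :
    qm h (Ideal.Quotient.mk J₁ x) = Ideal.Quotient.mk J₂ x := by
  rw [mq_mk, one_mul]

lemma qm_surj {J₁ J₂ : Ideal R} (h : J₁ ≤ J₂) : Function.Surjective (qm h) := by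
  intro x
  obtain ⟨x, rfl⟩ := Ideal.Quotient.mk_surjective x
  exact ⟨Ideal.Quotient.mk J₁ x, qm_mk h x⟩

lemma qm_comp {J₁ J₂ J₃ : Ideal R} (h : J₁ ≤ J₂) (h' : J₂ ≤ J₃) :
    qm h' ∘ₗ qm h = qm (h.trans h') := by
  refine q_ext fun x => ?_
  rw [LinearMap.comp_apply, qm_mk, qm_mk, qm_mk]

/-- colon ideal -/
def cln (J : Ideal R) (f : R) : Ideal R := Submodule.comap (LinearMap.mulLeft R f) J

lemma mem_cln {J : Ideal R} {f x : R} : x ∈ cln J f ↔ f * x ∈ J := Iff.rfl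

lemma ses_cln (J : Ideal R) (f : R) :
    SES (mq (cln J f) J f (fun _ h => mem_cln.1 h)) (qm (le_sup_left : J ≤ J ⊔ Ideal.span {f})) where
  inj := by
    rw [← LinearMap.ker_eq_bot, LinearMap.ker_eq_bot']
    intro x hx
    obtain ⟨x, rfl⟩ := Ideal.Quotient.mk_surjective x
    rw [mq_mk, Ideal.Quotient.eq_zero_iff_mem] at hx
    exact Ideal.Quotient.eq_zero_iff_mem.2 hx
  exact := by
    intro x
    obtain ⟨x, rfl⟩ := Ideal.Quotient.mk_surjective x
    rw [qm_mk, Ideal.Quotient.eq_zero_iff_mem]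
    constructor
    · intro hx
      obtain ⟨a, ha, b, hb, rfl⟩ := Submodule.mem_sup.1 hx
      obtain ⟨c, rfl⟩ := Ideal.mem_span_singleton'.1 hb
      refine ⟨Ideal.Quotient.mk _ c, ?_⟩
      rw [mq_mk, Ideal.Quotient.eq]
      have : f * c - (a + c * f) = -a := by ring
      rw [this]; exact J.neg_mem ha
    · rintro ⟨y, hy⟩
      obtain ⟨y, rfl⟩ := Ideal.Quotient.mk_surjective y
      rw [mq_mk, Ideal.Quotient.eq] at hy
      have : x = -(f * y - x) + f * y := by ring
      rw [this]
      exact Ideal.add_mem _ (neg_mem (Ideal.mem_sup_left hy))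
        (Ideal.mem_sup_right (Ideal.mul_mem_right _ _ (Ideal.mem_span_singleton_self f)))
  surj := qm_surj _

lemma cln_stable [IsNoetherianRing R] (J : Ideal R) (f : R) :
    ∃ j, ∀ m, j ≤ m → cln J (f ^ m) ≤ cln J (f ^ j) := by
  let c : ℕ →o Ideal R := ⟨fun n => cln J (f ^ n), by
    intro a b hab x hx
    rw [mem_cln] at hx ⊢
    rw [← Nat.sub_add_cancel hab, pow_add, mul_assoc]
    exact J.mul_mem_left _ hx⟩
  obtain ⟨j, hj⟩ := monotone_stabilizes_iff_noetherian.2 ‹IsNoetherianRing R› c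
  exact ⟨j, fun m hm => (hj m hm).ge⟩

theorem van [IsNoetherianRing R] (s : ℕ) : ∀ (J : Ideal R) (a : Fin s → R),
    (Ideal.span (Set.range a)).radical = J.radical →
    ∃ (J' : Ideal R) (h : J' ≤ J), J ≤ J'.radical ∧ ∀ i, s < i → ZExt (qm h) i := by
  induction s with
  | zero =>
    intro J a ha
    refine ⟨⊥, bot_le, ?_, ?_⟩
    · have : Ideal.span (Set.range a) = ⊥ := by simp
      rw [this] at ha
      exact Ideal.le_radical.trans ha.ge
    · intro i hi N _ _ α
      obtain ⟨i, rfl⟩ : ∃ k, i = k + 1 := ⟨i - 1, by omega⟩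
      have : Module.Projective R (R ⧸ (⊥ : Ideal R)) :=
        Module.Projective.of_equiv (Submodule.quotEquivOfEqBot (⊥ : Ideal R) rfl).symm
      exact ext_proj _
  | succ s ih =>
    intro J a ha
    have hk : ∃ k, ∀ j, a j ^ k ∈ J := by
      have : ∀ j, ∃ k, a j ^ k ∈ J := fun j => by
        have : a j ∈ J.radical := by
          rw [← ha]; exact Ideal.le_radical (Ideal.subset_span ⟨j, rfl⟩)
        exact this
      choose k hk using this
      refine ⟨∑ j, k j, fun j => ?_⟩
      exact J.pow_mem_of_pow_mem (hk j) (Finset.single_le_sum (f := k) (fun _ _ => Nat.zero_le _)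
        (Finset.mem_univ j))
    obtain ⟨k, hk⟩ := hk
    let b : Fin s → R := fun j => a j.castSucc ^ k
    let f := a (Fin.last s) ^ k
    let J₀ := Ideal.span (Set.range b)
    have hJ₀ : J₀ ≤ J := Ideal.span_le.2 (by rintro _ ⟨j, rfl⟩; exact hk _)
    obtain ⟨J₁, h₁, r₁, z₁⟩ := ih J₀ b rfl
    have er₁ : J₁.radical = J₀.radical :=
      le_antisymm (Ideal.radical_mono h₁) (Ideal.radical_le_radical_iff.2 r₁)
    obtain ⟨J₂, h₂, r₂, z₂⟩ := ih J₁ b er₁.symm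
    obtain ⟨j₀, hj₀⟩ := cln_stable J₂ f
    let j := j₀ + 1
    have hj : cln J₂ (f ^ (2 * j)) ≤ cln J₂ (f ^ j) := by
      intro x hx
      have := hj₀ (2 * j) (by omega) hx
      rw [mem_cln] at this ⊢
      have e : f ^ j * x = f * (f ^ j₀ * x) := by simp only [j]; ring
      rw [e]
      exact J₂.mul_mem_left _ this
    have hfJ : Ideal.span {f} ≤ J := (Ideal.span_singleton_le_iff_mem _).2 (hk _)
    have hJ₁J : J₁ ⊔ Ideal.span {f} ≤ J := sup_le (h₁.trans hJ₀) hfJ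
    have hJ' : J₂ ⊔ Ideal.span {f ^ (2 * j)} ≤ J₁ ⊔ Ideal.span {f} := by
      refine sup_le_sup h₂ ?_
      rw [Ideal.span_singleton_le_iff_mem]
      exact Ideal.pow_mem_of_mem _ (Ideal.mem_span_singleton_self f) _ (by omega)
    refine ⟨J₂ ⊔ Ideal.span {f ^ (2 * j)}, hJ'.trans hJ₁J, ?_, ?_⟩
    · refine Ideal.le_radical.trans ?_
      rw [← ha, Ideal.radical_le_radical_iff, Ideal.span_le]
      rintro _ ⟨l, rfl⟩
      rcases Fin.eq_castSucc_or_eq_last l with ⟨l, rfl⟩ | rfl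
      rotate_left
      · refine ⟨k * (2 * j), Ideal.mem_sup_right ?_⟩
        rw [pow_mul (a (Fin.last s)) k]
        exact Ideal.mem_span_singleton_self (f ^ (2 * j))
      · have : b l ∈ (J₂ ⊔ Ideal.span {f ^ (2 * j)}).radical := by
          have h3 : J₀ ≤ J₂.radical := r₁.trans (Ideal.radical_le_radical_iff.2 r₂)
          exact Ideal.radical_mono le_sup_left (h3 (Ideal.subset_span ⟨l, rfl⟩))
        exact Ideal.mem_radical_of_pow_mem (m := k) this
    · intro i hi N _ _ α
      obtain ⟨i, rfl⟩ : ∃ k, i = k + 1 + 1 := ⟨i - 2, by omega⟩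
      rw [← qm_comp hJ' hJ₁J, ← pull_pull]
      have e1 : pull (qm (le_sup_left : J₁ ≤ J₁ ⊔ Ideal.span {f})) (pull (qm hJ₁J) α) = 0 := by
        rw [pull_pull, qm_comp, ← qm_comp h₁ hJ₀, ← pull_pull]
        exact z₁ _ (by omega) N _
      obtain ⟨β, hβ⟩ := (ses_cln J₁ f).exact3 _ e1
      rw [← hβ]
      have hh : ∀ x ∈ cln J₂ (f ^ j), f ^ j₀ * x ∈ cln J₁ f := by
        intro x hx
        rw [mem_cln] at hx ⊢
        have e : f * (f ^ j₀ * x) = f ^ j * x := by simp only [j]; ring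
        rw [e]; exact h₂ hx
      have ha' : ∀ x ∈ cln J₂ (f ^ (2 * j)), f ^ (2 * j₀ + 1) * x ∈ cln J₁ f := by
        intro x hx
        rw [mem_cln] at hx ⊢
        have e : f * (f ^ (2 * j₀ + 1) * x) = f ^ (2 * j) * x := by simp only [j]; ring
        rw [e]; exact h₂ hx
      rw [← (ses_cln J₂ (f ^ (2 * j))).δ_nat (ses_cln J₁ f) (mq _ _ (f ^ (2 * j₀ + 1)) ha') (qm h₂)
        (qm hJ') ?_ ?_]
      · have hle : J₂ ≤ cln J₂ (f ^ j) := fun x hx => J₂.mul_mem_left _ hx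
        set β₁ := pull (mq _ _ (f ^ j₀) hh) β with hβ₁
        have e2 : pull (qm hle) β₁ = 0 := by
          have hg : ∀ x ∈ J₁, f ^ j₀ * x ∈ cln J₁ f := fun x hx =>
            (cln J₁ f).mul_mem_left _ (J₁.mul_mem_left _ hx)
          have e3 : mq _ _ (f ^ j₀) hh ∘ₗ qm hle = mq _ _ (f ^ j₀) hg ∘ₗ qm h₂ := by
            refine q_ext fun x => ?_
            simp only [LinearMap.comp_apply, mq_mk, one_mul]
          rw [hβ₁, pull_pull, e3, ← pull_pull]
          exact z₂ _ (by omega) N _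
        have hs := ses_ker (qm hle) (qm_surj hle)
        obtain ⟨γ, hγ⟩ := hs.exact3 β₁ e2
        have e4 : f ^ j • β₁ = 0 := by
          rw [← hγ, ← SES.δ_smul, smul_eq_zero_of_killed_left, SES.δ_zero]
          rintro ⟨x, hx⟩
          obtain ⟨x, rfl⟩ := Ideal.Quotient.mk_surjective x
          rw [LinearMap.mem_ker, qm_mk, Ideal.Quotient.eq_zero_iff_mem] at hx
          refine Subtype.ext ?_
          change f ^ j • Ideal.Quotient.mk _ x = 0
          rw [q_smul, Ideal.Quotient.eq_zero_iff_mem]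
          exact hx
        have e5 : mq _ _ (f ^ (2 * j₀ + 1)) ha' = f ^ j • (mq _ _ (f ^ j₀) hh ∘ₗ qm hj) := by
          refine q_ext fun x => ?_
          rw [LinearMap.smul_apply, LinearMap.comp_apply, mq_mk, mq_mk, mq_mk, q_smul]
          congr 1
          simp only [j]; ring
        rw [e5, pull_smul, ← pull_pull, ← hβ₁, ← pull_smul_right, e4, pull_zero, SES.δ_zero]
      · refine q_ext fun x => ?_
        simp only [LinearMap.comp_apply, mq_mk]
        congr 1
        ring
      · refine q_ext fun x => ?_
        simp only [LinearMap.comp_apply, mq_mk]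

end Van
end AraPd

end

section
open CategoryTheory MvPolynomial

namespace AraPd
universe u v

section Generic
variable {S T : Type u} [CommRing S] [CommRing T] [Algebra S T]

lemma proj_of_dual {ι : Type*} [Fintype ι] (r : ι → (T →ₗ[S] S)) (t : ι → T)
    (h : ∀ g, ∑ a, r a g • t a = g) : Module.Projective S T := by
  classical
  refine Module.Projective.of_split (M := ι → S) (LinearMap.pi r)
    (∑ a, (LinearMap.toSpanSingleton S T (t a)) ∘ₗ LinearMap.proj a) (LinearMap.ext fun g => ?_)
  simpa using h g

/-- `S/I → T/J` -/
def phiBar (I : Ideal S) (J : Ideal T) (h : ∀ x ∈ I, algebraMap S T x ∈ J) :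
    (S ⧸ I) →ₗ[S] (T ⧸ J) :=
  Submodule.liftQ I (Algebra.linearMap S (T ⧸ J)) (fun x hx =>
    Ideal.Quotient.eq_zero_iff_mem.2 (h x hx))

lemma phiBar_mk (I : Ideal S) (J : Ideal T) (h : ∀ x ∈ I, algebraMap S T x ∈ J) (x : S) :
    phiBar I J h (Ideal.Quotient.mk I x) = Ideal.Quotient.mk J (algebraMap S T x) := rfl

/-- `T/J → S/I` -/
def rhoBar (r : T →ₗ[S] S) (I : Ideal S) (J : Ideal T) (h : ∀ x ∈ J, r x ∈ I) :
    (T ⧸ J) →ₗ[S] (S ⧸ I) :=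
  (Submodule.liftQ (J.restrictScalars S) ((Submodule.mkQ I) ∘ₗ r) (fun x hx =>
    Ideal.Quotient.eq_zero_iff_mem.2 (h x hx))) ∘ₗ
    (Submodule.Quotient.restrictScalarsEquiv S J).symm.toLinearMap

lemma rhoBar_mk (r : T →ₗ[S] S) (I : Ideal S) (J : Ideal T) (h : ∀ x ∈ J, r x ∈ I) (x : T) :
    rhoBar r I J h (Ideal.Quotient.mk J x) = Ideal.Quotient.mk I (r x) := rfl

theorem trick [Module.Projective S T] (I : Ideal S) (J J' : Ideal T) (t : T)
    (ht : ∀ x ∈ J', t * x ∈ J) (h1 : ∀ x ∈ I, algebraMap S T x ∈ J')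
    (r : T →ₗ[S] S) (h2 : ∀ x ∈ J, r x ∈ I) (hr : r t = 1) {i : ℕ}
    (hz : ZExt (mq J' J t ht) (i + 1)) : VExt S (S ⧸ I) (i + 1) := by
  have hz2 := ZExt.restrict (R := S) i _ hz
  rw [vExt_iff]
  have e : rhoBar r I J h2 ∘ₗ ((mq J' J t ht).restrictScalars S ∘ₗ phiBar I J' h1) =
      LinearMap.id := by
    refine q_ext fun x => ?_
    rw [LinearMap.comp_apply, LinearMap.comp_apply, phiBar_mk, LinearMap.restrictScalars_apply,
      mq_mk, rhoBar_mk, mul_comm, ← Algebra.smul_def, map_smul, hr, smul_eq_mul, mul_one]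
    rfl
  rw [← e]
  exact (hz2.comp_right _).comp_left _

theorem transport {S T : Type u} [CommRing S] [CommRing T] (e : S ≃+* T) (I I' : Ideal S)
    (J J' : Ideal T)
    (hJ : ∀ x, x ∈ I ↔ e x ∈ J) (hJ' : ∀ x, x ∈ I' ↔ e x ∈ J') (g : S)
    (hg : ∀ x ∈ I, g * x ∈ I') {i : ℕ}
    (hz : ZExt (mq I I' g hg) (i + 1)) :
    ∃ h, ZExt (mq J J' (e g) h) (i + 1) := by
  letI : Algebra T S := e.symm.toRingHom.toAlgebra
  have hal : ∀ x : T, algebraMap T S x = e.symm x := fun _ => rfl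
  let r : S →ₗ[T] T :=
    { toFun := e
      map_add' := map_add e
      map_smul' := fun t s => by
        rw [Algebra.smul_def, map_mul, hal, e.apply_symm_apply]; rfl }
  have : Module.Projective T S := by
    refine proj_of_dual (ι := Unit) (fun _ => r) (fun _ => 1) (fun g => ?_)
    rw [Fintype.sum_unique]
    rw [Algebra.smul_def, mul_one, hal]
    exact e.symm_apply_apply g
  have hz2 := ZExt.restrict (R := T) i _ hz
  have h1 : ∀ x ∈ J, algebraMap T S x ∈ I := fun x hx => by
    rw [hJ, hal, e.apply_symm_apply]; exact hx
  have h2 : ∀ x ∈ I', r x ∈ J' := fun x hx => (hJ' x).1 hx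
  have h3 : ∀ x ∈ J, e g * x ∈ J' := fun x hx => by
    have := (hJ' _).1 (hg _ (h1 x hx))
    rwa [map_mul, hal, e.apply_symm_apply] at this
  refine ⟨h3, ?_⟩
  have e : rhoBar r J' I' h2 ∘ₗ ((mq I I' g hg).restrictScalars T
      ∘ₗ phiBar J I h1) = mq J J' (e g) h3 := by
    refine q_ext fun x => ?_
    rw [LinearMap.comp_apply, LinearMap.comp_apply, phiBar_mk, LinearMap.restrictScalars_apply,
      mq_mk, rhoBar_mk, mq_mk]
    congr 1
    change e (g * algebraMap T S x) = _
    rw [map_mul, hal, e.apply_symm_apply]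
  rw [← e]
  exact (hz2.comp_right _).comp_left _

end Generic

section Expand
variable {σ : Type u} {K : Type v} [Field K]

lemma smul_add_inj {q : ℕ} (hq : 0 < q) (a : σ →₀ ℕ) :
    Function.Injective (fun w : σ →₀ ℕ => q • w + a) := by
  intro w w' h
  have h' := add_right_cancel h
  ext v
  have := DFunLike.congr_fun h' v
  simp only [Finsupp.smul_apply, smul_eq_mul] at this
  exact Nat.eq_of_mul_eq_mul_left hq this

/-- Section-like maps of the expand map. -/
noncomputable def rho (q : ℕ) (hq : 0 < q) (a : σ →₀ ℕ) (g : MvPolynomial σ K) :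
    MvPolynomial σ K :=
  AddMonoidAlgebra.ofCoeff
    (Finsupp.comapDomain (fun w : σ →₀ ℕ => q • w + a) (AddMonoidAlgebra.coeff g) (smul_add_inj hq a).injOn)

lemma coeff_rho (q : ℕ) (hq : 0 < q) (a : σ →₀ ℕ) (g : MvPolynomial σ K) (w : σ →₀ ℕ) :
    coeff w (rho q hq a g) = coeff (q • w + a) g := rfl

lemma rho_add (q : ℕ) (hq : 0 < q) (a : σ →₀ ℕ) (g g' : MvPolynomial σ K) :
    rho q hq a (g + g') = rho q hq a g + rho q hq a g' := by
  ext w; simp [coeff_rho]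

lemma rho_expand_mul (q : ℕ) (hq : 0 < q) (a : σ →₀ ℕ) (ha : ∀ v, a v < q)
    (f : MvPolynomial σ K) : ∀ g : MvPolynomial σ K,
    rho q hq a (expand q f * g) = f * rho q hq a g := by
  classical
  induction f using MvPolynomial.induction_on with
  | C c => intro g; ext w; simp [coeff_rho, coeff_C_mul]
  | add f f' hf hf' => intro g; rw [map_add, add_mul, add_mul, rho_add, hf, hf']
  | mul_X f v hf =>
    intro g
    rw [map_mul, mul_assoc, mul_assoc, hf, expand_X]
    congr 1
    ext w
    rw [coeff_rho, X_pow_eq_monomial, coeff_monomial_mul', mul_comm (X v), coeff_mul_X']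
    simp only [Finsupp.single_le_iff, Finsupp.add_apply, Finsupp.smul_apply, smul_eq_mul,
      Finsupp.mem_support_iff, one_mul]
    have hav := ha v
    by_cases hw : w v = 0
    · rw [if_neg, if_neg (by simpa using hw)]
      rw [hw]; omega
    · rw [if_pos, if_pos hw, coeff_rho]
      · congr 1
        ext v'
        simp only [Finsupp.coe_tsub, Finsupp.coe_add, Finsupp.coe_smul, Pi.sub_apply, Pi.add_apply,
          Pi.smul_apply, smul_eq_mul]
        by_cases h : v = v'
        · subst h
          simp only [Finsupp.single_eq_same]
          obtain ⟨k, hk⟩ := Nat.exists_eq_succ_of_ne_zero hw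
          rw [hk, Nat.succ_sub_one, Nat.mul_succ]; omega
        · simp [Finsupp.single_apply, h]
      · have : q * 1 ≤ q * w v := Nat.mul_le_mul_left q (Nat.one_le_iff_ne_zero.2 hw)
        omega

/-- The polynomial ring, as an algebra over itself via `expand`. -/
def Fr (_q : ℕ) (σ : Type u) (K : Type v) [Field K] : Type (max u v) := MvPolynomial σ K

noncomputable instance (q : ℕ) : CommRing (Fr q σ K) :=
  inferInstanceAs (CommRing (MvPolynomial σ K))

/-- identity -/
noncomputable def eF (q : ℕ) : MvPolynomial σ K ≃+* Fr q σ K := RingEquiv.refl (MvPolynomial σ K)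

instance (q : ℕ) [Finite σ] : IsNoetherianRing (Fr q σ K) :=
  isNoetherianRing_of_ringEquiv _ (eF q)

noncomputable instance (q : ℕ) : Algebra (MvPolynomial σ K) (Fr q σ K) :=
  ((eF q).toRingHom.comp
    (expand q : MvPolynomial σ K →ₐ[K] MvPolynomial σ K).toRingHom).toAlgebra

lemma fr_alg (q : ℕ) (f : MvPolynomial σ K) :
    algebraMap (MvPolynomial σ K) (Fr q σ K) f = eF q (expand q f) := rfl

/-- linear version -/
noncomputable def rhoL (q : ℕ) (hq : 0 < q) (a : σ →₀ ℕ) (ha : ∀ v, a v < q) :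
    Fr q σ K →ₗ[MvPolynomial σ K] MvPolynomial σ K where
  toFun := fun t => rho q hq a ((eF q).symm t)
  map_add' := fun x y => by rw [map_add, rho_add]
  map_smul' f g := by
    rw [Algebra.smul_def, map_mul, fr_alg, RingEquiv.symm_apply_apply, rho_expand_mul q hq a ha]
    rfl

lemma rhoL_apply (q : ℕ) (hq : 0 < q) (a : σ →₀ ℕ) (ha : ∀ v, a v < q) (t : Fr q σ K) :
    rhoL q hq a ha t = rho q hq a ((eF q).symm t) := rfl

lemma rho_monomial [Fintype σ] (q : ℕ) (hq : 0 < q) (a : σ →₀ ℕ) (ha : ∀ v, a v < q)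
    (u : σ →₀ ℕ) (c : K) :
    expand q (rho q hq a (monomial u c)) * monomial a 1 =
      if (∀ v, a v = u v % q) then monomial u c else 0 := by
  classical
  split_ifs with h
  · have hu : u = q • (Finsupp.equivFunOnFinite.symm fun v => u v / q) + a := by
      ext v
      simp only [Finsupp.coe_add, Finsupp.coe_smul, Pi.add_apply, Pi.smul_apply, smul_eq_mul,
        Finsupp.equivFunOnFinite_symm_apply_apply, h]
      exact (Nat.div_add_mod _ _).symm
    have : rho q hq a (monomial u c) =
        monomial (Finsupp.equivFunOnFinite.symm fun v => u v / q) c := by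
      ext w
      rw [coeff_rho, coeff_monomial, coeff_monomial]
      congr 1
      nth_rewrite 1 [hu]
      exact propext (smul_add_inj hq a).eq_iff
    rw [this, expand_monomial, monomial_mul, mul_one, ← hu]
  · have : rho q hq a (monomial u c) = 0 := by
      ext w
      rw [coeff_rho, coeff_monomial, coeff_zero, if_neg]
      rintro rfl
      apply h
      intro v
      simp [Nat.add_mod, Nat.mod_eq_of_lt (ha v)]
    rw [this, map_zero, zero_mul]

lemma sum_rho [Fintype σ] [DecidableEq σ] (q : ℕ) (hq : 0 < q) (g : MvPolynomial σ K) :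
    ∑ a : σ → Fin q, expand q (rho q hq (Finsupp.equivFunOnFinite.symm fun v => (a v : ℕ)) g) *
      monomial (Finsupp.equivFunOnFinite.symm fun v => (a v : ℕ)) 1 = g := by
  induction g using MvPolynomial.induction_on' with
  | add g g' h h' =>
    simp only [rho_add, map_add, add_mul, Finset.sum_add_distrib]
    rw [h, h']
  | monomial u c =>
    rw [Finset.sum_eq_single (fun v => ⟨u v % q, Nat.mod_lt _ hq⟩)]
    · rw [rho_monomial q hq _ (fun v => Nat.mod_lt _ hq), if_pos]
      intro v; rfl
    · intro a _ ha
      rw [rho_monomial q hq _ (fun v => (a v).2), if_neg]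
      intro h
      apply ha
      funext v
      exact Fin.ext (h v)
    · intro h; exact absurd (Finset.mem_univ _) h

instance frProj [Finite σ] (q : ℕ) [hq : Fact (0 < q)] :
    Module.Projective (MvPolynomial σ K) (Fr q σ K) := by
  classical
  have := Fintype.ofFinite σ
  let A : (σ → Fin q) → (σ →₀ ℕ) := fun a => Finsupp.equivFunOnFinite.symm fun v => (a v : ℕ)
  refine proj_of_dual (ι := σ → Fin q) (fun a => rhoL q hq.out (A a) (fun v => (a v).2))
    (fun a => eF q (monomial (A a) 1)) (fun g => ?_)
  apply (eF q).symm.injective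
  refine Eq.trans ?_ (sum_rho q hq.out ((eF q).symm g))
  rw [map_sum]
  refine Finset.sum_congr rfl fun a _ => ?_
  rw [Algebra.smul_def, map_mul, fr_alg, RingEquiv.symm_apply_apply, RingEquiv.symm_apply_apply]
  rfl

/-- Squarefree monomial ideals: membership is detected by supports of monomials. -/
def IsSq (I : Ideal (MvPolynomial σ K)) : Prop :=
  ∃ N : Set (Finset σ), ∀ g, g ∈ I ↔ ∀ u ∈ g.support, u.support ∈ N

lemma IsSq.expand_mem {I : Ideal (MvPolynomial σ K)} (h : IsSq I) {q : ℕ} {g : MvPolynomial σ K}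
    (hg : g ∈ I) : expand q g ∈ I ^ q := by
  classical
  obtain ⟨N, hN⟩ := h
  rw [g.as_sum, map_sum]
  refine Ideal.sum_mem _ fun u hu => ?_
  rw [expand_monomial]
  have h1 : (monomial u 1 : MvPolynomial σ K) ∈ I := by
    rw [hN]
    intro w hw
    rw [support_monomial, if_neg one_ne_zero, Finset.mem_singleton] at hw
    subst hw
    exact (hN g).1 hg _ hu
  have h2 : monomial (q • u) (coeff u g) = C (coeff u g) * (monomial u 1) ^ q := by
    rw [monomial_pow, C_mul_monomial, one_pow, mul_one]
  rw [h2]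
  exact Ideal.mul_mem_left _ _ (Ideal.pow_mem_pow h1 q)

lemma IsSq.rho_mem {I : Ideal (MvPolynomial σ K)} (h : IsSq I) {q : ℕ} (hq : 0 < q)
    {g : MvPolynomial σ K} (hg : g ∈ I) : rho q hq 0 g ∈ I := by
  classical
  obtain ⟨N, hN⟩ := h
  rw [hN] at hg ⊢
  intro u hu
  rw [mem_support_iff, coeff_rho, add_zero] at hu
  have h1 := hg (q • u) (mem_support_iff.2 hu)
  have h2 : (q • u).support = u.support := by
    ext v; simp [hq.ne']
  rwa [h2] at h1

lemma rho_expand (q : ℕ) (hq : 0 < q) (g : MvPolynomial σ K) : rho q hq 0 (expand q g) = g := by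
  ext w
  rw [coeff_rho, add_zero, coeff_expand_smul q hq.ne']

/-- transported ideal -/
noncomputable def frI (q : ℕ) (I : Ideal (MvPolynomial σ K)) : Ideal (Fr q σ K) :=
  I.comap (eF q).symm.toRingHom

lemma mem_frI (q : ℕ) (I : Ideal (MvPolynomial σ K)) (x : Fr q σ K) :
    x ∈ frI q I ↔ (eF q).symm x ∈ I := Iff.rfl

theorem lyub [Finite σ] {I : Ideal (MvPolynomial σ K)} (hI : IsSq I) {s : ℕ}
    (a : Fin s → MvPolynomial σ K) (ha : (Ideal.span (Set.range a)).radical = I.radical)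
    (i : ℕ) (hi : s < i) : VExt (MvPolynomial σ K) (MvPolynomial σ K ⧸ I) i := by
  obtain ⟨J, hle, hrad, hz⟩ := van s I a ha
  obtain ⟨k, hk⟩ := Ideal.exists_pow_le_of_le_radical_of_fg hrad (IsNoetherian.noetherian I)
  set q := k + 1 with hqd
  have hq : 0 < q := Nat.succ_pos _
  have : Fact (0 < q) := ⟨hq⟩
  obtain ⟨i, rfl⟩ : ∃ k, i = k + 1 := ⟨i - 1, by omega⟩
  obtain ⟨h3, hz'⟩ := transport (eF q) J I (frI q J) (frI q I)
    (fun x => by rw [mem_frI, RingEquiv.symm_apply_apply])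
    (fun x => by rw [mem_frI, RingEquiv.symm_apply_apply]) 1 _ (hz (i + 1) hi)
  refine trick I (frI q I) (frI q J) (eF q 1) h3 ?_ (rhoL q hq 0 (fun _ => hq)) ?_ ?_ hz'
  · intro x hx
    rw [mem_frI, fr_alg, RingEquiv.symm_apply_apply]
    exact hk (Ideal.pow_le_pow_right (Nat.le_succ k) (hI.expand_mem hx))
  · intro x hx
    rw [rhoL_apply]
    exact hI.rho_mem hq hx
  · rw [rhoL_apply, RingEquiv.symm_apply_apply]
    have := rho_expand q hq (1 : MvPolynomial σ K)
    rwa [map_one] at this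

theorem gradedNak [Finite σ] {I : Ideal (MvPolynomial σ K)} (hI : IsSq I) {i : ℕ}
    (g : MvPolynomial σ K) (hg : coeff 0 g = 1)
    (h : ∀ (N : Type (max u v)) [AddCommGroup N] [Module (MvPolynomial σ K) N]
      (α : XE (MvPolynomial σ K) (MvPolynomial σ K ⧸ I) N (i + 1)), g • α = 0) :
    VExt (MvPolynomial σ K) (MvPolynomial σ K ⧸ I) (i + 1) := by
  set q := g.totalDegree + 1 with hqd
  have hq : 0 < q := Nat.succ_pos _
  have : Fact (0 < q) := ⟨hq⟩
  have hrg : rho q hq 0 g = 1 := by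
    classical
    ext w
    rw [coeff_rho, add_zero, coeff_one]
    split_ifs with hw
    · rw [← hw, smul_zero, hg]
    · by_contra hne
      have h1 := le_totalDegree (mem_support_iff.2 hne)
      obtain ⟨v, hv⟩ : ∃ v, w v ≠ 0 := by
        by_contra hh
        push Not at hh
        exact hw (Finsupp.ext fun v => (hh v).symm)
      have h2 : (q • w) v ≤ g.totalDegree := by
        refine le_trans ?_ h1
        exact Finset.single_le_sum (f := fun v => (q • w) v) (fun _ _ => Nat.zero_le _)
          (Finsupp.mem_support_iff.2 (by simp [hq.ne', hv]))
      have h3 : q * 1 ≤ q * w v := Nat.mul_le_mul_left q (Nat.one_le_iff_ne_zero.2 hv)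
      simp only [Finsupp.smul_apply, smul_eq_mul] at h2
      omega
  have hz : ZExt (R := MvPolynomial σ K) (mq I I g (fun x hx => I.mul_mem_left _ hx)) (i + 1) := by
    intro N _ _ α
    have e : mq I I g (fun x hx => I.mul_mem_left _ hx) = g • LinearMap.id := by
      refine q_ext fun x => ?_
      rfl
    rw [e, pull_smul, pull_id, h N]
  obtain ⟨h3, hz'⟩ := transport (eF q) I I (frI q I) (frI q I)
    (fun x => by rw [mem_frI, RingEquiv.symm_apply_apply])
    (fun x => by rw [mem_frI, RingEquiv.symm_apply_apply]) g _ hz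
  refine trick I (frI q I) (frI q I) (eF q g) h3 ?_ (rhoL q hq 0 (fun _ => hq)) ?_ ?_ hz'
  · intro x hx
    rw [mem_frI, fr_alg, RingEquiv.symm_apply_apply]
    exact Ideal.pow_le_self hq.ne' (hI.expand_mem hx)
  · intro x hx
    rw [rhoL_apply]
    exact hI.rho_mem hq hx
  · rw [rhoL_apply, RingEquiv.symm_apply_apply, hrg]

end Expand
end AraPd

end

section
open CategoryTheory

namespace AraPd
universe u

section Unif
variable {R : Type u} [CommRing R]

theorem unif_base [IsNoetherianRing R] (m : Ideal R) (M : Type u) [AddCommGroup M] [Module R M]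
    [Module.Finite R M]
    (h : ∀ (W : Type u) [AddCommGroup W] [Module R W], (∀ r ∈ m, ∀ w : W, r • w = 0) →
      ∀ α : XE R M W 1, α = 0) :
    ∃ g : R, 1 - g ∈ m ∧ ∀ (N : Type u) [AddCommGroup N] [Module R N] (α : XE R M N 1),
      g • α = 0 := by
  obtain ⟨n, f, hf⟩ := Module.Finite.exists_fin' R M
  have hs := ses_ker f hf
  let Ω := LinearMap.ker f
  let B : Submodule R Ω := m • ⊤
  have hW : ∀ r ∈ m, ∀ w : Ω ⧸ B, r • w = 0 := by
    intro r hr w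
    obtain ⟨w, rfl⟩ := Submodule.mkQ_surjective B w
    rw [← map_smul]
    exact (Submodule.Quotient.mk_eq_zero B).2 (Submodule.smul_mem_smul hr trivial)
  obtain ⟨β, hβ⟩ := hs.exact1 (ofMap B.mkQ) (h _ hW _)
  obtain ⟨b, rfl⟩ := ofMap_surj β
  rw [pull_ofMap] at hβ
  have hb := ofMap_inj hβ
  obtain ⟨t, ht⟩ := Module.projective_lifting_property B.mkQ b (Submodule.mkQ_surjective B)
  let s : Module.End R Ω := t ∘ₗ Ω.subtype
  let e : Module.End R Ω := 1 - s
  have he : LinearMap.range e ≤ m • ⊤ := by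
    rintro _ ⟨x, rfl⟩
    refine (Submodule.Quotient.mk_eq_zero B).1 ?_
    change B.mkQ (x - t x) = 0
    rw [map_sub]
    have h1 := LinearMap.congr_fun ht x
    have h2 := LinearMap.congr_fun hb x
    rw [LinearMap.comp_apply] at h1 h2
    rw [h1, sub_eq_zero]
    exact h2.symm
  obtain ⟨p, hp, -, hc, ha⟩ :=
    LinearMap.exists_monic_and_natDegree_eq_and_coeff_mem_pow_and_aeval_eq_zero R e m he
  refine ⟨p.eval 1, ?_, ?_⟩
  · rw [Polynomial.eval_eq_sum_range, Finset.sum_range_succ, Polynomial.Monic.coeff_natDegree hp]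
    simp only [one_pow, mul_one]
    rw [sub_add_cancel_right]
    refine neg_mem (Ideal.sum_mem _ fun k hk => ?_)
    have hk := Finset.mem_range.1 hk
    exact Ideal.pow_le_self (by omega) (hc k)
  · intro N _ _ α
    obtain ⟨q, hq⟩ := Polynomial.X_sub_C_dvd_sub_C_eval (a := (1 : R)) (p := p)
    have h1 := congrArg (Polynomial.aeval e) hq
    rw [mul_comm] at h1
    simp only [map_sub, map_mul, ha, Polynomial.aeval_C, Polynomial.aeval_X, map_one] at h1
    have h2 : e - 1 = -s := sub_sub_cancel_left 1 s
    rw [h2] at h1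
    replace h1 : ∀ x : Ω, (p.eval 1) • x = Polynomial.aeval e q (s x) := by
      intro x
      have h5 := LinearMap.congr_fun h1 x
      change 0 - (p.eval 1) • x = Polynomial.aeval e q (-(s x)) at h5
      rw [map_neg, zero_sub] at h5
      exact neg_injective h5
    obtain ⟨γ, rfl⟩ := hs.exact3 α (ext_proj _)
    rw [← hs.δ_smul]
    have h3 : (p.eval 1) • (LinearMap.id : Ω →ₗ[R] Ω) = (Polynomial.aeval e q ∘ₗ t) ∘ₗ Ω.subtype := by
      exact LinearMap.ext h1
    have h4 : (p.eval 1) • γ = pull Ω.subtype (pull (Polynomial.aeval e q ∘ₗ t) γ) := by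
      rw [pull_pull, ← h3, pull_smul, pull_id]
    rw [h4, hs.δ_pull]

theorem unif [IsNoetherianRing R] (m : Ideal R) (i : ℕ) : ∀ (M : Type u) [AddCommGroup M]
    [Module R M] [Module.Finite R M]
    (_ : ∀ (W : Type u) [AddCommGroup W] [Module R W], (∀ r ∈ m, ∀ w : W, r • w = 0) →
      ∀ α : XE R M W (i + 1), α = 0),
    ∃ g : R, 1 - g ∈ m ∧ ∀ (N : Type u) [AddCommGroup N] [Module R N] (α : XE R M N (i + 1)),
      g • α = 0 := by
  induction i with
  | zero => intro M _ _ _ h; exact unif_base m M h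
  | succ i ih =>
    intro M _ _ _ h
    obtain ⟨n, f, hf⟩ := Module.Finite.exists_fin' R M
    have hs := ses_ker f hf
    obtain ⟨g, hg, hz⟩ := ih (LinearMap.ker f) (fun W _ _ hW α => by
      obtain ⟨β, hβ⟩ := hs.exact1 α (h W hW _)
      rw [← hβ, ext_proj β, pull_zero])
    refine ⟨g, hg, fun N _ _ α => ?_⟩
    obtain ⟨γ, rfl⟩ := hs.exact3 α (ext_proj _)
    rw [← hs.δ_smul, hz, SES.δ_zero]

end Unif
end AraPd

end

section
open CategoryTheory MvPolynomial

namespace AraPd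
universe u v

section GenSes
variable {R : Type u} [CommRing R]
variable {A B M Q : Type u}
  [AddCommGroup A] [Module R A] [AddCommGroup B] [Module R B] [AddCommGroup M] [Module R M]
  [AddCommGroup Q] [Module R Q]

lemma exists_ses (f : A →ₗ[R] B) (hf : Function.Injective f) (μ : M →ₗ[R] B) (π : M →ₗ[R] Q)
    (hπ : Function.Surjective π) (h1 : ∀ m a, μ m = f a → π m = 0)
    (h2 : ∀ m, π m = 0 → ∃ a, μ m = f a)
    (h3 : ∀ b, ∃ a m, b = f a + μ m) : ∃ θ : B →ₗ[R] Q, θ ∘ₗ μ = π ∧ SES f θ := by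
  choose ca cm hc using h3
  have huniq : ∀ b a m, b = f a + μ m → π (cm b) = π m := by
    intro b a m h
    rw [← sub_eq_zero, ← map_sub]
    refine h1 _ (a - ca b) ?_
    have := hc b
    rw [map_sub, map_sub, sub_eq_sub_iff_add_eq_add]
    have h5 := (hc b).symm.trans h
    rw [add_comm, h5]
  let θ : B →ₗ[R] Q :=
    { toFun := fun b => π (cm b)
      map_add' := fun b b' => by
        rw [← map_add]
        refine huniq _ (ca b + ca b') _ ?_
        rw [map_add, map_add]
        nth_rewrite 1 [hc b, hc b']
        abel
      map_smul' := fun r b => by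
        rw [RingHom.id_apply, ← map_smul]
        refine huniq _ (r • ca b) _ ?_
        rw [map_smul, map_smul, ← smul_add, ← hc b] }
  have hθ : ∀ b a m, b = f a + μ m → θ b = π m := huniq
  refine ⟨θ, ?_, hf, ?_, ?_⟩
  · refine LinearMap.ext fun m => hθ _ 0 m ?_
    simp
  · intro b
    constructor
    · intro hb
      obtain ⟨a, ha⟩ := h2 (cm b) hb
      exact ⟨ca b + a, by rw [map_add, ← ha, ← hc b]⟩
    · rintro ⟨a, rfl⟩
      rw [hθ _ a 0 (by simp), map_zero]
  · intro q
    obtain ⟨m, rfl⟩ := hπ q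
    exact ⟨μ m, hθ _ 0 m (by simp)⟩

lemma ses_cln' {J J₁ J₂ : Ideal R} (f : R) (h : ∀ x, f * x ∈ J ↔ x ∈ J₁)
    (h₂ : J ⊔ Ideal.span {f} = J₂) :
    SES (mq J₁ J f (fun x hx => (h x).2 hx)) (qm (h₂ ▸ le_sup_left : J ≤ J₂)) := by
  have : J₁ = cln J f := by ext x; rw [mem_cln, h]
  subst this
  subst h₂
  exact ses_cln J f

lemma mq_self (J : Ideal R) (f : R) (h : ∀ x ∈ J, f * x ∈ J) :
    mq J J f h = f • LinearMap.id := q_ext fun _ => rfl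

lemma ses_incl {I J : Ideal R} (h : I ≤ J) :
    SES (Submodule.inclusion h) (LinearMap.range (Submodule.inclusion h)).mkQ where
  inj := Submodule.inclusion_injective h
  exact := by
    intro x
    rw [← LinearMap.mem_ker, Submodule.ker_mkQ]
    rfl
  surj := Submodule.mkQ_surjective _

lemma ses_ideal (J : Ideal R) : SES J.subtype (Submodule.mkQ J) where
  inj := Subtype.val_injective
  exact := LinearMap.exact_subtype_mkQ J
  surj := Submodule.mkQ_surjective _

end GenSes

section Vars
variable {σ : Type u} {K : Type v} [Field K] [DecidableEq σ]

variable (K) in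
/-- ideal of variables -/
noncomputable def vP (T : Finset σ) : Ideal (MvPolynomial σ K) :=
  Ideal.span (X '' (T : Set σ))

lemma mem_vP {T : Finset σ} {g : MvPolynomial σ K} :
    g ∈ vP K T ↔ ∀ m ∈ g.support, ∃ i ∈ T, m i ≠ 0 := by
  unfold vP; rw [mem_ideal_span_X_image]; rfl

lemma vP_mono {T T' : Finset σ} (h : T ⊆ T') : vP K T ≤ vP K T' :=
  Ideal.span_mono (Set.image_mono (by exact_mod_cast h))

lemma X_mem_vP {T : Finset σ} {y : σ} (h : y ∈ T) : (X y : MvPolynomial σ K) ∈ vP K T :=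
  Ideal.subset_span ⟨y, by exact_mod_cast h, rfl⟩

lemma vP_insert (T : Finset σ) (y : σ) :
    vP K T ⊔ Ideal.span {X y} = vP K (insert y T) := by
  unfold vP
  rw [← Ideal.span_union, Finset.coe_insert, Set.image_insert_eq, Set.union_comm]
  rfl

lemma vP_empty : vP K (∅ : Finset σ) = ⊥ := by simp [vP]

lemma X_mul_mem_vP {T : Finset σ} {y : σ} (h : y ∉ T) (g : MvPolynomial σ K) :
    X y * g ∈ vP K T ↔ g ∈ vP K T := by
  refine ⟨fun hg => ?_, fun hg => Ideal.mul_mem_left _ _ hg⟩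
  rw [mem_vP] at hg ⊢
  intro m hm
  obtain ⟨i, hi, hne⟩ := hg (Finsupp.single y 1 + m) (by
    rw [mem_support_iff, coeff_X_mul]; exact mem_support_iff.1 hm)
  refine ⟨i, hi, ?_⟩
  have : y ≠ i := by rintro rfl; exact h hi
  simpa [Finsupp.single_apply, this] using hne

lemma one_not_mem_vP (T : Finset σ) : (1 : MvPolynomial σ K) ∉ vP K T := by
  rw [mem_vP]
  intro h
  obtain ⟨i, _, hi⟩ := h 0 (by simp)
  exact hi rfl

lemma pderiv_mem_vP {T : Finset σ} {y : σ} (h : y ∉ T) {g : MvPolynomial σ K} (hg : g ∈ vP K T) :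
    pderiv y g ∈ vP K T := by
  unfold vP at hg
  refine Submodule.span_induction ?_ ?_ ?_ ?_ hg
  · rintro _ ⟨v, hv, rfl⟩
    have : y ≠ v := by rintro rfl; exact h (by exact_mod_cast hv)
    rw [pderiv_X_of_ne this.symm]; exact zero_mem _
  · rw [map_zero]; exact zero_mem _
  · intro a b _ _ ha hb; rw [map_add]; exact add_mem ha hb
  · intro r a ha hd
    rw [smul_eq_mul, Derivation.leibniz]
    exact add_mem (Ideal.mul_mem_left _ _ hd) (by rw [smul_eq_mul]; exact Ideal.mul_mem_right _ _ ha)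

lemma ses_var {T : Finset σ} {y : σ} (h : y ∉ T) :
    SES (mq (vP K T) (vP K T) (X y) (fun _ hx => Ideal.mul_mem_left _ _ hx))
      (qm (vP_mono (Finset.subset_insert y T))) :=
  ses_cln' (X y) (X_mul_mem_vP h) (vP_insert T y)

variable {W : Type max u v} [AddCommGroup W] [Module (MvPolynomial σ K) W]

lemma pull_qm_surj_one (hW : ∀ (y : σ) (w : W), (X y : MvPolynomial σ K) • w = 0)
    {T : Finset σ} {y : σ} {i : ℕ}
    (α : XE (MvPolynomial σ K) (MvPolynomial σ K ⧸ vP K T) W i) :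
    ∃ β : XE (MvPolynomial σ K) (MvPolynomial σ K ⧸ vP K (insert y T)) W i,
      pull (qm (vP_mono (Finset.subset_insert y T))) β = α := by
  by_cases h : y ∈ T
  · have e : vP K (insert y T) ≤ vP K T := by rw [Finset.insert_eq_of_mem h]
    refine ⟨pull (qm e) α, ?_⟩
    rw [pull_pull, qm_comp]
    have : qm (le_refl (vP K T)) = LinearMap.id := q_ext fun x => qm_mk _ x
    rw [this, pull_id]
  · refine (ses_var h).exact2 α ?_
    rw [mq_self, pull_smul, pull_id]
    exact smul_eq_zero_of_killed _ (hW y) α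

variable [Fintype σ]

lemma pull_qm_surj (hW : ∀ (y : σ) (w : W), (X y : MvPolynomial σ K) • w = 0) (i : ℕ)
    (n : ℕ) : ∀ (T : Finset σ) (_ : (Finset.univ \ T).card ≤ n)
    (α : XE (MvPolynomial σ K) (MvPolynomial σ K ⧸ vP K T) W i),
    ∃ β : XE (MvPolynomial σ K) (MvPolynomial σ K ⧸ vP K (Finset.univ : Finset σ)) W i,
      pull (qm (vP_mono (Finset.subset_univ T))) β = α := by
  have triv : ∀ (T : Finset σ) (_ : Finset.univ ⊆ T) 
    (α : XE (MvPolynomial σ K) (MvPolynomial σ K ⧸ vP K T) W i),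
    ∃ β : XE (MvPolynomial σ K) (MvPolynomial σ K ⧸ vP K (Finset.univ : Finset σ)) W i,
      pull (qm (vP_mono (Finset.subset_univ T))) β = α := by
    intro T hT α
    refine ⟨pull (qm (vP_mono hT)) α, ?_⟩
    rw [pull_pull, qm_comp]
    have : qm (le_refl (vP K T)) = LinearMap.id := q_ext fun x => qm_mk _ x
    rw [this, pull_id]
  induction n with
  | zero =>
    intro T hT α
    exact triv T (Finset.sdiff_eq_empty_iff_subset.1 (Finset.card_eq_zero.1 (Nat.le_zero.1 hT))) α
  | succ n ih =>
    intro T hT α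
    by_cases hu : Finset.univ ⊆ T
    · exact triv T hu α
    · obtain ⟨y, hy⟩ : ∃ y, y ∉ T := by
        by_contra hh; push Not at hh; exact hu fun y _ => hh y
      obtain ⟨β, rfl⟩ := pull_qm_surj_one hW (y := y) α
      obtain ⟨γ, rfl⟩ := ih (insert y T) (by
        have : Finset.univ \ insert y T ⊂ Finset.univ \ T := by
          refine Finset.ssubset_iff_of_subset (Finset.sdiff_subset_sdiff (le_refl _) (Finset.subset_insert _ _)) |>.2 ?_
          exact ⟨y, by simp [hy], by simp⟩
        have := Finset.card_lt_card this
        omega) β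
      refine ⟨γ, ?_⟩
      rw [pull_pull, qm_comp]

lemma ext_var_ne (T : Finset σ) :
    ∃ α : XE (MvPolynomial σ K) (MvPolynomial σ K ⧸ vP K T)
      (MvPolynomial σ K ⧸ vP K (Finset.univ : Finset σ)) T.card, α ≠ 0 := by
  induction T using Finset.induction_on with
  | empty =>
    refine ⟨ofMap (qm (vP_mono (Finset.subset_univ _))), fun h => ?_⟩
    have h1 := LinearMap.congr_fun (ofMap_eq_zero h) (Ideal.Quotient.mk _ 1)
    rw [qm_mk, LinearMap.zero_apply, Ideal.Quotient.eq_zero_iff_mem] at h1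
    exact one_not_mem_vP _ h1
  | insert y T hy ih =>
    obtain ⟨α, hα⟩ := ih
    rw [Finset.card_insert_of_notMem hy]
    refine ⟨(ses_var hy).δ α, fun h => hα ?_⟩
    obtain ⟨β, rfl⟩ := (ses_var hy).exact1 α h
    rw [mq_self, pull_smul, pull_id]
    refine smul_eq_zero_of_killed _ (fun w => ?_) β
    obtain ⟨w, rfl⟩ := Ideal.Quotient.mk_surjective w
    rw [q_smul, Ideal.Quotient.eq_zero_iff_mem]
    exact Ideal.mul_mem_right _ _ (X_mem_vP (Finset.mem_univ _))

/-- linear coefficient map -/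
noncomputable def kap (y : σ) (A : Ideal (MvPolynomial σ K)) (hA : A ≤ vP K Finset.univ) :
    A →ₗ[MvPolynomial σ K] (MvPolynomial σ K ⧸ vP K (Finset.univ : Finset σ)) where
  toFun g := Ideal.Quotient.mk _ (pderiv y (g : MvPolynomial σ K))
  map_add' a b := by rw [Submodule.coe_add, map_add, map_add]
  map_smul' r a := by
    rw [RingHom.id_apply, q_smul, Ideal.Quotient.eq, Submodule.coe_smul, smul_eq_mul,
      Derivation.leibniz, smul_eq_mul, smul_eq_mul, add_sub_cancel_left]
    exact Ideal.mul_mem_right _ _ (hA a.2)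

lemma kap_apply (y : σ) (A : Ideal (MvPolynomial σ K)) (hA : A ≤ vP K Finset.univ) (g : A) :
    kap y A hA g = Ideal.Quotient.mk _ (pderiv y (g : MvPolynomial σ K)) := rfl

lemma kap_incl (y : σ) {A B : Ideal (MvPolynomial σ K)} (h : A ≤ B) (hB : B ≤ vP K Finset.univ) :
    kap y B hB ∘ₗ Submodule.inclusion h = kap y A (h.trans hB) := rfl

lemma ext_vP_gen (hW : ∀ (y : σ) (w : W), (X y : MvPolynomial σ K) • w = 0) (i : ℕ)
    (T : Finset σ) : ∀ α : XE (MvPolynomial σ K) (vP K T) W i,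
    ∃ w : σ → XE (MvPolynomial σ K) (MvPolynomial σ K ⧸ vP K (Finset.univ : Finset σ)) W i,
      α = ∑ y ∈ T, pull (kap y (vP K T) (vP_mono (Finset.subset_univ T))) (w y) := by
  induction T using Finset.induction_on with
  | empty =>
    intro α
    refine ⟨0, ?_⟩
    rw [Finset.sum_empty, ← pull_id α]
    have : (LinearMap.id : vP K (∅ : Finset σ) →ₗ[MvPolynomial σ K] _) = 0 := by
      refine LinearMap.ext fun x => Subtype.ext ?_
      exact (vP_empty (K := K) (σ := σ)).le x.2
    rw [this, pull_zero_left]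
  | insert y T hy ih =>
    intro α
    have hle : vP K T ≤ vP K (insert y T) := vP_mono (Finset.subset_insert y T)
    have hy' : (X y : MvPolynomial σ K) ∈ vP K (insert y T) := X_mem_vP (Finset.mem_insert_self y T)
    obtain ⟨w, hw⟩ := ih (pull (Submodule.inclusion hle) α)
    set α' := α - ∑ z ∈ T, pull (kap z (vP K (insert y T)) (vP_mono (Finset.subset_univ _))) (w z)
      with hα'
    have h0 : pull (Submodule.inclusion hle) α' = 0 := by
      rw [hα', pull_sub, hw, pull_sum, sub_eq_zero]
      refine Finset.sum_congr rfl fun z _ => ?_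
      rw [pull_pull, kap_incl]
    let μ : MvPolynomial σ K →ₗ[MvPolynomial σ K] vP K (insert y T) :=
      LinearMap.toSpanSingleton _ _ ⟨X y, hy'⟩
    have hμ : ∀ b, (μ b : MvPolynomial σ K) = b * X y := fun b => rfl
    obtain ⟨θ, hθ, hs⟩ := exists_ses (Submodule.inclusion hle) (Submodule.inclusion_injective hle)
      μ (Submodule.mkQ (vP K T)) (Submodule.mkQ_surjective _)
      (by
        intro b a hb
        have hb' := congrArg Subtype.val hb
        rw [hμ] at hb'
        refine (Submodule.Quotient.mk_eq_zero _).2 ((X_mul_mem_vP hy b).1 ?_)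
        rw [mul_comm, hb']
        exact a.2)
      (by
        intro b hb
        have hb' := (Submodule.Quotient.mk_eq_zero _).1 hb
        exact ⟨⟨b * X y, Ideal.mul_mem_right _ _ hb'⟩, Subtype.ext rfl⟩)
      (by
        intro g
        have hg := (vP_insert (K := K) T y).ge g.2
        obtain ⟨a, ha, c, hc, hac⟩ := Submodule.mem_sup.1 hg
        obtain ⟨b, rfl⟩ := Ideal.mem_span_singleton'.1 hc
        exact ⟨⟨a, ha⟩, b, Subtype.ext hac.symm⟩)
    obtain ⟨γ, hγ⟩ := hs.exact2 α' h0
    obtain ⟨β, hβ⟩ := pull_qm_surj hW i _ T le_rfl γ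
    have hk : qm (vP_mono (Finset.subset_univ T)) ∘ₗ θ =
        kap y (vP K (insert y T)) (vP_mono (Finset.subset_univ _)) := by
      refine LinearMap.ext fun g => ?_
      have hg := (vP_insert (K := K) T y).ge g.2
      obtain ⟨a, ha, c, hc, hac⟩ := Submodule.mem_sup.1 hg
      obtain ⟨b, rfl⟩ := Ideal.mem_span_singleton'.1 hc
      have eg : g = Submodule.inclusion hle ⟨a, ha⟩ + μ b := Subtype.ext hac.symm
      have e1 : θ g = Ideal.Quotient.mk _ b := by
        rw [eg, map_add]
        have h1 := LinearMap.congr_fun hs.exact.linearMap_comp_eq_zero ⟨a, ha⟩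
        have h2 := LinearMap.congr_fun hθ b
        rw [LinearMap.comp_apply] at h1 h2
        rw [h1, h2, LinearMap.zero_apply, zero_add]
        rfl
      rw [LinearMap.comp_apply, e1, qm_mk, kap_apply, Ideal.Quotient.eq, ← hac, map_add,
        Derivation.leibniz, pderiv_X_self, smul_eq_mul, smul_eq_mul, mul_one]
      have h3 : pderiv y a ∈ vP K (Finset.univ : Finset σ) :=
        vP_mono (Finset.subset_univ T) (pderiv_mem_vP hy ha)
      have h4 : X y * pderiv y b ∈ vP K (Finset.univ : Finset σ) :=
        Ideal.mul_mem_right _ _ (X_mem_vP (Finset.mem_univ _))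
      have : b - (pderiv y a + (b + X y * pderiv y b)) = - (pderiv y a + X y * pderiv y b) := by
        ring
      rw [this]
      exact neg_mem (add_mem h3 h4)
    have hfin : α' = pull (kap y (vP K (insert y T)) (vP_mono (Finset.subset_univ _))) β := by
      rw [← hγ, ← hβ, pull_pull, hk]
    refine ⟨Function.update w y β, ?_⟩
    rw [Finset.sum_insert hy, Function.update_self, ← hfin, hα']
    have : ∑ z ∈ T, pull (kap z (vP K (insert y T)) (vP_mono (Finset.subset_univ _)))
        (Function.update w y β z) =
      ∑ z ∈ T, pull (kap z (vP K (insert y T)) (vP_mono (Finset.subset_univ _))) (w z) := by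
      refine Finset.sum_congr rfl fun z hz => ?_
      rw [Function.update_of_ne]
      rintro rfl; exact hy hz
    rw [this, sub_add_cancel]

lemma ext_restrict_zero (hW : ∀ (y : σ) (w : W), (X y : MvPolynomial σ K) • w = 0) (i : ℕ)
    (T : Finset σ) {I : Ideal (MvPolynomial σ K)} (hI : I ≤ vP K T)
    (hd : ∀ g ∈ I, ∀ y, pderiv y g ∈ vP K (Finset.univ : Finset σ))
    (α : XE (MvPolynomial σ K) (vP K T) W i) : pull (Submodule.inclusion hI) α = 0 := by
  obtain ⟨w, rfl⟩ := ext_vP_gen hW i T α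
  rw [pull_sum]
  refine Finset.sum_eq_zero fun y _ => ?_
  rw [pull_pull, kap_incl]
  have : kap y I (hI.trans (vP_mono (Finset.subset_univ T))) = 0 := by
    refine LinearMap.ext fun g => ?_
    rw [kap_apply, LinearMap.zero_apply, Ideal.Quotient.eq_zero_iff_mem]
    exact hd g g.2 y
  rw [this, pull_zero_left]

end Vars
end AraPd

end

section
open CategoryTheory MvPolynomial

namespace AraPd
universe u v

section Lower
variable {σ : Type u} {K : Type v} [Field K] [DecidableEq σ] [Fintype σ]

lemma vP_univ_smul {W : Type max u v} [AddCommGroup W] [Module (MvPolynomial σ K) W]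
    (hW : ∀ (y : σ) (w : W), (X y : MvPolynomial σ K) • w = 0)
    {g : MvPolynomial σ K} (hg : g ∈ vP K (Finset.univ : Finset σ)) (w : W) : g • w = 0 := by
  unfold vP at hg
  refine Submodule.span_induction ?_ ?_ ?_ ?_ hg
  · rintro _ ⟨v, hv, rfl⟩; exact hW v w
  · exact zero_smul _ _
  · intro a b _ _ ha hb; rw [add_smul, ha, hb, add_zero]
  · intro r a _ ha; rw [smul_eq_mul, mul_smul, ha, smul_zero]

lemma delta_inj {W : Type max u v} [AddCommGroup W] [Module (MvPolynomial σ K) W]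
    (hW : ∀ (y : σ) (w : W), (X y : MvPolynomial σ K) • w = 0)
    {I : Ideal (MvPolynomial σ K)} (hI : I ≤ vP K (Finset.univ : Finset σ)) {j : ℕ}
    (α : XE (MvPolynomial σ K) I W j) (h : (ses_ideal I).δ α = 0) : α = 0 := by
  obtain ⟨β, rfl⟩ := (ses_ideal I).exact1 α h
  cases j with
  | succ j => rw [ext_proj β, pull_zero]
  | zero =>
    obtain ⟨b, rfl⟩ := ofMap_surj β
    rw [pull_ofMap]
    have : b ∘ₗ I.subtype = 0 := by
      refine LinearMap.ext fun g => ?_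
      have h1 : b (g : MvPolynomial σ K) = (g : MvPolynomial σ K) • b 1 := by
        rw [← map_smul, smul_eq_mul, mul_one]
      rw [LinearMap.comp_apply]
      exact h1.trans (vP_univ_smul hW (hI g.2) _)
    rw [this, ofMap_zero]

/-- the set-up for the comparison -/
structure Setup (x₀ : σ) (T : Finset σ) (I I' : Ideal (MvPolynomial σ K)) : Prop where
  hI : I ≤ vP K T
  hd : ∀ g ∈ I, ∀ y, pderiv y g ∈ vP K (Finset.univ : Finset σ)
  hcol : ∀ g, X x₀ * g ∈ I → g ∈ I
  hII' : I ≤ I'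
  hm : ∀ p ∈ vP K T, X x₀ * p ∈ I'
  hdec : ∀ g ∈ I', ∃ a ∈ I, ∃ p ∈ vP K T, g = a + X x₀ * p

variable {x₀ : σ} {T : Finset σ} {I I' : Ideal (MvPolynomial σ K)}

lemma Setup.le (s : Setup x₀ T I I') : I' ≤ vP K (Finset.univ : Finset σ) := by
  intro g hg
  obtain ⟨a, ha, p, hp, rfl⟩ := s.hdec g hg
  exact add_mem (vP_mono (Finset.subset_univ T) (s.hI ha))
    (Ideal.mul_mem_left _ _ (vP_mono (Finset.subset_univ T) hp))

/-- multiplication by the new variable -/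
noncomputable def Setup.mu (s : Setup x₀ T I I') : vP K T →ₗ[MvPolynomial σ K] I' where
  toFun p := ⟨X x₀ * (p : MvPolynomial σ K), s.hm p p.2⟩
  map_add' p q := Subtype.ext (mul_add _ _ _)
  map_smul' r p := Subtype.ext (mul_left_comm (X x₀) r (p : MvPolynomial σ K))

lemma Setup.theta (s : Setup x₀ T I I') :
    ∃ θ : I' →ₗ[MvPolynomial σ K] (vP K T ⧸ LinearMap.range (Submodule.inclusion s.hI)),
      θ ∘ₗ s.mu = (LinearMap.range (Submodule.inclusion s.hI)).mkQ ∧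
      SES (Submodule.inclusion s.hII') θ := by
  refine exists_ses _ (Submodule.inclusion_injective _) _ _ (Submodule.mkQ_surjective _) ?_ ?_ ?_
  · intro p a h
    have h1 : X x₀ * (p : MvPolynomial σ K) = (a : MvPolynomial σ K) := congrArg Subtype.val h
    have h2 : (p : MvPolynomial σ K) ∈ I := s.hcol _ (h1 ▸ a.2)
    exact (Submodule.Quotient.mk_eq_zero _).2 ⟨⟨p, h2⟩, rfl⟩
  · intro p h
    obtain ⟨a, ha⟩ := (Submodule.Quotient.mk_eq_zero _).1 h
    refine ⟨(X x₀ : MvPolynomial σ K) • a, Subtype.ext ?_⟩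
    rw [← ha]; rfl
  · intro g
    obtain ⟨a, ha, p, hp, h⟩ := s.hdec g g.2
    exact ⟨⟨a, ha⟩, ⟨p, hp⟩, Subtype.ext h⟩

variable {W : Type max u v} [AddCommGroup W] [Module (MvPolynomial σ K) W]

lemma Setup.ext1 (s : Setup x₀ T I I') (hW : ∀ (y : σ) (w : W), (X y : MvPolynomial σ K) • w = 0)
    {j : ℕ} (h : ∀ γ : XE (MvPolynomial σ K) I' W (j + 1), γ = 0)
    (α : XE (MvPolynomial σ K) I W j) : α = 0 := by
  obtain ⟨θ, hθ, hs'⟩ := s.theta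
  have hs := ses_incl s.hI
  have hz : ∀ β : XE (MvPolynomial σ K) I W j, hs'.δ β = 0 := by
    intro β
    have := hs.δ_nat hs' ((X x₀ : MvPolynomial σ K) • LinearMap.id) s.mu LinearMap.id (LinearMap.ext fun _ => Subtype.ext rfl)
      (by rw [hθ, LinearMap.id_comp]) β
    rw [pull_id] at this
    rw [← this, pull_smul, smul_eq_zero_of_killed _ (hW x₀), SES.δ_zero]
  have h1 : hs.δ α = 0 := by
    obtain ⟨β, hβ⟩ := hs'.exact3 (hs.δ α) (h _)
    rw [← hβ, hz]
  obtain ⟨β, rfl⟩ := hs.exact1 α h1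
  exact ext_restrict_zero hW j T s.hI s.hd β

lemma Setup.ext2 (s : Setup x₀ T I I') (hW : ∀ (y : σ) (w : W), (X y : MvPolynomial σ K) • w = 0)
    {j : ℕ} (h : ∀ γ : XE (MvPolynomial σ K) I' W j, γ = 0)
    (β : XE (MvPolynomial σ K) (vP K T) W j) : β = 0 := by
  obtain ⟨θ, hθ, hs'⟩ := s.theta
  have hs := ses_incl s.hI
  obtain ⟨γ, rfl⟩ := hs.exact2 β (ext_restrict_zero hW j T s.hI s.hd β)
  rw [← hθ, ← pull_pull, h (pull θ γ), pull_zero]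

theorem Setup.lower1 (s : Setup x₀ T I I') (hsq : IsSq I) {j : ℕ}
    (h : VExt (MvPolynomial σ K) (MvPolynomial σ K ⧸ I') (j + 2)) :
    VExt (MvPolynomial σ K) (MvPolynomial σ K ⧸ I) (j + 1) := by
  obtain ⟨g, hg, hz⟩ := unif (vP K (Finset.univ : Finset σ)) j (MvPolynomial σ K ⧸ I)
    (fun W _ _ hW α => by
      have hW' : ∀ (y : σ) (w : W), (X y : MvPolynomial σ K) • w = 0 := fun y w =>
        hW _ (X_mem_vP (Finset.mem_univ y)) w
      obtain ⟨β, rfl⟩ := (ses_ideal I).exact3 α (ext_proj _)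
      rw [s.ext1 hW' (fun γ => delta_inj hW' s.le γ (h W _)) β, SES.δ_zero])
  refine gradedNak hsq g ?_ hz
  have h0 : coeff 0 (1 - g) = 0 := by
    by_contra hne
    obtain ⟨i, _, hi⟩ := mem_vP.1 hg 0 (mem_support_iff.2 hne)
    exact hi rfl
  rw [coeff_sub, coeff_zero_one, sub_eq_zero] at h0
  exact h0.symm

theorem Setup.lower2 (s : Setup x₀ T I I') {r : ℕ} (hr : T.card = r + 1) :
    ¬ VExt (MvPolynomial σ K) (MvPolynomial σ K ⧸ I') (r + 1) := by
  intro h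
  have hne := ext_var_ne (K := K) T
  rw [hr] at hne
  obtain ⟨α, hα⟩ := hne
  have hW' : ∀ (y : σ) (w : MvPolynomial σ K ⧸ vP K (Finset.univ : Finset σ)),
      (X y : MvPolynomial σ K) • w = 0 := by
    intro y w
    obtain ⟨w, rfl⟩ := Ideal.Quotient.mk_surjective w
    rw [q_smul, Ideal.Quotient.eq_zero_iff_mem]
    exact Ideal.mul_mem_right _ _ (X_mem_vP (Finset.mem_univ _))
  obtain ⟨β, rfl⟩ := (ses_ideal (vP K T)).exact3 α (ext_proj _)
  exact hα (by rw [s.ext2 hW' (fun γ => delta_inj hW' s.le γ (h _ _)) β, SES.δ_zero])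

end Lower
end AraPd

end

section
open CategoryTheory MvPolynomial

namespace AraPd
universe u v

section Comb
variable {V : Type u} {K : Type v} [Field K]

/-- indicator exponent -/
noncomputable def ind (S : Finset V) : V →₀ ℕ := ∑ v ∈ S, Finsupp.single v 1

lemma ind_apply [DecidableEq V] (S : Finset V) (v : V) : ind S v = if v ∈ S then 1 else 0 := by
  unfold ind
  rw [Finsupp.finset_sum_apply]
  simp [Finsupp.single_apply]

lemma prod_X (S : Finset V) : ∏ v ∈ S, (X v : MvPolynomial V K) = monomial (ind S) 1 := by
  unfold ind
  rw [monomial_sum_one]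
  rfl

lemma mem_sr {Δ : Set (Finset V)} (hΔ : ∀ F ∈ Δ, ∀ G ⊆ F, G ∈ Δ) (g : MvPolynomial V K) :
    g ∈ srIdeal K Δ ↔ ∀ u ∈ g.support, u.support ∉ Δ := by
  classical
  have : srIdeal K Δ = Ideal.span ((fun s => monomial s (1 : K)) '' (ind '' {S | S ∉ Δ})) := by
    unfold srIdeal
    rw [Set.image_image]
    simp only [prod_X]
  rw [this, mem_ideal_span_monomial_image]
  refine forall₂_congr fun u _ => ?_
  constructor
  · rintro ⟨_, ⟨S, hS, rfl⟩, hle⟩ hu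
    refine hS (hΔ _ hu S fun v hv => ?_)
    have := hle v
    rw [ind_apply, if_pos hv] at this
    rw [Finsupp.mem_support_iff]; omega
  · intro hu
    refine ⟨_, ⟨u.support, hu, rfl⟩, fun v => ?_⟩
    rw [ind_apply]
    split_ifs with h
    · exact Nat.one_le_iff_ne_zero.2 (Finsupp.mem_support_iff.1 h)
    · exact Nat.zero_le _

lemma isSq_sr {Δ : Set (Finset V)} (hΔ : ∀ F ∈ Δ, ∀ G ⊆ F, G ∈ Δ) : IsSq (srIdeal K Δ) :=
  ⟨Δᶜ, mem_sr hΔ⟩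

variable [DecidableEq V]

/-- cone over the complex -/
def coneC (Δ : Set (Finset V)) : Set (Finset (Option V)) := {G | Finset.eraseNone G ∈ Δ}

lemma coneC_down {Δ : Set (Finset V)} (hΔ : ∀ F ∈ Δ, ∀ G ⊆ F, G ∈ Δ) :
    ∀ F ∈ coneC Δ, ∀ G ⊆ F, G ∈ coneC Δ :=
  fun _ hF _ hG => hΔ _ hF _ (Finset.eraseNone.monotone hG)

lemma mem_coneUnion {Δ : Set (Finset V)} {F : Finset V} (G : Finset (Option V)) :
    G ∈ coneUnion Δ F ↔ (none ∉ G ∧ Finset.eraseNone G ∈ Δ) ∨ Finset.eraseNone G ⊆ F := by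
  unfold coneUnion
  refine or_congr ?_ ?_
  · constructor
    · rintro ⟨S, hS, rfl⟩
      exact ⟨by simp, by rw [Finset.eraseNone_map_some]; exact hS⟩
    · rintro ⟨h1, h2⟩
      refine ⟨_, h2, ?_⟩
      change Finset.map _ _ = _
      rw [Finset.map_some_eraseNone, Finset.erase_eq_of_notMem h1]
  · constructor
    · intro h v hv
      have := h (Finset.mem_eraseNone.1 hv)
      simpa using this
    · intro h o ho
      cases o with
      | none => simp
      | some v =>
        have := h (Finset.mem_eraseNone.2 ho)
        simpa using this

lemma coneUnion_down {Δ : Set (Finset V)} (hΔ : ∀ F ∈ Δ, ∀ G ⊆ F, G ∈ Δ) (F : Finset V) :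
    ∀ A ∈ coneUnion Δ F, ∀ B ⊆ A, B ∈ coneUnion Δ F := by
  intro A hA B hB
  rw [mem_coneUnion] at hA ⊢
  have h := Finset.eraseNone.monotone hB
  rcases hA with ⟨h1, h2⟩ | h1
  · exact Or.inl ⟨fun hh => h1 (hB hh), hΔ _ h2 _ h⟩
  · exact Or.inr (h.trans h1)

variable [Fintype V]

lemma mem_vP_some {F : Finset V} {g : MvPolynomial (Option V) K} :
    g ∈ vP K ((Finset.univ \ F).map Function.Embedding.some) ↔
      ∀ u ∈ g.support, ¬ Finset.eraseNone u.support ⊆ F := by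
  rw [mem_vP]
  refine forall₂_congr fun u _ => ?_
  rw [Finset.not_subset]
  constructor
  · rintro ⟨i, hi, hu⟩
    obtain ⟨v, hv, rfl⟩ := Finset.mem_map.1 hi
    exact ⟨v, Finset.mem_eraseNone.2 (Finsupp.mem_support_iff.2 hu), (Finset.mem_sdiff.1 hv).2⟩
  · rintro ⟨v, hv, hvF⟩
    exact ⟨some v, Finset.mem_map.2 ⟨v, by simp [hvF], rfl⟩,
      Finsupp.mem_support_iff.1 (Finset.mem_eraseNone.1 hv)⟩

lemma erase_add (u : Option V →₀ ℕ) :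
    Finset.eraseNone (Finsupp.single none 1 + u).support = Finset.eraseNone u.support := by
  ext v
  simp [Finsupp.single_apply]

lemma setup {Δ : Set (Finset V)} (hΔ : IsSimplicialComplex Δ) {F : Finset V} (hF : F ∈ Δ) :
    Setup (K := K) (none : Option V) ((Finset.univ \ F).map Function.Embedding.some)
      (srIdeal K (coneC Δ)) (srIdeal K (coneUnion Δ F)) where
  hI := by
    intro g hg
    rw [mem_sr (coneC_down hΔ.2)] at hg
    rw [mem_vP_some]
    exact fun u hu h => hg u hu (hΔ.2 _ hF _ h)
  hd := by
    intro g hg y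
    rw [mem_sr (coneC_down hΔ.2)] at hg
    rw [mem_vP]
    intro m hm
    by_contra hh
    push Not at hh
    have : m = 0 := Finsupp.ext fun v => hh v (Finset.mem_univ v)
    subst this
    rw [mem_support_iff, coeff_pderiv, zero_add] at hm
    refine hg _ (mem_support_iff.2 (left_ne_zero_of_mul hm)) ?_
    change Finset.eraseNone _ ∈ Δ
    rw [Finsupp.support_single_ne_zero _ one_ne_zero]
    cases y with
    | none => rw [Finset.eraseNone_none]; exact hΔ.2 _ hF _ (Finset.empty_subset _)
    | some v =>
      have : Finset.eraseNone {some v} = {v} := by ext; simp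
      rw [this]; exact hΔ.1 v
  hcol := by
    intro g hg
    rw [mem_sr (coneC_down hΔ.2)] at hg ⊢
    intro u hu h
    refine hg (Finsupp.single none 1 + u) ?_ ?_
    · rw [mem_support_iff, coeff_X_mul]; exact mem_support_iff.1 hu
    · change Finset.eraseNone _ ∈ Δ
      rw [erase_add]; exact h
  hII' := by
    intro g hg
    rw [mem_sr (coneC_down hΔ.2)] at hg
    rw [mem_sr (coneUnion_down hΔ.2 F)]
    intro u hu h
    rw [mem_coneUnion] at h
    refine hg u hu ?_
    rcases h with h | h
    · exact h.2
    · exact hΔ.2 _ hF _ h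
  hm := by
    intro p hp
    rw [mem_vP_some] at hp
    rw [mem_sr (coneUnion_down hΔ.2 F)]
    intro u hu h
    rw [mem_support_iff, coeff_X_mul'] at hu
    split_ifs at hu with hn
    · have h1 := hp _ (mem_support_iff.2 hu)
      have h2 : Finsupp.single none 1 + (u - Finsupp.single none 1) = u := by
        refine add_tsub_cancel_of_le ?_
        rw [Finsupp.single_le_iff]
        exact Nat.one_le_iff_ne_zero.2 (Finsupp.mem_support_iff.1 hn)
      rw [← erase_add, h2] at h1
      rw [mem_coneUnion] at h
      rcases h with h | h
      · exact h.1 hn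
      · exact h1 h
    · exact hu rfl
  hdec := by
    intro g hg
    rw [mem_sr (coneUnion_down hΔ.2 F)] at hg
    rw [g.as_sum]
    refine Finset.sum_induction _ (fun g => ∃ a ∈ srIdeal K (coneC Δ),
      ∃ p ∈ vP K ((Finset.univ \ F).map Function.Embedding.some), g = a + X none * p) ?_ ?_ ?_
    · rintro _ _ ⟨a, ha, p, hp, rfl⟩ ⟨b, hb, q, hq, rfl⟩
      exact ⟨a + b, add_mem ha hb, p + q, add_mem hp hq, by ring⟩
    · exact ⟨0, zero_mem _, 0, zero_mem _, by simp⟩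
    · intro u hu
      have h1 := hg u hu
      rw [mem_coneUnion] at h1
      push Not at h1
      by_cases h2 : Finset.eraseNone u.support ∈ Δ
      · have hn : none ∈ u.support := by
          by_contra hh; exact h1.1 hh h2
        have h3 : Finsupp.single none 1 + (u - Finsupp.single none 1) = u := by
          refine add_tsub_cancel_of_le ?_
          rw [Finsupp.single_le_iff]
          exact Nat.one_le_iff_ne_zero.2 (Finsupp.mem_support_iff.1 hn)
        refine ⟨0, zero_mem _, monomial (u - Finsupp.single none 1) (coeff u g), ?_, ?_⟩
        · rw [mem_vP_some]
          intro w hw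
          have := Finset.mem_singleton.1 (support_monomial_subset hw)
          subst this
          rw [← erase_add, h3]
          exact h1.2
        · rw [zero_add, X, monomial_mul, one_mul, h3]
      · refine ⟨monomial u (coeff u g), ?_, 0, zero_mem _, by simp⟩
        rw [mem_sr (coneC_down hΔ.2)]
        intro w hw
        have := Finset.mem_singleton.1 (support_monomial_subset hw)
        subst this
        exact h2

theorem descend {I : Ideal (MvPolynomial V K)} {J : Ideal (MvPolynomial (Option V) K)}
    (h1 : ∀ x ∈ I, rename some x ∈ J)
    (h2 : ∀ x ∈ J, aeval (fun o : Option V => o.elim (0 : MvPolynomial V K) X) x ∈ I) {i : ℕ}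
    (h : VExt (MvPolynomial (Option V) K) (MvPolynomial (Option V) K ⧸ J) (i + 1)) :
    VExt (MvPolynomial V K) (MvPolynomial V K ⧸ I) (i + 1) := by
  letI : Algebra (MvPolynomial V K) (MvPolynomial (Option V) K) :=
    (rename some : MvPolynomial V K →ₐ[K] MvPolynomial (Option V) K).toRingHom.toAlgebra
  have hal : ∀ x, algebraMap (MvPolynomial V K) (MvPolynomial (Option V) K) x = rename some x :=
    fun _ => rfl
  have hr : ∀ x : MvPolynomial V K,
      aeval (fun o : Option V => o.elim (0 : MvPolynomial V K) X) (rename some x) = x := by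
    intro x
    rw [aeval_rename]
    exact aeval_X_left_apply x
  have he : ∀ x : MvPolynomial V K, optionEquivLeft K V (rename some x) = Polynomial.C x := by
    intro x
    induction x using MvPolynomial.induction_on with
    | C c => rw [rename_C, optionEquivLeft_C]
    | add p q hp hq => rw [map_add, map_add, hp, hq, map_add]
    | mul_X p v hp => rw [map_mul, map_mul, hp, rename_X, optionEquivLeft_X_some, map_mul]
  let e : MvPolynomial (Option V) K ≃ₗ[MvPolynomial V K] Polynomial (MvPolynomial V K) :=
    { (optionEquivLeft K V).toEquiv with
      map_add' := fun x y => map_add (optionEquivLeft K V) x y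
      map_smul' := fun r x => by
        rw [Algebra.smul_def, hal]
        refine (map_mul (optionEquivLeft K V) _ _).trans ?_
        rw [he, RingHom.id_apply, Polynomial.smul_eq_C_mul]
        rfl }
  have : Module.Projective (MvPolynomial V K) (MvPolynomial (Option V) K) :=
    Module.Projective.of_equiv e.symm
  let r : MvPolynomial (Option V) K →ₗ[MvPolynomial V K] MvPolynomial V K :=
    { toFun := fun x => aeval (fun o : Option V => o.elim (0 : MvPolynomial V K) X) x
      map_add' := fun x y => map_add _ x y
      map_smul' := fun f x => by
        rw [Algebra.smul_def, hal, map_mul, hr]; rfl }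
  refine trick I J J 1 (fun x hx => by rwa [one_mul]) h1 r h2
    (map_one (aeval (R := K) (fun o : Option V => o.elim (0 : MvPolynomial V K) X))) ?_
  intro N _ _ α
  rw [h N α, pull_zero]

theorem descend_sr {Δ : Set (Finset V)} {i : ℕ}
    (h : VExt (MvPolynomial (Option V) K)
      (MvPolynomial (Option V) K ⧸ srIdeal K (coneC Δ)) (i + 1)) :
    VExt (MvPolynomial V K) (MvPolynomial V K ⧸ srIdeal K Δ) (i + 1) := by
  refine descend ?_ ?_ h
  · have : srIdeal K Δ ≤ (srIdeal K (coneC Δ)).comap (rename some).toRingHom := by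
      refine Ideal.span_le.2 ?_
      rintro _ ⟨S, hS, rfl⟩
      change rename some (∏ v ∈ S, X v) ∈ srIdeal K (coneC Δ)
      rw [map_prod]
      refine Ideal.subset_span ⟨S.map Function.Embedding.some, ?_, ?_⟩
      · intro hh
        change Finset.eraseNone _ ∈ Δ at hh
        rw [Finset.eraseNone_map_some] at hh
        exact hS hh
      · change ∏ v ∈ S.map Function.Embedding.some, X v = _
        rw [Finset.prod_map]
        refine Finset.prod_congr rfl fun v _ => ?_
        rw [rename_X]; rfl
    exact fun x hx => this hx
  · have : srIdeal K (coneC Δ) ≤ (srIdeal K Δ).comap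
        (aeval (fun o : Option V => o.elim (0 : MvPolynomial V K) X)).toRingHom := by
      refine Ideal.span_le.2 ?_
      rintro _ ⟨S, hS, rfl⟩
      change aeval (fun o : Option V => o.elim (0 : MvPolynomial V K) X) (∏ v ∈ S, X v)
        ∈ srIdeal K Δ
      rw [map_prod]
      simp only [aeval_X]
      by_cases hn : none ∈ S
      · rw [Finset.prod_eq_zero hn rfl]; exact zero_mem _
      · refine Ideal.subset_span ⟨Finset.eraseNone S, hS, ?_⟩
        have h3 : S = (Finset.eraseNone S).map Function.Embedding.some := by
          rw [Finset.map_some_eraseNone, Finset.erase_eq_of_notMem hn]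
        nth_rewrite 2 [h3]
        rw [Finset.prod_map]
        rfl
    exact fun x hx => this hx

end Comb
end AraPd

end

section
namespace AraPd
open MvPolynomial
theorem upper {R : Type*} [CommRing R] {I I' : Ideal R} {x₀ : R} {t a r : ℕ} (y f : ℕ → R)
    (hf : ∀ j, f j ∈ I)
    (hfI : ∀ Q : Ideal R, Q.IsPrime → (∀ j < a, f j ∈ Q) → I ≤ Q)
    (ht : I ≤ Ideal.span (Set.range fun i : Fin t => y i)) (hta : t ≤ a)
    (hII' : I ≤ I') (hxy : ∀ j, x₀ * y j ∈ I')
    (hI' : ∀ Q : Ideal R, Q.IsPrime → I ≤ Q → (∀ j < r, x₀ * y j ∈ Q) → I' ≤ Q) :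
    ∃ g : Fin (max (a + 1) r) → R, (Ideal.span (Set.range g)).radical = I'.radical := by
  classical
  have h0 : ∀ j, ∃ c : Fin t → R, ∑ i, c i * y i = f j := fun j =>
    (Ideal.mem_span_range_iff_exists_fun).1 (ht (hf j))
  choose h hh using h0
  let H : Matrix (Fin t) (Fin t) R := Matrix.of fun i k => f i * h i k
  let A : Matrix (Fin t) (Fin t) R := x₀ • (1 : Matrix (Fin t) (Fin t) R) + H
  have hc : A.det - x₀ ^ t ∈ I := by
    rw [← Ideal.Quotient.eq, RingHom.map_det, map_pow]
    have : (Ideal.Quotient.mk I).mapMatrix A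
        = (Ideal.Quotient.mk I x₀) • (1 : Matrix (Fin t) (Fin t) (R ⧸ I)) := by
      ext i k
      have h1 : Ideal.Quotient.mk I (f i * h i k) = 0 :=
        Ideal.Quotient.eq_zero_iff_mem.2 (Ideal.mul_mem_right _ _ (hf _))
      simp only [A, H, RingHom.mapMatrix_apply, Matrix.map_apply, Matrix.add_apply,
        Matrix.smul_apply, Matrix.of_apply, map_add, h1, add_zero, smul_eq_mul, map_mul]
      by_cases hik : i = k
      · subst hik; simp
      · simp [Matrix.one_apply_ne hik]
    rw [this, Matrix.det_smul, Matrix.det_one, Fintype.card_fin, mul_one]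
  have hA : ∀ i : Fin t, A.mulVec (fun k => y k) i = f i ^ 2 + x₀ * y i := by
    intro i
    simp only [A, Matrix.add_mulVec, Matrix.smul_mulVec, Matrix.one_mulVec, Pi.add_apply,
      Pi.smul_apply, smul_eq_mul]
    rw [add_comm]
    congr 1
    simp only [Matrix.mulVec, dotProduct, H, Matrix.of_apply]
    rw [pow_two]
    nth_rewrite 3 [← hh i]
    rw [Finset.mul_sum]
    exact Finset.sum_congr rfl fun k _ => mul_assoc _ _ _
  let g : Fin (max (a + 1) r) → R := fun j =>
    if (j : ℕ) = a then x₀ * A.det * y a + (A.det - x₀ ^ t) else f j ^ 2 + x₀ * y j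
  refine ⟨g, le_antisymm ?_ ?_⟩
  · refine Ideal.radical_mono (Ideal.span_le.2 ?_)
    rintro _ ⟨j, rfl⟩
    change g j ∈ I'
    simp only [g]
    split_ifs
    · refine add_mem ?_ (hII' hc)
      rw [mul_right_comm]; exact Ideal.mul_mem_right _ _ (hxy a)
    · exact add_mem (hII' (Ideal.pow_mem_of_mem _ (hf _) 2 two_pos)) (hxy _)
  · rw [Ideal.radical_le_radical_iff, Ideal.radical_eq_sInf]
    refine le_sInf ?_
    rintro Q ⟨hQ, hQp⟩
    have hg : ∀ j, g j ∈ Q := fun j => hQ (Ideal.subset_span ⟨j, rfl⟩)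
    have hga : x₀ * A.det * y a + (A.det - x₀ ^ t) ∈ Q := by
      have := hg ⟨a, by omega⟩
      simpa only [g, if_true] using this
    have hgj : ∀ j, j < max (a + 1) r → j ≠ a → f j ^ 2 + x₀ * y j ∈ Q := by
      intro j hj hja
      have := hg ⟨j, hj⟩
      simpa only [g, if_neg hja] using this
    by_cases hD : A.det ∈ Q
    · have h1 : A.det - x₀ ^ t ∈ Q := by
        refine (Ideal.add_mem_iff_right Q ?_).1 hga
        rw [mul_right_comm]; exact Ideal.mul_mem_left _ _ hD
      have h2 : x₀ ∈ Q := hQp.mem_of_pow_mem t (by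
        have := sub_mem hD h1
        rwa [sub_sub_cancel] at this)
      refine hI' Q hQp (hfI Q hQp fun j hj => ?_) fun j _ => Ideal.mul_mem_right _ _ h2
      exact hQp.mem_of_pow_mem 2
        ((Ideal.add_mem_iff_left Q (Ideal.mul_mem_right _ _ h2)).1
          (hgj j (by omega) (by omega)))
    · have h1 : ∀ i : Fin t, y i ∈ Q := by
        intro i
        have h2 : A.det * y i ∈ Q := by
          have h3 : A.adjugate.mulVec (A.mulVec (fun k : Fin t => y k)) i = A.det * y i := by
            rw [Matrix.mulVec_mulVec, Matrix.adjugate_mul, Matrix.smul_mulVec,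
              Matrix.one_mulVec]
            rfl
          rw [← h3]
          simp only [Matrix.mulVec, dotProduct] at hA ⊢
          refine Ideal.sum_mem Q fun k _ => Ideal.mul_mem_left Q _ ?_
          rw [hA]
          exact hgj k (by omega) (by omega)
        exact (hQp.mem_or_mem h2).resolve_left hD
      have hIQ : I ≤ Q := ht.trans (Ideal.span_le.2 (by rintro _ ⟨i, rfl⟩; exact h1 i))
      refine hI' Q hQp hIQ fun j hj => ?_
      by_cases hja : j = a
      · subst hja
        have h4 := (Ideal.add_mem_iff_left Q (hIQ hc)).1 hga
        rw [mul_right_comm] at h4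
        exact (hQp.mem_or_mem h4).resolve_right hD
      · exact (Ideal.add_mem_iff_right Q
          (Ideal.pow_mem_of_mem _ (hIQ (hf j)) 2 two_pos)).1 (hgj j (by omega) hja)
end AraPd

end

section
open CategoryTheory MvPolynomial
namespace AraPd
universe u v
section Up
variable {V : Type u} {K : Type v} [Field K] [DecidableEq V]

lemma vP_prime (T : Finset V) : (vP K T).IsPrime := by
  let φ : MvPolynomial V K →ₐ[K] MvPolynomial V K := aeval fun i => if i ∈ T then 0 else X i
  have h1 : ∀ g, g - φ g ∈ vP K T := by
    intro g
    induction g using MvPolynomial.induction_on with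
    | C c => rw [show φ (C c) = C c from aeval_C _ c, sub_self]; exact zero_mem _
    | add p q hp hq =>
      rw [map_add, add_sub_add_comm]; exact add_mem hp hq
    | mul_X p i hp =>
      rw [map_mul, show φ (X i) = if i ∈ T then 0 else X i from aeval_X _ i]
      split_ifs with h
      · rw [mul_zero, sub_zero]; exact Ideal.mul_mem_left _ _ (X_mem_vP h)
      · rw [← sub_mul]; exact Ideal.mul_mem_right _ _ hp
  have h2 : vP K T = RingHom.ker φ.toRingHom := by
    refine le_antisymm (Ideal.span_le.2 ?_) fun g hg => ?_
    · rintro _ ⟨i, hi, rfl⟩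
      change φ (X i) = 0
      rw [show φ (X i) = if i ∈ T then 0 else X i from aeval_X _ i, if_pos (Finset.mem_coe.1 hi)]
    · have h3 : φ g = 0 := hg
      have := h1 g
      rwa [h3, sub_zero] at this
  rw [h2]
  exact RingHom.ker_isPrime _

lemma X_not_mem_vP {T : Finset V} {i : V} (h : i ∉ T) : (X i : MvPolynomial V K) ∉ vP K T := by
  rw [mem_vP]
  intro hh
  obtain ⟨j, hj, hj'⟩ := hh (Finsupp.single i 1) (by simp [X])
  rw [Finsupp.single_apply] at hj'
  split_ifs at hj' with h5
  · subst h5; exact h hj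
  · exact hj' rfl

lemma height_vP (T : Finset V) : (T.card : ℕ∞) ≤ (vP K T).height := by
  induction T using Finset.induction_on with
  | empty => simp
  | insert i T hi ih =>
    have := vP_prime (K := K) T
    have := vP_prime (K := K) (insert i T)
    have hlt : vP K T < vP K (insert i T) := by
      refine lt_of_le_of_ne (vP_mono (Finset.subset_insert i T)) fun h => ?_
      exact X_not_mem_vP (K := K) hi (h ▸ X_mem_vP (Finset.mem_insert_self i T))
    rw [Finset.card_insert_of_notMem hi]
    push_cast
    exact (add_le_add_left ih 1).trans (Ideal.height_add_one_le_of_lt_of_isPrime hlt)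

variable [Fintype V]

lemma exists_facet {Δ : Set (Finset V)} (hΔ : IsSimplicialComplex Δ) {F : Finset V} (hF : F ∈ Δ)
    {a : ℕ} (f : Fin a → MvPolynomial V K)
    (hf : (Ideal.span (Set.range f)).radical = (srIdeal K Δ).radical) :
    ∃ G ∈ Δ, F ⊆ G ∧ (Finset.univ \ G).card ≤ a := by
  obtain ⟨G, hFG, hG⟩ := (Set.toFinite Δ).exists_le_maximal hF
  refine ⟨G, hG.prop, hFG, ?_⟩
  have hsr : srIdeal K Δ ≤ vP K (Finset.univ \ G) := by
    intro g hg
    rw [mem_sr hΔ.2] at hg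
    rw [mem_vP]
    intro u hu
    by_contra hc
    push Not at hc
    refine hg u hu (hΔ.2 _ hG.prop _ fun v hv => ?_)
    by_contra hvG
    exact (Finsupp.mem_support_iff.1 hv) (hc v (by simp [hvG]))
  have hp := vP_prime (K := K) (Finset.univ \ G)
  have hmin : vP K (Finset.univ \ G) ∈ (Ideal.span (Set.range f)).minimalPrimes := by
    refine ⟨⟨hp, ?_⟩, ?_⟩
    · refine Ideal.le_radical.trans ?_
      rw [hf]
      exact hp.radical_le_iff.2 hsr
    · rintro Q ⟨hQ, hfQ⟩ hle
      have h1 : srIdeal K Δ ≤ Q := by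
        refine Ideal.le_radical.trans ?_
        rw [← hf]
        exact hQ.radical_le_iff.2 hfQ
      refine Ideal.span_le.2 ?_
      rintro _ ⟨v, hv, rfl⟩
      have hvG : v ∉ G := by simpa using hv
      have h2 : insert v G ∉ Δ := fun h =>
        hvG (hG.le_of_ge h (Finset.subset_insert v G) (Finset.mem_insert_self v G))
      have h3 : ∏ w ∈ insert v G, (X w : MvPolynomial V K) ∈ Q :=
        h1 (Ideal.subset_span ⟨_, h2, rfl⟩)
      obtain ⟨w, hw, hwQ⟩ := (Ideal.IsPrime.prod_mem_iff).1 h3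
      rcases Finset.mem_insert.1 hw with rfl | hw
      · exact hwQ
      · exact absurd (hle hwQ) (X_not_mem_vP (by simp [hw]))
  have h4 := Ideal.height_le_spanRank_toENat_of_mem_minimalPrimes _ _ hmin
  rw [Submodule.spanRank_toENat_eq_iInf_finset_card] at h4
  classical
  have h5 := (height_vP (K := K) (Finset.univ \ G)).trans (h4.trans (iInf_le _ ⟨Finset.univ.image f, by
    simp [Ideal.span]⟩))
  have h6 : (Finset.univ.image f).card ≤ a := by
    simpa using Finset.card_image_le (s := Finset.univ) (f := f)
  exact (by exact_mod_cast h5 : _ ≤ (Finset.univ.image f).card).trans h6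

lemma rename_mem {Δ : Set (Finset V)} :
    srIdeal K Δ ≤ (srIdeal K (coneC Δ)).comap (rename (R := K) some).toRingHom := by
  refine Ideal.span_le.2 ?_
  rintro _ ⟨S, hS, rfl⟩
  change rename some (∏ v ∈ S, X v) ∈ srIdeal K (coneC Δ)
  rw [map_prod]
  refine Ideal.subset_span ⟨S.map Function.Embedding.some, ?_, ?_⟩
  · intro hh
    change Finset.eraseNone _ ∈ Δ at hh
    rw [Finset.eraseNone_map_some] at hh
    exact hS hh
  · change ∏ v ∈ S.map Function.Embedding.some, X v = _
    rw [Finset.prod_map]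
    refine Finset.prod_congr rfl fun v _ => ?_
    rw [rename_X]; rfl

lemma coneC_le {Δ : Set (Finset V)} {Q : Ideal (MvPolynomial (Option V) K)}
    (h : srIdeal K Δ ≤ Q.comap (rename (R := K) some).toRingHom) : srIdeal K (coneC Δ) ≤ Q := by
  refine Ideal.span_le.2 ?_
  rintro _ ⟨S, hS, rfl⟩
  have h1 : rename some (∏ v ∈ Finset.eraseNone S, (X v : MvPolynomial V K)) ∈ Q :=
    h (Ideal.subset_span ⟨_, hS, rfl⟩)
  rw [map_prod] at h1
  have h2 : ∏ v ∈ Finset.eraseNone S, rename some (X v : MvPolynomial V K)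
      = ∏ o ∈ (Finset.eraseNone S).map Function.Embedding.some, X o := by
    rw [Finset.prod_map]
    refine Finset.prod_congr rfl fun v _ => ?_
    rw [rename_X]; rfl
  rw [h2, Finset.map_some_eraseNone] at h1
  exact Ideal.mem_of_dvd _ (Finset.prod_dvd_prod_of_subset _ _ _ (Finset.erase_subset _ _)) h1

theorem upper_sr {Δ : Set (Finset V)} (hΔ : IsSimplicialComplex Δ) {F : Finset V} (hF : F ∈ Δ)
    {a : ℕ} (f : Fin a → MvPolynomial V K)
    (hf : (Ideal.span (Set.range f)).radical = (srIdeal K Δ).radical) :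
    ∃ g : Fin (max (a + 1) (Finset.univ \ F).card) → MvPolynomial (Option V) K,
      (Ideal.span (Set.range g)).radical = (srIdeal K (coneUnion Δ F)).radical := by
  obtain ⟨G, hG, hFG, hGa⟩ := exists_facet hΔ hF f hf
  have hs := setup (K := K) hΔ hF
  have hs' := setup (K := K) hΔ hG
  let l1 := (Finset.univ \ G).toList
  let l := l1 ++ (G \ F).toList
  have hl : ∀ v, v ∈ l ↔ v ∉ F := by
    intro v
    simp only [l, l1, List.mem_append, Finset.mem_toList, Finset.mem_sdiff, Finset.mem_univ,
      true_and]
    constructor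
    · rintro (h | h)
      · exact fun hv => h (hFG hv)
      · exact h.2
    · intro h
      by_cases hv : v ∈ G
      · exact Or.inr ⟨hv, h⟩
      · exact Or.inl hv
  have hl1 : l1.length = (Finset.univ \ G).card := Finset.length_toList _
  have hll : l.length = (Finset.univ \ F).card := by
    rw [List.length_append, hl1, Finset.length_toList, ← Finset.card_union_of_disjoint]
    · congr 1
      ext v
      have := hl v
      simpa [l, l1] using this
    · exact Finset.disjoint_left.2 fun v h1 h2 =>
        (Finset.mem_sdiff.1 h1).2 (Finset.mem_sdiff.1 h2).1
  let y : ℕ → MvPolynomial (Option V) K := fun j => (l[j]?).elim 0 fun v => X (some v)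
  have hy : ∀ j (hj : j < l.length), y j = X (some l[j]) := by
    intro j hj
    simp only [y, List.getElem?_eq_getElem hj]
    rfl
  have hfr : ∀ j, ∃ n, f j ^ n ∈ srIdeal K Δ := fun j => by
    have : f j ∈ (srIdeal K Δ).radical :=
      hf.le (Ideal.le_radical (Ideal.subset_span ⟨j, rfl⟩))
    exact this
  choose n hn using hfr
  refine upper (I := srIdeal K (coneC Δ)) (x₀ := X none) (t := (Finset.univ \ G).card) y
    (fun j => if h : j < a then rename some (f ⟨j, h⟩ ^ n ⟨j, h⟩) else 0) ?_ ?_ ?_ hGa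
    hs.hII' ?_ ?_
  · intro j
    split_ifs with h
    · exact rename_mem (hn _)
    · exact zero_mem _
  · intro Q hQ h
    refine coneC_le ?_
    have hQ' : (Q.comap (rename (R := K) (some : V → Option V)).toRingHom).IsPrime :=
      Ideal.IsPrime.comap _
    refine Ideal.le_radical.trans ?_
    rw [← hf]
    refine hQ'.radical_le_iff.2 (Ideal.span_le.2 ?_)
    rintro _ ⟨j, rfl⟩
    have := h j j.2
    rw [dif_pos j.2] at this
    exact hQ'.mem_of_pow_mem (n j) this
  · refine hs'.hI.trans (Ideal.span_le.2 ?_)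
    rintro _ ⟨o, ho, rfl⟩
    obtain ⟨v, hv, rfl⟩ := Finset.mem_map.1 (Finset.mem_coe.1 ho)
    obtain ⟨i, hi, rfl⟩ := List.getElem_of_mem (Finset.mem_toList.2 hv)
    refine Ideal.subset_span ⟨⟨i, by rwa [Finset.length_toList] at hi⟩, ?_⟩
    have hil : i < l.length := by
      rw [List.length_append]; exact Nat.lt_add_right _ hi
    refine (hy i hil).trans ?_
    rw [List.getElem_append_left hi]
    rfl
  · intro j
    by_cases hj : j < l.length
    · rw [hy j hj]
      refine hs.hm _ (X_mem_vP (Finset.mem_map.2 ⟨l[j], ?_, rfl⟩))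
      simpa using (hl _).1 (List.getElem_mem hj)
    · have : y j = 0 := by
        simp only [y, List.getElem?_eq_none (not_lt.1 hj)]
        rfl
      rw [this, mul_zero]; exact zero_mem _
  · intro Q hQ hIQ hyQ g hg
    obtain ⟨b, hb, p, hp, rfl⟩ := hs.hdec g hg
    refine add_mem (hIQ hb) ?_
    have h1 : vP K ((Finset.univ \ F).map Function.Embedding.some) ≤
        Submodule.comap (LinearMap.mulLeft (MvPolynomial (Option V) K) (X none)) Q := by
      refine Ideal.span_le.2 ?_
      rintro _ ⟨o, ho, rfl⟩
      obtain ⟨v, hv, rfl⟩ := Finset.mem_map.1 (Finset.mem_coe.1 ho)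
      obtain ⟨i, hi, rfl⟩ := List.getElem_of_mem ((hl v).2 (Finset.mem_sdiff.1 hv).2)
      change X none * X (some _) ∈ Q
      rw [← hy i hi]
      exact hyQ i (hll ▸ hi)
    exact h1 hp
end Up
end AraPd

end

section
open CategoryTheory MvPolynomial
namespace AraPd
lemma ara_mem {R : Type*} [CommRing R] [IsNoetherianRing R] (I : Ideal R) :
    ∃ a : Fin (ara I) → R, (Ideal.span (Set.range a)).radical = I.radical := by
  refine Nat.sInf_mem (s := {s : ℕ | ∃ a : Fin s → R,
    (Ideal.span (Set.range a)).radical = I.radical}) ?_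
  obtain ⟨n, s, hs⟩ := Submodule.fg_iff_exists_fin_generating_family.1 (IsNoetherian.noetherian I)
  exact ⟨n, s, congrArg Ideal.radical hs⟩

universe u v
variable {V : Type u} {K : Type v} [Field K] [DecidableEq V]

theorem main [Fintype V]
    (Δ : Set (Finset V)) (hΔ : IsSimplicialComplex Δ) (F : Finset V) (hF : F ∈ Δ)
    (hpd : ara (srIdeal K Δ) =
      projDim (ModuleCat.of (MvPolynomial V K) (MvPolynomial V K ⧸ srIdeal K Δ))) :
    ara (srIdeal K (coneUnion Δ F)) =
      projDim (ModuleCat.of (MvPolynomial (Option V) K)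
        (MvPolynomial (Option V) K ⧸ srIdeal K (coneUnion Δ F))) := by
  obtain ⟨b, hb⟩ := ara_mem (srIdeal K (coneUnion Δ F))
  have hpr := exists_pr (lyub (isSq_sr (coneUnion_down hΔ.2 F)) b hb _ (Nat.lt_succ_self _))
  refine le_antisymm ?_ (Nat.sInf_le hpr)
  refine le_csInf ⟨_, hpr⟩ ?_
  intro m hm
  by_cases hr : (Finset.univ \ F).card = 0
  · have hFu : F = Finset.univ := by
      rw [Finset.card_eq_zero, Finset.sdiff_eq_empty_iff_subset] at hr
      exact Finset.univ_subset_iff.1 hr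
    have h0 : srIdeal K (coneUnion Δ F) = ⊥ := by
      rw [eq_bot_iff]
      refine Ideal.span_le.2 ?_
      rintro _ ⟨S, hS, rfl⟩
      refine absurd ?_ hS
      rw [mem_coneUnion]
      right
      rw [hFu]
      exact Finset.subset_univ _
    have : ara (srIdeal K (coneUnion Δ F)) ≤ 0 := by
      refine Nat.sInf_le ⟨fun i => i.elim0, ?_⟩
      rw [h0, Set.range_eq_empty, Ideal.span_empty]
    exact this.trans (Nat.zero_le _)
  obtain ⟨f, hf⟩ := ara_mem (srIdeal K Δ)
  have hup : ara (srIdeal K (coneUnion Δ F)) ≤ max (ara (srIdeal K Δ) + 1) (Finset.univ \ F).card :=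
    Nat.sInf_le (upper_sr hΔ hF f hf)
  refine hup.trans ?_
  have hs := setup (K := K) hΔ hF
  have hrm : (Finset.univ \ F).card ≤ m := by
    by_contra hlt
    obtain ⟨r, hr'⟩ := Nat.exists_eq_succ_of_ne_zero hr
    refine hs.lower2 (r := r) ((Finset.card_map _).trans hr') ?_
    exact vext_of_pr (by omega) hm
  refine max_le ?_ hrm
  by_contra hlt
  obtain ⟨j, hj⟩ : ∃ j, ara (srIdeal K Δ) = j + 1 :=
    Nat.exists_eq_succ_of_ne_zero (by omega)
  have h1 : VExt (MvPolynomial (Option V) K)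
      (MvPolynomial (Option V) K ⧸ srIdeal K (coneUnion Δ F)) (j + 2) :=
    vext_of_pr (by omega) hm
  have h2 := descend_sr (hs.lower1 (isSq_sr (coneC_down hΔ.2)) h1)
  have h3 : projDim (ModuleCat.of (MvPolynomial V K) (MvPolynomial V K ⧸ srIdeal K Δ)) ≤ j :=
    Nat.sInf_le (exists_pr h2)
  omega
end AraPd

end

/-- STATEMENT 12 (Theorem 3): for `K` algebraically closed, a face `F` of `Δ` and
`Δ' = Δ ∪ co_{x₀}F`, if `ara I_Δ = pd K[Δ]` then `ara I_{Δ'} = pd K[Δ']`. -/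
theorem ara_eq_projDim_coneUnion {V : Type*} [Fintype V] [DecidableEq V]
    (K : Type*) [Field K] [IsAlgClosed K]
    (Δ : Set (Finset V)) (hΔ : IsSimplicialComplex Δ) (F : Finset V) (hF : F ∈ Δ)
    (hpd : ara (srIdeal K Δ) =
      projDim (ModuleCat.of (MvPolynomial V K) (MvPolynomial V K ⧸ srIdeal K Δ))) :
    ara (srIdeal K (coneUnion Δ F)) =
      projDim (ModuleCat.of (MvPolynomial (Option V) K)
        (MvPolynomial (Option V) K ⧸ srIdeal K (coneUnion Δ F))) := by
  exact AraPd.main Δ hΔ F hF hpd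
end
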